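/- arXiv:0911.2884 — 2 statements merged into one kernel-verified Lean document; each statement's English description precedes it below -/
import Mathlib

section
/- Let I = (L(u,v)) ⊂ S = K[x_1,…,x_n] be a lexsegment edge ideal. Then S/I is Cohen–Macaulay if and only if I is a set-theoretic complete intersection, i.e., ara(I) = height(I). -/
/-!
Write `I` for the edge ideal of the lexsegment, `S` for the polynomial ring, `A` for its
localization at the ideal of the variables and `k` for the largest size of an independent set of
the graph, so that `k = dim S ⧸ I` and `n - k = height I`. Vertices are counted from `0`; `u` is
`(a, b)` and `v` is `(c, d)`.

Both sides of the equivalence produce an ideal `J` of `A` with the radical of `I A` and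
`depth A ⧸ J ≥ k`. If `S ⧸ I` is Cohen–Macaulay, `J = I A` will do. If `I` is cut out up to radical
by `n - k` elements, let `J` be the ideal they generate: they are part of a system of parameters
of the Cohen–Macaulay ring `A`, so `A ⧸ J` is Cohen–Macaulay of dimension `k` (`depth_of_dim`).

Such a `J` restricts the graph through facts that depend only on the radical. All maximal
independent sets have `k` elements, because the depth is at most the dimension of any component
(`depth_le_facet`); and a Hartshorne-type connectedness argument excludes a few remaining
graphs (`connectivity`). For lexsegments this leaves the short list `Good` (`good_of_depth`).

For every lexsegment in the list both sides hold (`Nice.both`). On one hand `n - k` equations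
suffice: a vertex can be attached to a graph by one further equation, as long as the equations
have triangular shape with respect to the neighbours (`Tri.attach`). On the other hand an explicit
regular sequence of length `k` exists: the isolated vertices, the sum of the other variables and,
for the families with `k = a + 2` and the two disjoint edges, the sum of two adjacent variables
(`regSeq_two`).
-/

open MvPolynomial

/-- The variable `x_i` (1-based indexing) of `K[x_1,…,x_n]`. -/
noncomputable def xv (K : Type) [Field K] (n i : ℕ) : MvPolynomial (Fin n) K :=
  if h : i - 1 < n then MvPolynomial.X ⟨i - 1, h⟩ else 0

/-- `lexGE p q` : for sorted index pairs, the squarefree degree-2 monomial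
`x_{p.1} x_{p.2}` is greater than or equal to `x_{q.1} x_{q.2}` in the
lexicographic order induced by `x_1 > x_2 > ⋯ > x_n`. -/
def lexGE (p q : ℕ × ℕ) : Prop := p.1 < q.1 ∨ (p.1 = q.1 ∧ p.2 ≤ q.2)

/-- Strict lexicographic comparison of sorted index pairs. -/
def lexGT (p q : ℕ × ℕ) : Prop := p.1 < q.1 ∨ (p.1 = q.1 ∧ p.2 < q.2)

/-- Sorted index pairs in range `1,…,n`; these correspond exactly to the
squarefree monomials of degree 2 of `K[x_1,…,x_n]`. -/
def validPair (n : ℕ) (p : ℕ × ℕ) : Prop := 1 ≤ p.1 ∧ p.1 < p.2 ∧ p.2 ≤ n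

/-- The lexsegment set `L(u,v)`, as a set of sorted index pairs. -/
def lexSegSet (n : ℕ) (u v : ℕ × ℕ) : Set (ℕ × ℕ) :=
  {w | validPair n w ∧ lexGE u w ∧ lexGE w v}

/-- The lexsegment edge ideal `I = (L(u,v)) ⊆ K[x_1,…,x_n]`. -/
noncomputable def lexSegIdeal (K : Type) [Field K] (n : ℕ) (u v : ℕ × ℕ) :
    Ideal (MvPolynomial (Fin n) K) :=
  Ideal.span ((fun w : ℕ × ℕ => xv K n w.1 * xv K n w.2) '' lexSegSet n u v)

/-- The Alexander dual of the lexsegment edge ideal `(L(u,v))`: the intersection,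
over the (minimal) monomial generators `x_p x_q` with `(p,q) ∈ L(u,v)`, of the
prime ideals `(x_p, x_q)`. -/
noncomputable def lexSegAlexDual (K : Type) [Field K] (n : ℕ) (u v : ℕ × ℕ) :
    Ideal (MvPolynomial (Fin n) K) :=
  ⨅ w ∈ lexSegSet n u v, Ideal.span {xv K n w.1, xv K n w.2}

/-- The arithmetical rank of an ideal: the least `r` such that some `r` elements
of `J` generate an ideal with the same radical as `J`. -/
noncomputable def ara {R : Type} [CommRing R] (J : Ideal R) : ℕ :=
  sInf {r : ℕ | ∃ f : Fin r → R, (∀ t, f t ∈ J) ∧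
    (Ideal.span (Set.range f)).radical = J.radical}

/-- The projective dimension of a module `M`: the least `d` admitting a projective
resolution vanishing in homological degrees `> d`. -/
noncomputable def projDim {R : Type} [CommRing R] (M : ModuleCat R) : ℕ :=
  sInf {d : ℕ | ∃ P : CategoryTheory.ProjectiveResolution M,
    ∀ i : ℕ, d < i → CategoryTheory.Limits.IsZero (P.complex.X i)}

/-- The depth of `S/I` with respect to the graded maximal ideal `(x_1,…,x_n)`:
the longest length of a regular sequence on `S/I` consisting of elements of
`(x_1,…,x_n)`. -/
noncomputable def smDepth (K : Type) [Field K] (n : ℕ)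
    (I : Ideal (MvPolynomial (Fin n) K)) : ℕ :=
  sSup {r : ℕ | ∃ rs : List (MvPolynomial (Fin n) K), rs.length = r ∧
    (∀ a ∈ rs, a ∈ Ideal.span
      (Set.range (MvPolynomial.X : Fin n → MvPolynomial (Fin n) K))) ∧
    RingTheory.Sequence.IsRegular (MvPolynomial (Fin n) K ⧸ I) rs}

/-- The height of an ideal: the infimum of the heights of the primes containing it. -/
noncomputable def idealHeight {R : Type} [CommRing R] (I : Ideal R) : ℕ∞ :=
  ⨅ p ∈ {p : PrimeSpectrum R | I ≤ p.asIdeal}, Order.height p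

/-- `m` is a monomial of `K[x_1,…,x_n]`. -/
def IsMonomial {K : Type} [Field K] {n : ℕ} (m : MvPolynomial (Fin n) K) : Prop :=
  ∃ s : Fin n →₀ ℕ, m = MvPolynomial.monomial s 1

/-- `m` is a squarefree monomial of `K[x_1,…,x_n]`. -/
def IsSqFreeMonomial {K : Type} [Field K] {n : ℕ} (m : MvPolynomial (Fin n) K) : Prop :=
  ∃ t : Finset (Fin n), m = t.prod (fun i => MvPolynomial.X i)

/-- `m` is a minimal monomial generator of the monomial ideal `I`: a monomial of `I`
divisible by no monomial of `I` other than itself. -/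
def IsMinimalMonomialGen {K : Type} [Field K] {n : ℕ}
    (I : Ideal (MvPolynomial (Fin n) K)) (m : MvPolynomial (Fin n) K) : Prop :=
  IsMonomial m ∧ m ∈ I ∧
    ∀ m', IsMonomial m' → m' ∈ I → m' ∣ m → m' = m

namespace LexSeg

/-! ### Depth over a Noetherian local ring -/

section Depth

/-- `x` is a nonzerodivisor on `A ⧸ J`, phrased on the level of elements of `A`. -/
def RegMod {A : Type*} [CommRing A] (J : Ideal A) (x : A) : Prop := ∀ r, x * r ∈ J → r ∈ J

/-- `A ⧸ J` admits a regular sequence of length `k` inside the maximal ideal of the local ring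
`A`, i.e. `depth (A ⧸ J) ≥ k`. Passing to the quotient by an element is encoded by enlarging
`J`, so that only cyclic modules occur. -/
def DepthGE {A : Type*} [CommRing A] [IsLocalRing A] : ℕ → Ideal A → Prop
  | 0, J => J ≠ ⊤
  | k + 1, J => ∃ x ∈ IsLocalRing.maximalIdeal A, RegMod J x ∧ DepthGE k (J ⊔ Ideal.span {x})

variable {A : Type*} [CommRing A]

lemma mem_sup_span_singleton {J : Ideal A} {x z : A} :
    z ∈ J ⊔ Ideal.span {x} ↔ ∃ c, z - c * x ∈ J := by
  constructor
  · intro h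
    obtain ⟨j, hj, w, hw, rfl⟩ := Submodule.mem_sup.1 h
    obtain ⟨c, rfl⟩ := Ideal.mem_span_singleton'.1 hw
    exact ⟨c, by simpa using hj⟩
  · rintro ⟨c, hc⟩
    have : z = (z - c * x) + c * x := by ring
    rw [this]
    exact add_mem (Ideal.mem_sup_left hc)
      (Ideal.mem_sup_right (Ideal.mul_mem_left _ _ (Ideal.mem_span_singleton_self x)))

/-- If `P` kills a nonzero element of `A ⧸ J`, it lies in an associated prime of `A ⧸ J`. -/
lemma exists_assoc_prime [IsNoetherianRing A] {J P : Ideal A} {s : A} (hs : s ∉ J)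
    (hP : ∀ p ∈ P, p * s ∈ J) :
    ∃ Q : Ideal A, Q.IsPrime ∧ P ≤ Q ∧ ∃ z, z ∉ J ∧ ∀ r, r ∈ Q ↔ r * z ∈ J := by
  have hs0 : (Ideal.Quotient.mk J s) ≠ 0 := by rwa [Ne, Ideal.Quotient.eq_zero_iff_mem]
  obtain ⟨Q, hQ, hle⟩ := exists_le_isAssociatedPrime_of_isNoetherianRing A
    (Ideal.Quotient.mk J s) hs0
  rw [isAssociatedPrime_iff] at hQ
  obtain ⟨hQp, z, hz⟩ := hQ
  obtain ⟨z, rfl⟩ := Ideal.Quotient.mk_surjective z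
  have key : ∀ r, r ∈ Q ↔ r * z ∈ J := by
    intro r
    rw [hz]
    simp only [Submodule.mem_colon_singleton, Submodule.mem_bot]
    rw [← Ideal.Quotient.eq_zero_iff_mem]
    simp [Algebra.smul_def]
  refine ⟨Q, hQp, fun p hp => hle ?_, z, fun h => hQp.ne_top ?_, key⟩
  · simp only [Submodule.mem_colon_singleton, Submodule.mem_bot]
    have := hP p hp
    rw [← Ideal.Quotient.eq_zero_iff_mem] at this
    simpa [Algebra.smul_def] using this
  · rw [Ideal.eq_top_iff_one, key]; simpa using h

variable [IsLocalRing A] [IsNoetherianRing A]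

open IsLocalRing

/-- The depth of `A ⧸ J` is at most the dimension of `A ⧸ Q` for an associated prime `Q`. -/
lemma depth_le_dim (k : ℕ) : ∀ {J P : Ideal A} {s : A}, DepthGE k J → s ∉ J →
    (∀ p ∈ P, p * s ∈ J) →
    ∃ Q : Ideal A, Q.IsPrime ∧ P ≤ Q ∧ J ≤ Q ∧ (k : WithBot ℕ∞) ≤ ringKrullDim (A ⧸ Q) := by
  induction k with
  | zero =>
    intro J P s _ hs hP
    obtain ⟨Q, hQ, hPQ, z, hz, hzQ⟩ := exists_assoc_prime hs hP
    exact ⟨Q, hQ, hPQ, fun r hr => (hzQ r).2 (J.mul_mem_right _ hr), by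
      simpa using ringKrullDim_nonneg_of_nontrivial⟩
  | succ k ih =>
    intro J P s hJ hs hP
    obtain ⟨Q, hQ, hPQ, z, hz, hzQ⟩ := exists_assoc_prime hs hP
    obtain ⟨x, hx, hreg, hd⟩ := hJ
    have hxQ : x ∉ Q := fun h => hz (hreg z ((hzQ x).1 h))
    -- `N = (J : Q)` is not contained in `J + (x)`, by Nakayama's lemma
    let N : Ideal A := J.colon Q
    have hN : ∀ {w}, w ∈ N ↔ ∀ q ∈ Q, q * w ∈ J := by
      intro w
      rw [Submodule.mem_colon]
      simp only [smul_eq_mul, mul_comm w, SetLike.mem_coe]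
    obtain ⟨w, hwN, hw⟩ : ∃ w ∈ N, w ∉ J ⊔ Ideal.span {x} := by
      by_contra! hcon
      have hle : N ≤ J ⊔ (Ideal.span {x} : Ideal A) • N := by
        intro w hw
        obtain ⟨c, hc⟩ := mem_sup_span_singleton.1 (hcon w hw)
        have hcN : c ∈ N := hN.2 fun q hq => hreg _ (by
          have h1 := hN.1 hw q hq
          have h2 := J.mul_mem_left q hc
          have : x * (q * c) = q * w - q * (w - c * x) := by ring
          rw [this]; exact sub_mem h1 h2)
        have : w = (w - c * x) + x * c := by ring
        rw [this]
        exact add_mem (Ideal.mem_sup_left hc) (Ideal.mem_sup_right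
          (Submodule.smul_mem_smul (Ideal.mem_span_singleton_self x) hcN))
      have hle' : N ≤ J := Submodule.le_of_le_smul_of_le_jacobson_bot
        (IsNoetherian.noetherian N) ((Ideal.span_singleton_le_iff_mem _).2
          (by rwa [IsLocalRing.jacobson_eq_maximalIdeal _ bot_ne_top])) hle
      exact hz (hle' (hN.2 fun q hq => (hzQ q).1 hq))
    obtain ⟨Q', hQ', hle, hJQ', hk⟩ := ih (P := Q ⊔ Ideal.span {x}) hd hw (by
      intro p hp
      obtain ⟨c, hc⟩ := mem_sup_span_singleton.1 hp
      have : p * w = (p - c * x) * w + (c * w) * x := by ring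
      rw [this]
      exact add_mem (Ideal.mem_sup_left (hN.1 hwN _ hc)) (Ideal.mem_sup_right
        (Ideal.mul_mem_left _ _ (Ideal.mem_span_singleton_self x))))
    refine ⟨Q, hQ, hPQ, fun r hr => (hzQ r).2 (J.mul_mem_right _ hr), ?_⟩
    have h1 : ringKrullDim ((A ⧸ Q) ⧸ Ideal.span {Ideal.Quotient.mk Q x}) + 1
        ≤ ringKrullDim (A ⧸ Q) := by
      apply ringKrullDim_quotient_succ_le_of_nonZeroDivisor
      rw [mem_nonZeroDivisors_iff_ne_zero, Ne, Ideal.Quotient.eq_zero_iff_mem]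
      exact hxQ
    have h2 : ringKrullDim (A ⧸ Q') ≤
        ringKrullDim ((A ⧸ Q) ⧸ Ideal.span {Ideal.Quotient.mk Q x}) := by
      have hker : ∀ a ∈ Ideal.span {Ideal.Quotient.mk Q x},
          Ideal.Quotient.factor (le_sup_left.trans hle) a = 0 := by
        intro a ha
        obtain ⟨b, rfl⟩ := Ideal.mem_span_singleton'.1 ha
        have : x ∈ Q' := hle (Ideal.mem_sup_right (Ideal.mem_span_singleton_self x))
        rw [map_mul, Ideal.Quotient.factor_mk, Ideal.Quotient.eq_zero_iff_mem.2 this, mul_zero]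
      refine ringKrullDim_le_of_surjective (Ideal.Quotient.lift _ _ hker) ?_
      apply Ideal.Quotient.lift_surjective_of_surjective
      exact Ideal.Quotient.factor_surjective _
    calc ((k + 1 : ℕ) : WithBot ℕ∞) = (k : WithBot ℕ∞) + 1 := by push_cast; rfl
      _ ≤ ringKrullDim (A ⧸ Q') + 1 := by gcongr
      _ ≤ _ := (add_le_add h2 le_rfl).trans h1

omit [IsNoetherianRing A] in
lemma DepthGE.ne_top : ∀ {k : ℕ} {J : Ideal A}, DepthGE k J → J ≠ ⊤
  | 0, _, h => h
  | k + 1, J, ⟨x, hx, _, hd⟩ => fun h => hd.ne_top (by simp [h])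

omit [IsNoetherianRing A] in
lemma DepthGE.mono : ∀ {k l : ℕ} {J : Ideal A}, DepthGE k J → l ≤ k → DepthGE l J
  | _, 0, _, h, _ => h.ne_top
  | _ + 1, _ + 1, _, ⟨x, hx, hr, hd⟩, h => ⟨x, hx, hr, hd.mono (Nat.le_of_succ_le_succ h)⟩

/-- If no element of the maximal ideal is a nonzerodivisor on `A ⧸ J`, then the maximal ideal is
an associated prime. -/
lemma exists_socle {J : Ideal A} (h : ∀ x ∈ maximalIdeal A, ¬ RegMod J x) (hJ : J ≠ ⊤) :
    ∃ w, w ∉ J ∧ ∀ t ∈ maximalIdeal A, t * w ∈ J := by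
  have : Nontrivial (A ⧸ J) := Ideal.Quotient.nontrivial_iff.2 hJ
  have hsub : ((maximalIdeal A : Ideal A) : Set A) ⊆ ⋃ p ∈ associatedPrimes A (A ⧸ J), p := by
    rw [biUnion_associatedPrimes_eq_compl_regular A (A ⧸ J)]
    intro x hx hreg
    refine h x hx fun r hr => ?_
    rw [← Ideal.Quotient.eq_zero_iff_mem] at hr ⊢
    apply hreg
    simpa [Algebra.smul_def] using hr
  obtain ⟨Q, hQ, hle⟩ := (Ideal.subset_union_prime_finite (associatedPrimes.finite A (A ⧸ J))
    ⊥ ⊥ (fun i hi _ _ => IsAssociatedPrime.isPrime hi)).1 hsub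
  rw [AssociatedPrimes.mem_iff, isAssociatedPrime_iff] at hQ
  obtain ⟨hQp, z, hz⟩ := hQ
  obtain ⟨z, rfl⟩ := Ideal.Quotient.mk_surjective z
  have key : ∀ r, r ∈ Q → r * z ∈ J := by
    intro r hr
    rw [hz] at hr
    simp only [Submodule.mem_colon_singleton, Submodule.mem_bot] at hr
    rw [← Ideal.Quotient.eq_zero_iff_mem]
    simpa [Algebra.smul_def] using hr
  refine ⟨z, fun h => hQp.ne_top ?_, fun t ht => key t (hle ht)⟩
  rw [hz, Ideal.Quotient.eq_zero_iff_mem.2 h]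
  ext; simp

/-- Prime avoidance: regular elements on three cyclic modules can be chosen simultaneously. -/
lemma exists_common_reg {J₁ J₂ J₃ : Ideal A} {x₁ x₂ x₃ : A} (m₁ : x₁ ∈ maximalIdeal A)
    (m₂ : x₂ ∈ maximalIdeal A) (m₃ : x₃ ∈ maximalIdeal A) (h₁ : RegMod J₁ x₁)
    (h₂ : RegMod J₂ x₂) (h₃ : RegMod J₃ x₃) :
    ∃ z ∈ maximalIdeal A, RegMod J₁ z ∧ RegMod J₂ z ∧ RegMod J₃ z := by
  have conv : ∀ (J : Ideal A) (x : A), IsSMulRegular (A ⧸ J) x ↔ RegMod J x := by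
    intro J x
    rw [isSMulRegular_quotient_iff_mem_of_smul_mem]
    rfl
  have hA : ∀ (J : Ideal A) (x : A), x ∈ ⋃ p ∈ associatedPrimes A (A ⧸ J), (p : Set A) ↔
      ¬ RegMod J x := by
    intro J x
    rw [biUnion_associatedPrimes_eq_compl_regular A (A ⧸ J), ← conv]
    rfl
  by_contra! hcon
  have hsub : ((maximalIdeal A : Ideal A) : Set A) ⊆ ⋃ p ∈ associatedPrimes A (A ⧸ J₁) ∪
      (associatedPrimes A (A ⧸ J₂) ∪ associatedPrimes A (A ⧸ J₃)), p := by
    intro z hz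
    rw [Set.biUnion_union, Set.biUnion_union, Set.mem_union, Set.mem_union, hA, hA, hA]
    have := hcon z hz
    tauto
  obtain ⟨Q, hQ, hle⟩ := (Ideal.subset_union_prime_finite
    ((associatedPrimes.finite A (A ⧸ J₁)).union ((associatedPrimes.finite A (A ⧸ J₂)).union
      (associatedPrimes.finite A (A ⧸ J₃)))) ⊥ ⊥ (by
        rintro i (hi | hi | hi) _ _ <;> exact IsAssociatedPrime.isPrime hi)).1 hsub
  rcases hQ with hQ | hQ | hQ
  · exact (hA J₁ x₁).1 (Set.mem_biUnion hQ (hle m₁)) h₁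
  · exact (hA J₂ x₂).1 (Set.mem_biUnion hQ (hle m₂)) h₂
  · exact (hA J₃ x₃).1 (Set.mem_biUnion hQ (hle m₃)) h₃

omit [IsLocalRing A] [IsNoetherianRing A] in
/-- If `x, y` is a regular sequence modulo `J`, then `x` is a nonzerodivisor modulo `J + (y)`:
the half of a swap that holds in any ring. -/
lemma RegMod.swap_right {J : Ideal A} {x y : A} (hx : RegMod J x)
    (hy : RegMod (J ⊔ Ideal.span {x}) y) : ∀ r, x * r ∈ J ⊔ Ideal.span {y} →
      r ∈ J ⊔ Ideal.span {y} := by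
  intro r hr
  obtain ⟨c, hc⟩ := mem_sup_span_singleton.1 hr
  have h1 : y * c ∈ J ⊔ Ideal.span {x} := mem_sup_span_singleton.2 ⟨r, by
    have : y * c - r * x = -(x * r - c * y) := by ring
    rw [this]; exact neg_mem hc⟩
  obtain ⟨e, he⟩ := mem_sup_span_singleton.1 (hy _ h1)
  refine mem_sup_span_singleton.2 ⟨e, hx _ ?_⟩
  have : x * (r - e * y) = (x * r - c * y) + y * (c - e * x) := by ring
  rw [this]
  exact add_mem hc (J.mul_mem_left _ he)

/-- Depth drops by at most one modulo a nonzerodivisor: the length of a maximal regular sequence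
does not depend on its beginning. -/
lemma depth_quot (k : ℕ) : ∀ {J : Ideal A} {x : A}, DepthGE (k + 1) J → x ∈ maximalIdeal A →
    RegMod J x → DepthGE k (J ⊔ Ideal.span {x}) := by
  induction k with
  | zero =>
    intro J x hJ hx hreg htop
    have hle : (⊤ : Ideal A) ≤ J ⊔ Ideal.span {x} := htop.ge
    have : (⊤ : Ideal A) ≤ J := by
      refine Submodule.le_of_le_smul_of_le_jacobson_bot (I := Ideal.span {x})
        (IsNoetherian.noetherian _) ((Ideal.span_singleton_le_iff_mem _).2
          (by rwa [IsLocalRing.jacobson_eq_maximalIdeal _ bot_ne_top])) ?_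
      simpa using hle
    exact hJ.ne_top (top_le_iff.1 this)
  | succ k ih =>
    intro J x hJ hx hreg
    obtain ⟨y, hy, hyreg, hd⟩ := hJ
    obtain ⟨z₀, hz₀, hz₀reg, -⟩ := id hd
    -- exchange: `A ⧸ (J + (x))` has positive depth because `A ⧸ (J + (y))` does
    have hpos : ∃ z ∈ maximalIdeal A, RegMod (J ⊔ Ideal.span {x}) z := by
      by_contra! hcon
      have hne : J ⊔ Ideal.span {x} ≠ ⊤ := by
        intro htop
        have : (⊤ : Ideal A) ≤ J := by
          refine Submodule.le_of_le_smul_of_le_jacobson_bot (I := Ideal.span {x})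
            (IsNoetherian.noetherian _) ((Ideal.span_singleton_le_iff_mem _).2
              (by rwa [IsLocalRing.jacobson_eq_maximalIdeal _ bot_ne_top])) ?_
          simpa using htop.ge
        exact hd.ne_top (by simp [top_le_iff.1 this])
      obtain ⟨w, hw, hmw⟩ := exists_socle hcon hne
      obtain ⟨w', hw'⟩ := mem_sup_span_singleton.1 (hmw y hy)
      have h1 : w' ∈ J ⊔ Ideal.span {y} := by
        apply hz₀reg
        obtain ⟨w'', hw''⟩ := mem_sup_span_singleton.1 (hmw z₀ hz₀)
        refine mem_sup_span_singleton.2 ⟨w'', hreg _ ?_⟩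
        have : x * (z₀ * w' - w'' * y) = y * (z₀ * w - w'' * x) - z₀ * (y * w - w' * x) := by
          ring
        rw [this]
        exact sub_mem (J.mul_mem_left _ hw'') (J.mul_mem_left _ hw')
      obtain ⟨c, hc⟩ := mem_sup_span_singleton.1 h1
      refine hw (mem_sup_span_singleton.2 ⟨c, hyreg _ ?_⟩)
      have : y * (w - c * x) = (y * w - w' * x) + x * (w' - c * y) := by ring
      rw [this]
      exact add_mem hw' (J.mul_mem_left _ hc)
    obtain ⟨z₁, hz₁, hz₁reg⟩ := hpos
    obtain ⟨z, hz, hzJ, hzx, hzy⟩ := exists_common_reg hx hz₁ hz₀ hreg hz₁reg hz₀reg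
    have h1 : DepthGE k (J ⊔ Ideal.span {y} ⊔ Ideal.span {z}) := ih hd hz hzy
    have h2 : DepthGE (k + 1) (J ⊔ Ideal.span {z}) :=
      ⟨y, hy, RegMod.swap_right hyreg hzy, by rwa [sup_right_comm]⟩
    have h3 : DepthGE k (J ⊔ Ideal.span {z} ⊔ Ideal.span {x}) :=
      ih h2 hx (RegMod.swap_right hreg hzx)
    exact ⟨z, hz, hzx, by rwa [sup_right_comm]⟩

/-- Macaulay's unmixedness theorem in the form needed here: if `A ⧸ J` has depth `≥ k` and
finitely many elements cut its dimension down to `k` minus their number, they form a regular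
sequence, so that the quotient still is Cohen–Macaulay. -/
lemma depth_of_dim : ∀ (l : List A) (k d : ℕ) (J : Ideal A), DepthGE k J →
    (∀ x ∈ l, x ∈ maximalIdeal A) → d + l.length = k →
    ringKrullDim (A ⧸ (J ⊔ Ideal.ofList l)) ≤ d → DepthGE d (J ⊔ Ideal.ofList l) := by
  intro l
  induction l with
  | nil =>
    intro k d J hJ _ hk _
    simp only [Ideal.ofList_nil, sup_bot_eq, List.length_nil, add_zero] at *
    exact hk ▸ hJ
  | cons f l ih =>
    intro k d J hJ hm hk hdim
    obtain ⟨k, rfl⟩ : ∃ k', k = k' + 1 := ⟨k - 1, by simp at hk; omega⟩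
    have hassoc : J ⊔ Ideal.ofList (f :: l) = J ⊔ Ideal.span {f} ⊔ Ideal.ofList l := by
      rw [Ideal.ofList_cons, sup_assoc]
    by_cases hreg : RegMod J f
    · rw [hassoc] at hdim ⊢
      exact ih k d _ (depth_quot k hJ (hm f (by simp)) hreg) (fun x hx => hm x (by simp [hx]))
        (by simp at hk; omega) hdim
    · exfalso
      simp only [RegMod, not_forall] at hreg
      obtain ⟨r, hfr, hr⟩ := hreg
      obtain ⟨Q, hQ, hle, hJQ, hkQ⟩ := depth_le_dim (P := Ideal.span {f}) (k + 1) hJ hr (by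
        intro p hp
        obtain ⟨c, rfl⟩ := Ideal.mem_span_singleton'.1 hp
        rw [mul_assoc]; exact J.mul_mem_left _ hfr)
      have hloc : IsLocalRing (A ⧸ Q) :=
        IsLocalRing.of_surjective' (Ideal.Quotient.mk Q) Ideal.Quotient.mk_surjective
      classical
      let s : Finset (A ⧸ Q) := (l.map (Ideal.Quotient.mk Q)).toFinset
      have h1 := ringKrullDim_le_ringKrullDim_quotient_add_card s (by
        intro y hy
        simp only [s, List.coe_toFinset, List.mem_map, Set.mem_ofPred_eq] at hy
        obtain ⟨x, hx, rfl⟩ := hy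
        rw [IsLocalRing.ringJacobson_eq_maximalIdeal, SetLike.mem_coe, mem_maximalIdeal]
        intro hu
        obtain ⟨c, hc⟩ := Ideal.Quotient.mk_surjective (hu.unit⁻¹).1
        have h1 : x * c - 1 ∈ Q := by
          rw [← Ideal.Quotient.eq_zero_iff_mem, map_sub, map_mul, hc, map_one]
          simp
        have h2 : x * c - 1 ∈ maximalIdeal A := le_maximalIdeal hQ.ne_top h1
        refine (Ideal.ne_top_iff_one _).1 (maximalIdeal.isMaximal A).ne_top ?_
        have : (1 : A) = x * c - (x * c - 1) := by ring
        rw [this]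
        exact sub_mem (Ideal.mul_mem_right _ _ (hm x (by simp [hx]))) h2)
      have h2 : ringKrullDim ((A ⧸ Q) ⧸ Ideal.span (s : Set (A ⧸ Q))) ≤ d := by
        refine le_trans ?_ hdim
        have hker : ∀ a ∈ J ⊔ Ideal.ofList (f :: l),
            (Ideal.Quotient.mk (Ideal.span (s : Set (A ⧸ Q)))).comp (Ideal.Quotient.mk Q) a
              = 0 := by
          suffices J ⊔ Ideal.ofList (f :: l) ≤ RingHom.ker
              ((Ideal.Quotient.mk (Ideal.span (s : Set (A ⧸ Q)))).comp (Ideal.Quotient.mk Q)) from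
            fun a ha => this ha
          refine sup_le (fun a ha => ?_) (Ideal.span_le.2 fun a ha => ?_)
          · rw [RingHom.mem_ker, RingHom.comp_apply, Ideal.Quotient.eq_zero_iff_mem.2 (hJQ ha),
              map_zero]
          · rw [SetLike.mem_coe, RingHom.mem_ker, RingHom.comp_apply]
            rcases List.mem_cons.1 ha with rfl | ha
            · rw [Ideal.Quotient.eq_zero_iff_mem.2 (hle (Ideal.mem_span_singleton_self _)),
                map_zero]
            · rw [Ideal.Quotient.eq_zero_iff_mem]
              exact Ideal.subset_span (by simpa [s] using ⟨a, ha, rfl⟩)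
        refine ringKrullDim_le_of_surjective (Ideal.Quotient.lift _ _ hker) ?_
        apply Ideal.Quotient.lift_surjective_of_surjective
        exact Ideal.Quotient.mk_surjective.comp Ideal.Quotient.mk_surjective
      have h3 : s.card ≤ l.length := (List.toFinset_card_le _).trans (by simp)
      have h4 : ((k + 1 : ℕ) : WithBot ℕ∞) ≤ ((d + l.length : ℕ) : WithBot ℕ∞) := by
        refine (hkQ.trans h1).trans ?_
        push_cast
        gcongr
      have h5 : k + 1 ≤ d + l.length := by exact_mod_cast h4
      simp at hk
      omega

end Depth

/-! ### Regular sequences and localization -/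

section Transfer

open scoped Pointwise

/-- `l` is a weakly regular sequence on `R ⧸ J`. -/
def RegSeq {R : Type*} [CommRing R] : Ideal R → List R → Prop
  | _, [] => True
  | J, x :: l => RegMod J x ∧ RegSeq (J ⊔ Ideal.span {x}) l

variable {R : Type*} [CommRing R]

lemma regSeq_append {l l' : List R} : ∀ {J : Ideal R}, RegSeq J l →
    RegSeq (J ⊔ Ideal.ofList l) l' → RegSeq J (l ++ l') := by
  induction l with
  | nil => intro J _ h; simpa using h
  | cons x l ih =>
    intro J h h'
    refine ⟨h.1, ih h.2 ?_⟩
    rwa [sup_assoc, ← Ideal.ofList_cons]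

lemma isWeaklyRegular_iff_regSeq (l : List R) : ∀ J : Ideal R,
    RingTheory.Sequence.IsWeaklyRegular (R ⧸ J) l ↔ RegSeq J l := by
  induction l with
  | nil => intro J; simp [RegSeq]
  | cons x l ih =>
    intro J
    rw [RingTheory.Sequence.isWeaklyRegular_cons_iff, RegSeq,
      isSMulRegular_quotient_iff_mem_of_smul_mem]
    refine and_congr Iff.rfl ?_
    rw [← ih]
    have h : x • (⊤ : Submodule R (R ⧸ J)) =
        Submodule.map (Submodule.mkQ J) (Ideal.span {x}) := by
      ext z
      obtain ⟨z, rfl⟩ := Submodule.mkQ_surjective J z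
      simp only [Submodule.mem_smul_pointwise_iff_exists, Submodule.mem_top, true_and,
        Submodule.mem_map]
      constructor
      · rintro ⟨b, hb⟩
        obtain ⟨b, rfl⟩ := Submodule.mkQ_surjective J b
        exact ⟨x * b, Ideal.mul_mem_right _ _ (Ideal.mem_span_singleton_self x), hb⟩
      · rintro ⟨y, hy, h⟩
        obtain ⟨c, rfl⟩ := Ideal.mem_span_singleton'.1 hy
        refine ⟨Submodule.mkQ J c, ?_⟩
        rw [← h, ← map_smul, smul_eq_mul, mul_comm]
    let e : QuotSMulTop x (R ⧸ J) ≃ₗ[R] R ⧸ (J ⊔ Ideal.span {x}) :=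
      (Submodule.quotEquivOfEq _ _ h).trans
        (Submodule.quotientQuotientEquivQuotientSup J (Ideal.span {x}))
    exact e.isWeaklyRegular_congr l

/-- Inside a proper ideal, weak regularity and regularity agree. -/
lemma isRegular_iff_regSeq {J m : Ideal R} (hm : m ≠ ⊤) (hJ : J ≤ m) {l : List R}
    (hl : ∀ x ∈ l, x ∈ m) :
    RingTheory.Sequence.IsRegular (R ⧸ J) l ↔ RegSeq J l := by
  rw [RingTheory.Sequence.isRegular_iff, isWeaklyRegular_iff_regSeq, and_iff_left]
  intro h
  have h1 : (1 : R ⧸ J) ∈ (Ideal.ofList l • ⊤ : Submodule R (R ⧸ J)) := h ▸ Submodule.mem_top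
  rw [Ideal.smul_top_eq_map, Submodule.restrictScalars_mem] at h1
  obtain ⟨y, hy, hy1⟩ := (Ideal.mem_map_iff_of_surjective _ Ideal.Quotient.mk_surjective).1 h1
  have hym : y ∈ m := (Ideal.span_le.2 hl) hy
  rw [← map_one (Ideal.Quotient.mk J), Ideal.Quotient.eq] at hy1
  have : (1 : R) = y - (y - 1) := by ring
  exact hm ((Ideal.eq_top_iff_one _).2 (this ▸ sub_mem hym (hJ hy1)))

variable (m : Ideal R) [m.IsPrime]

local notation "loc" => algebraMap R (Localization.AtPrime m)

lemma RegMod.localize {J : Ideal R} {x : R} (h : RegMod J x) :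
    RegMod (J.map loc) (loc x) := by
  intro r hr
  obtain ⟨⟨a, s⟩, has⟩ := IsLocalization.surj m.primeCompl r
  have h1 : loc (x * a) ∈ J.map loc := by
    rw [map_mul, ← has, ← mul_assoc]; exact Ideal.mul_mem_right _ _ hr
  obtain ⟨t, ht, hta⟩ := (IsLocalization.algebraMap_mem_map_algebraMap_iff
    m.primeCompl (Localization.AtPrime m) J (x * a)).1 h1
  refine (IsLocalization.mem_map_algebraMap_iff m.primeCompl _).2
    ⟨⟨⟨t * a, h _ (by rwa [mul_left_comm])⟩, ⟨t * s, mul_mem ht s.2⟩⟩, ?_⟩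
  simp only [map_mul, ← has]
  ring

lemma RegSeq.depthGE {l : List R} : ∀ {J : Ideal R}, RegSeq J l → J ≤ m → (∀ x ∈ l, x ∈ m) →
    DepthGE l.length (J.map loc) := by
  induction l with
  | nil =>
    intro J _ hJ _ htop
    have := Ideal.map_mono (f := loc) hJ
    rw [htop, Localization.AtPrime.map_eq_maximalIdeal] at this
    exact (IsLocalRing.maximalIdeal.isMaximal _).ne_top (top_le_iff.1 this)
  | cons x l ih =>
    intro J h hJ hl
    refine ⟨loc x, ?_, h.1.localize m, ?_⟩
    · rw [← Localization.AtPrime.map_eq_maximalIdeal]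
      exact Ideal.mem_map_of_mem _ (hl x (by simp))
    · have := ih h.2 (sup_le hJ ((Ideal.span_singleton_le_iff_mem _).2 (hl x (by simp))))
        (fun y hy => hl y (by simp [hy]))
      rwa [Ideal.map_sup, Ideal.map_span, Set.image_singleton] at this

end Transfer

/-! ### Monomial primes and heights in the polynomial ring -/

section Primes

/-- A Krull dimension bound for a quotient all of whose primes have large height. -/
lemma ringKrullDim_quotient_le_of_height {R : Type*} [CommRing R] {I : Ideal R} {d h : ℕ}
    (hR : ringKrullDim R ≤ (d + h : ℕ))
    (hI : ∀ P : Ideal R, P.IsPrime → I ≤ P → (h : ℕ∞) ≤ P.height) :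
    ringKrullDim (R ⧸ I) ≤ d := by
  rw [ringKrullDim_quotient, Order.krullDim]
  refine iSup_le fun l => ?_
  have hh : (h : ℕ∞) ≤ Order.height l.head.1 := by
    rw [← PrimeSpectrum.height_eq_orderHeight]
    exact hI _ l.head.1.2 l.head.2
  obtain ⟨q, hq, hlen⟩ := Order.exists_series_of_le_height _ hh
  let l' : LTSeries (PrimeSpectrum R) := l.map Subtype.val (fun _ _ h => h)
  have h1 : ((q.smash l' (by rw [hq]; rfl)).length : WithBot ℕ∞) ≤ ringKrullDim R :=
    Order.LTSeries.length_le_krullDim _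
  have h2 : ((h + l.length : ℕ) : WithBot ℕ∞) ≤ (d + h : ℕ) := by
    refine le_trans (le_of_eq ?_) (h1.trans hR)
    rw [RelSeries.smash_length, hlen]
    rfl
  have h3 : h + l.length ≤ d + h := by exact_mod_cast h2
  exact_mod_cast (by omega : l.length ≤ d)

variable (K : Type) [Field K] {n : ℕ}

/-- The monomial prime ideal generated by the variables with index in `T`. -/
noncomputable def VP (T : Set (Fin n)) : Ideal (MvPolynomial (Fin n) K) :=
  Ideal.span (X '' T)

variable {K}

lemma VP_le {T : Set (Fin n)} {P : Ideal (MvPolynomial (Fin n) K)} :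
    VP K T ≤ P ↔ ∀ i ∈ T, (X i : MvPolynomial (Fin n) K) ∈ P := by
  rw [VP, Ideal.span_le, Set.image_subset_iff]; rfl

lemma X_mem_VP {T : Set (Fin n)} {i : Fin n} :
    (X i : MvPolynomial (Fin n) K) ∈ VP K T ↔ i ∈ T := by
  rw [VP, mem_ideal_span_X_image]
  simp [support_X, Finsupp.single_apply]

instance VP_isPrime (T : Set (Fin n)) : (VP K T).IsPrime := by
  classical
  let φ : MvPolynomial (Fin n) K →ₐ[K] MvPolynomial (Fin n) K :=
    aeval fun i => if i ∈ T then 0 else X i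
  have h1 : ∀ f, f - φ f ∈ VP K T := by
    intro f
    induction f using MvPolynomial.induction_on with
    | C a => simp [φ, algebraMap_eq]
    | add p q hp hq =>
      rw [map_add, add_sub_add_comm]; exact add_mem hp hq
    | mul_X p i hp =>
      have : p * X i - φ (p * X i) = (p - φ p) * X i + φ p * (X i - φ (X i)) := by
        rw [map_mul]; ring
      rw [this]
      refine add_mem (Ideal.mul_mem_right _ _ hp) (Ideal.mul_mem_left _ _ ?_)
      by_cases hi : i ∈ T
      · simpa [φ, hi] using X_mem_VP.2 hi
      · simp [φ, hi]
  have h2 : VP K T = RingHom.ker φ := by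
    refine le_antisymm (VP_le.2 fun i hi => ?_) fun f hf => ?_
    · simp [RingHom.mem_ker, φ, hi]
    · have := h1 f
      rwa [(RingHom.mem_ker).1 hf, sub_zero] at this
  rw [h2]
  exact RingHom.ker_isPrime _

/-- A sum of distinct variables lies in a monomial prime only if each of them does. -/
lemma sum_X_mem_VP {T : Set (Fin n)} {U : Finset (Fin n)} :
    (∑ i ∈ U, X i : MvPolynomial (Fin n) K) ∈ VP K T ↔ ↑U ⊆ T := by
  classical
  refine ⟨fun h i hi => ?_, fun h => Ideal.sum_mem _ fun i hi => X_mem_VP.2 (h hi)⟩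
  rw [VP, mem_ideal_span_X_image] at h
  obtain ⟨j, hj, hne⟩ := h (Finsupp.single i 1) (by
    rw [mem_support_iff, coeff_sum, Finset.sum_eq_single i]
    · simp
    · intro b _ hb
      simp [coeff_X, Finsupp.single_left_inj, hb]
    · exact fun hn => absurd hi hn)
  by_cases hij : i = j
  · exact hij ▸ hj
  · simp [hij] at hne

lemma ringKrullDim_S : ringKrullDim (MvPolynomial (Fin n) K) = n := by
  rw [MvPolynomial.ringKrullDim_of_isNoetherianRing, ringKrullDim_eq_zero_of_field]
  simp

lemma card_le_height {T : Finset (Fin n)} {P : Ideal (MvPolynomial (Fin n) K)} [P.IsPrime]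
    (h : ∀ i ∈ T, (X i : MvPolynomial (Fin n) K) ∈ P) : (T.card : ℕ∞) ≤ P.height := by
  classical
  have key : ∀ T : Finset (Fin n), (T.card : ℕ∞) ≤ (VP K (T : Set (Fin n))).height := by
    intro T
    induction T using Finset.induction_on with
    | empty => simp
    | insert i T hi ih =>
      rw [Finset.card_insert_of_notMem hi]
      push_cast
      refine (add_le_add ih le_rfl).trans (Ideal.height_add_one_le_of_lt_of_isPrime ?_)
      refine lt_of_le_of_ne (VP_le.2 fun j hj => X_mem_VP.2 (by simp [Finset.mem_coe.1 hj]))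
        fun heq => hi ?_
      have : (X i : MvPolynomial (Fin n) K) ∈ VP K (insert i (T : Set (Fin n))) :=
        X_mem_VP.2 (by simp)
      rw [← heq] at this
      exact X_mem_VP.1 this
  exact (key T).trans (Ideal.height_mono (VP_le.2 h))

lemma height_VP_le (T : Finset (Fin n)) : (VP K (T : Set (Fin n))).height ≤ T.card := by
  classical
  have h := Ideal.height_le_card_of_mem_minimalPrimes_span (p := VP K (T : Set (Fin n)))
    (s := X '' (T : Set (Fin n))) ((Finset.finite_toSet T).image _) (by
      rw [← VP, Ideal.minimalPrimes_eq_subsingleton_self]; rfl)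
  refine h.trans ?_
  have := Set.ncard_image_le (f := (X : Fin n → MvPolynomial (Fin n) K)) (Finset.finite_toSet T)
  rw [Set.ncard_coe_finset] at this
  exact_mod_cast this

/-- An independent set `F` of vertices bounds the dimension from below. -/
lemma card_le_dim {I : Ideal (MvPolynomial (Fin n) K)} {F : Finset (Fin n)}
    (h : I ≤ VP K (↑F)ᶜ) : (F.card : WithBot ℕ∞) ≤ ringKrullDim (MvPolynomial (Fin n) K ⧸ I) := by
  let φ := (killCompl (R := K) (f := ((↑) : F → Fin n)) Subtype.val_injective)
  have hφ : Function.Surjective φ := fun p => ⟨_, killCompl_rename_app _ p⟩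
  have h0 : ∀ a ∈ I, (φ : MvPolynomial (Fin n) K →+* MvPolynomial F K) a = 0 := by
    intro a ha
    have : VP K ((↑F)ᶜ : Set (Fin n)) ≤ RingHom.ker φ := VP_le.2 fun i hi => by
      rw [RingHom.mem_ker]
      simp only [φ, killCompl, aeval_X]
      rw [dif_neg]
      simpa using hi
    exact this (h ha)
  have := ringKrullDim_le_of_surjective (Ideal.Quotient.lift I _ h0)
    (Ideal.Quotient.lift_surjective_of_surjective _ _ hφ)
  refine le_trans (le_of_eq ?_) this
  rw [MvPolynomial.ringKrullDim_of_isNoetherianRing, ringKrullDim_eq_zero_of_field]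
  simp

end Primes

/-! ### Squarefree monomial ideals, and depth against dimension -/

section SR

variable (K : Type) [Field K] {n : ℕ}

/-- The squarefree monomial ideal generated by the products of the variables over the members of
`E`. -/
noncomputable def SR (E : Set (Finset (Fin n))) : Ideal (MvPolynomial (Fin n) K) :=
  Ideal.span ((fun e : Finset (Fin n) => ∏ i ∈ e, X i) '' E)

variable {K}

/-- A squarefree monomial ideal is the intersection of the monomial primes `(x_i : i ∈ T)`, where
`T` runs over the vertex covers. -/
lemma mem_SR_iff {E : Set (Finset (Fin n))} {f : MvPolynomial (Fin n) K} :
    f ∈ SR K E ↔ ∀ T : Set (Fin n), (∀ e ∈ E, ∃ i ∈ e, i ∈ T) → f ∈ VP K T := by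
  classical
  have hmon : ∀ e : Finset (Fin n), (∏ i ∈ e, X i : MvPolynomial (Fin n) K) =
      monomial (∑ i ∈ e, Finsupp.single i 1) 1 := by
    intro e
    rw [monomial_sum_one]; rfl
  constructor
  · intro h T hT
    refine (Ideal.span_le.2 ?_ : SR K E ≤ VP K T) h
    rintro _ ⟨e, he, rfl⟩
    obtain ⟨i, hie, hiT⟩ := hT e he
    exact Ideal.mem_of_dvd _ (Finset.dvd_prod_of_mem _ hie) (X_mem_VP.2 hiT)
  · intro h
    have hS : SR K E = Ideal.span ((fun s => monomial s (1 : K)) ''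
        ((fun e : Finset (Fin n) => ∑ i ∈ e, Finsupp.single i 1) '' E)) := by
      rw [SR, Set.image_image]
      simp only [hmon]
    rw [hS, mem_ideal_span_monomial_image]
    intro s hs
    -- the complement of the support of a monomial outside the ideal is a vertex cover
    by_contra! hcon
    have := h {i | s i = 0} (fun e he => by
      by_contra! hne
      refine hcon _ ⟨e, he, rfl⟩ fun i => ?_
      rw [Finsupp.finsetSum_apply]
      simp only [Finsupp.single_apply, Finset.sum_ite_eq', Set.mem_ofPred_eq] at hne ⊢
      split_ifs with hi
      · exact Nat.one_le_iff_ne_zero.2 (hne i hi)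
      · exact Nat.zero_le _)
    rw [VP, mem_ideal_span_X_image] at this
    obtain ⟨i, hi, hne⟩ := this s hs
    exact hne hi

/-- A sum of distinct variables is a nonzerodivisor modulo a squarefree monomial ideal as soon as
every vertex cover contains one that misses a summand. -/
lemma regMod_SR {E : Set (Finset (Fin n))} {U : Finset (Fin n)}
    (h : ∀ T : Set (Fin n), (∀ e ∈ E, ∃ i ∈ e, i ∈ T) →
      ∃ T' ⊆ T, (∀ e ∈ E, ∃ i ∈ e, i ∈ T') ∧ ∃ i ∈ U, i ∉ T') :
    RegMod (SR K E) (∑ i ∈ U, X i) := by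
  intro r hr
  rw [mem_SR_iff] at hr ⊢
  intro T hT
  obtain ⟨T', hTT', hT', i, hi, hiT'⟩ := h T hT
  rcases (VP_isPrime T').mem_or_mem (hr T' hT') with h1 | h1
  · exact absurd (sum_X_mem_VP.1 h1 hi) hiT'
  · exact VP_le.2 (fun j hj => X_mem_VP.2 (hTT' hj)) h1

lemma SR_union (E E' : Set (Finset (Fin n))) : SR K (E ∪ E') = SR K E ⊔ SR K E' := by
  rw [SR, Set.image_union, Ideal.span_union]; rfl

lemma SR_inf_le {E E₁ E₂ : Set (Finset (Fin n))}
    (h : ∀ T : Set (Fin n), (∀ e ∈ E, ∃ i ∈ e, i ∈ T) →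
      (∀ e ∈ E₁, ∃ i ∈ e, i ∈ T) ∨ (∀ e ∈ E₂, ∃ i ∈ e, i ∈ T)) :
    SR K E₁ ⊓ SR K E₂ ≤ SR K E := by
  rintro f ⟨h1, h2⟩
  rw [mem_SR_iff]
  rw [SetLike.mem_coe, mem_SR_iff] at h1 h2
  intro T hT
  rcases h T hT with h | h
  exacts [h1 T h, h2 T h]

lemma SR_sup_span_X (E : Set (Finset (Fin n))) (i : Fin n) :
    SR K E ⊔ Ideal.span {X i} = SR K (E ∪ {{i}}) := by
  rw [SR_union]
  simp [SR]

lemma SR_sup_ofList (l : List (Fin n)) : ∀ E : Set (Finset (Fin n)),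
    SR K E ⊔ Ideal.ofList (l.map X) = SR K (E ∪ (fun i => {i}) '' {i | i ∈ l}) := by
  intro E
  rw [SR_union]
  congr 1
  rw [SR, Set.image_image, Ideal.ofList]
  congr 1
  ext; simp

/-- Variables that do not occur in the generators form a regular sequence. -/
lemma regSeq_vars (l : List (Fin n)) : ∀ E : Set (Finset (Fin n)), l.Nodup →
    (∀ e ∈ E, ∀ i ∈ e, i ∉ l) → RegSeq (SR K E) (l.map X) := by
  induction l with
  | nil => intro E _ _; trivial
  | cons i l ih =>
    intro E hl hE
    rw [List.nodup_cons] at hl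
    refine ⟨?_, ?_⟩
    · have := regMod_SR (K := K) (E := E) (U := {i}) fun T hT => ⟨T \ {i}, Set.sdiff_subset,
        fun e he => ?_, i, by simp, by simp⟩
      · simpa using this
      · obtain ⟨j, hj, hjT⟩ := hT e he
        refine ⟨j, hj, hjT, ?_⟩
        rintro rfl
        exact hE e he j hj (by simp)
    · rw [SR_sup_span_X]
      refine ih _ hl.2 ?_
      rintro e (he | rfl) j hj hjl
      · exact hE e he j hj (by simp [hjl])
      · rw [Finset.mem_singleton] at hj
        exact hl.1 (hj ▸ hjl)

end SR

section DepthDim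

variable {K : Type} [Field K] {n : ℕ}

local notation "S" => MvPolynomial (Fin n) K

/-- The localization of the polynomial ring at the ideal generated by the variables. -/
abbrev Loc (K : Type) [Field K] (n : ℕ) : Type :=
  Localization.AtPrime (VP K (Set.univ : Set (Fin n)))

lemma ringKrullDim_Loc : ringKrullDim (Loc K n) ≤ n := by
  rw [IsLocalization.AtPrime.ringKrullDim_eq_height (VP K (Set.univ : Set (Fin n)))]
  have := height_VP_le (K := K) (Finset.univ : Finset (Fin n))
  rw [Finset.coe_univ, Finset.card_univ, Fintype.card_fin] at this
  exact_mod_cast WithBot.coe_le_coe.2 this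

/-- The dimension of `A ⧸ P` for a prime `P` containing the variables with index in `T`. -/
lemma dim_Loc_le {T : Finset (Fin n)} {P : Ideal (Loc K n)} [P.IsPrime]
    (h : ∀ i ∈ T, algebraMap S (Loc K n) (X i) ∈ P) :
    ringKrullDim (Loc K n ⧸ P) ≤ ((n - T.card : ℕ) : WithBot ℕ∞) := by
  refine ringKrullDim_quotient_le_of_height (h := T.card) ?_ ?_
  · rw [Nat.sub_add_cancel ((Finset.card_le_univ T).trans (by simp))]
    exact ringKrullDim_Loc
  · intro Q hQ hPQ
    rw [← IsLocalization.height_under (VP K (Set.univ : Set (Fin n))).primeCompl]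
    exact card_le_height fun i hi => hPQ (h i hi)

lemma span_range_X : Ideal.span (Set.range (X : Fin n → S)) = VP K Set.univ := by
  rw [VP, Set.image_univ]

/-- The defining set of `smDepth`, in terms of regular sequences modulo ideals. -/
lemma smDepth_eq {I : Ideal S} (hI : I ≤ VP K Set.univ) :
    smDepth K n I = sSup {r | ∃ rs : List S, rs.length = r ∧
      (∀ a ∈ rs, a ∈ VP K (Set.univ : Set (Fin n))) ∧ RegSeq I rs} := by
  rw [smDepth]
  congr 1
  ext r
  refine exists_congr fun rs => and_congr_right fun _ => ?_
  rw [span_range_X]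
  refine and_congr_right fun h => isRegular_iff_regSeq (VP_isPrime _).ne_top hI h

/-- A regular sequence of length `r` on `S ⧸ I` gives depth `r` locally, hence `r ≤ dim S ⧸ I`. -/
lemma length_le_dim {I : Ideal S} (hI : I ≤ VP K Set.univ) {d h : ℕ} (hd : d + h = n)
    (hh : ∀ P : Ideal S, P.IsPrime → I ≤ P → (h : ℕ∞) ≤ P.height) {rs : List S}
    (hm : ∀ a ∈ rs, a ∈ VP K (Set.univ : Set (Fin n))) (hr : RegSeq I rs) : rs.length ≤ d := by
  have h1 := hr.depthGE _ hI hm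
  obtain ⟨Q, hQ, -, hJQ, hk⟩ := depth_le_dim (P := I.map (algebraMap S (Loc K n))) (s := 1) _ h1
    (fun h => h1.ne_top ((Ideal.eq_top_iff_one _).2 h)) (fun p hp => by simpa using hp)
  have h2 : ringKrullDim (Loc K n ⧸ Q) ≤ d := by
    refine ringKrullDim_quotient_le_of_height (h := h) (hd ▸ ringKrullDim_Loc) fun P hP hQP => ?_
    rw [← IsLocalization.height_under (VP K (Set.univ : Set (Fin n))).primeCompl]
    exact hh _ inferInstance fun x hx => hQP (hJQ (Ideal.mem_map_of_mem _ hx))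
  exact_mod_cast hk.trans h2

lemma smDepth_spec {I : Ideal S} (hI : I ≤ VP K Set.univ) :
    (∃ rs : List S, rs.length = smDepth K n I ∧
      (∀ a ∈ rs, a ∈ VP K (Set.univ : Set (Fin n))) ∧ RegSeq I rs) ∧
    ∀ rs : List S, (∀ a ∈ rs, a ∈ VP K (Set.univ : Set (Fin n))) → RegSeq I rs →
      rs.length ≤ smDepth K n I := by
  have hb : BddAbove {r | ∃ rs : List S, rs.length = r ∧
      (∀ a ∈ rs, a ∈ VP K (Set.univ : Set (Fin n))) ∧ RegSeq I rs} := by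
    refine ⟨n, ?_⟩
    rintro _ ⟨rs, rfl, hm, hr⟩
    exact length_le_dim hI (d := n) (h := 0) rfl (by simp) hm hr
  rw [smDepth_eq hI]
  exact ⟨Nat.sSup_mem (s := {r | ∃ rs : List S, rs.length = r ∧
      (∀ a ∈ rs, a ∈ VP K (Set.univ : Set (Fin n))) ∧ RegSeq I rs})
      ⟨0, [], rfl, by simp, trivial⟩ hb,
    fun rs hm hr => le_csSup hb ⟨rs, rfl, hm, hr⟩⟩

/-- All variables together form a regular sequence. -/
lemma depthGE_bot : DepthGE n (⊥ : Ideal (Loc K n)) := by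
  have h0 : SR K (∅ : Set (Finset (Fin n))) = ⊥ := by simp [SR]
  have h := (regSeq_vars (K := K) (List.finRange n) ∅ (List.nodup_finRange n)
    (by simp)).depthGE (VP K (Set.univ : Set (Fin n))) (by simp [h0]) (by
      simp only [List.mem_map]
      rintro _ ⟨i, -, rfl⟩
      exact X_mem_VP.2 (Set.mem_univ i))
  simpa [h0, Ideal.map_bot] using h

end DepthDim

/-! ### Upper bounds for the depth up to radical -/

section Obstruction

variable {K : Type} [Field K] {n : ℕ}

/-- The edges of the lexsegment graph, with vertices and end points counted from `0`: the pairs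
`i < j` between `(a, b)` and `(c, d)` in the lexicographic order. -/
def Ed (n a b c d : ℕ) (i j : Fin n) : Prop :=
  i.1 < j.1 ∧ (a < i.1 ∨ a = i.1 ∧ b ≤ j.1) ∧ (i.1 < c ∨ i.1 = c ∧ j.1 ≤ d)

/-- The edge set of a graph given by a relation. -/
def ES (G : Fin n → Fin n → Prop) : Set (Finset (Fin n)) := {e | ∃ i j, G i j ∧ e = {i, j}}

lemma SR_ES_le {G : Fin n → Fin n → Prop} (hG : ∀ i j, G i j → i ≠ j)
    {P : Ideal (MvPolynomial (Fin n) K)} :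
    SR K (ES G) ≤ P ↔ ∀ i j, G i j → (X i * X j : MvPolynomial (Fin n) K) ∈ P := by
  rw [SR, Ideal.span_le, Set.image_subset_iff]
  constructor
  · intro h i j hij
    have := h ⟨i, j, hij, rfl⟩
    simpa [Finset.prod_pair (hG i j hij)] using this
  · rintro h _ ⟨i, j, hij, rfl⟩
    simpa [Finset.prod_pair (hG i j hij)] using h i j hij

lemma X_mul_X_mem {G : Fin n → Fin n → Prop} (hG : ∀ i j, G i j → i ≠ j) {i j : Fin n}
    (h : G i j ∨ G j i) : (X i * X j : MvPolynomial (Fin n) K) ∈ SR K (ES G) := by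
  rcases h with h | h
  · exact (SR_ES_le hG).1 le_rfl i j h
  · rw [mul_comm]; exact (SR_ES_le hG).1 le_rfl j i h

lemma SR_ES_le_VP {G : Fin n → Fin n → Prop} (hG : ∀ i j, G i j → i ≠ j) {T : Set (Fin n)} :
    SR K (ES G) ≤ VP K T ↔ ∀ i j, G i j → i ∈ T ∨ j ∈ T := by
  rw [SR_ES_le hG]
  refine forall₃_congr fun i j _ => ?_
  rw [(VP_isPrime T).mul_mem_iff_mem_or_mem, X_mem_VP, X_mem_VP]

local notation "lc" => algebraMap (MvPolynomial (Fin n) K) (Loc K n)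

lemma mem_VP_of_loc {I : Ideal (MvPolynomial (Fin n) K)} {T : Set (Fin n)} (hI : I ≤ VP K T)
    {f : MvPolynomial (Fin n) K} (h : lc f ∈ (I.map lc).radical) : f ∈ VP K T := by
  obtain ⟨k, hk⟩ := h
  rw [← map_pow, IsLocalization.algebraMap_mem_map_algebraMap_iff
    (VP K (Set.univ : Set (Fin n))).primeCompl] at hk
  obtain ⟨t, ht, htf⟩ := hk
  refine (VP_isPrime T).mem_of_pow_mem k (((VP_isPrime T).mem_or_mem (hI htf)).resolve_left
    fun h => ht ?_)
  exact VP_le.2 (fun i _ => X_mem_VP.2 (Set.mem_univ i)) h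

variable {G : Fin n → Fin n → Prop} (hG : ∀ i j, G i j → i ≠ j) {J : Ideal (Loc K n)}
  (hJ : J.radical = Ideal.radical (Ideal.map (algebraMap (MvPolynomial (Fin n) K) (Loc K n)) (SR K (ES G)))) {k : ℕ} (hd : DepthGE k J)

include hG hJ hd

/-- The depth of an ideal with the same radical as the edge ideal is at most the size of every
maximal independent set. -/
lemma depth_le_facet {F : Finset (Fin n)} (hF : ∀ i ∈ F, ∀ j ∈ F, ¬ G i j)
    (hmax : ∀ i ∉ F, ∃ j ∈ F, G i j ∨ G j i) : k ≤ F.card := by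
  classical
  obtain ⟨N, hN⟩ : ∃ N, ((SR K (ES G)).map lc) ^ N ≤ J := by
    refine Ideal.exists_pow_le_of_le_radical_of_fg ?_ (IsNoetherian.noetherian _)
    rw [hJ]; exact Ideal.le_radical
  -- the product of the variables in `F` multiplies the prime of `F` into the edge ideal
  let y : Loc K n := lc (∏ j ∈ F, X j)
  let P := (VP K ((↑F)ᶜ : Set (Fin n))).map lc
  have hIF : SR K (ES G) ≤ VP K ((↑F)ᶜ : Set (Fin n)) := (SR_ES_le_VP hG).2 fun i j hij => by
    by_contra! h
    simp only [Set.mem_compl_iff, not_not, Finset.mem_coe] at h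
    exact hF i h.1 j h.2 hij
  have hyP : P * Ideal.span {y} ≤ (SR K (ES G)).map lc := by
    rw [show Ideal.span {y} = (Ideal.span {∏ j ∈ F, X j}).map lc by
      rw [Ideal.map_span, Set.image_singleton], ← Ideal.map_mul]
    refine Ideal.map_mono ?_
    rw [VP, Ideal.span_mul_span', Ideal.span_le]
    rintro _ ⟨_, ⟨i, hi, rfl⟩, _, rfl, rfl⟩
    obtain ⟨j, hj, hij⟩ := hmax i (by simpa using hi)
    exact Ideal.mem_of_dvd _ (mul_dvd_mul_left _ (Finset.dvd_prod_of_mem _ hj))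
      (X_mul_X_mem hG hij)
  have hyJ : y ^ N ∉ J := fun h => by
    have h1 : y ∈ J.radical := ⟨N, h⟩
    rw [hJ] at h1
    have h2 := (VP_isPrime _).prod_mem_iff.1 (mem_VP_of_loc hIF h1)
    obtain ⟨j, hj, hjm⟩ := h2
    exact (X_mem_VP.1 hjm) hj
  obtain ⟨Q, hQ, hPQ, -, hk⟩ := depth_le_dim (P := P ^ N) (s := y ^ N) k hd hyJ fun p hp =>
    hN (Ideal.pow_right_mono hyP N (by
      rw [mul_pow]
      exact Ideal.mul_mem_mul hp (Ideal.pow_mem_pow (Ideal.mem_span_singleton_self y) N)))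
  have h1 := dim_Loc_le (T := Fᶜ) (P := Q) fun i hi =>
    hQ.le_of_pow_le hPQ (Ideal.mem_map_of_mem _ (X_mem_VP.2 (by simpa using hi)))
  have h2 : k ≤ n - Fᶜ.card := by exact_mod_cast hk.trans h1
  have h3 := Finset.card_compl_add_card F
  rw [Fintype.card_fin] at h3
  omega

/-- A connectedness obstruction: if all pairs between the two blocks `a, …, w` and `w + 1, …, n - 1`
of vertices are edges and the vertices strictly between `a` and `n - 1` form a clique, then a regular
sequence has length at most `a + 1`. -/
lemma connectivity {a w : ℕ} (ha : a ≤ w) (hw : w + 1 < n)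
    (hcross : ∀ i j : Fin n, a ≤ i.1 → i.1 ≤ w → w < j.1 → G i j)
    (hmid : ∀ i j : Fin n, a < i.1 → i.1 < j.1 → j.1 + 1 < n → G i j) : k ≤ a + 1 := by
  classical
  by_contra! hlt
  obtain ⟨N, hN⟩ : ∃ N, ((SR K (ES G)).map lc) ^ N ≤ J := by
    refine Ideal.exists_pow_le_of_le_radical_of_fg ?_ (IsNoetherian.noetherian _)
    rw [hJ]; exact Ideal.le_radical
  have hpow : ∀ i j : Fin n, G i j ∨ G j i → (lc (X i)) ^ N * (lc (X j)) ^ N ∈ J := by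
    intro i j h
    rw [← mul_pow, ← map_mul]
    exact hN (Ideal.pow_mem_pow (Ideal.mem_map_of_mem _ (X_mul_X_mem hG h)) N)
  have hprime : ∀ Q : Ideal (Loc K n), Q.IsPrime → J ≤ Q → ∀ i j : Fin n, G i j →
      lc (X i) ∈ Q ∨ lc (X j) ∈ Q := by
    intro Q hQ hJQ i j hij
    exact (hQ.mem_or_mem (hJQ (hpow i j (Or.inl hij)))).imp (hQ.mem_of_pow_mem N)
      (hQ.mem_of_pow_mem N)
  have hne : ∀ i : Fin n, ∀ M, (lc (X i)) ^ M ∉ J := by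
    intro i M h
    have h1 : lc (X i) ∈ J.radical := ⟨M, h⟩
    rw [hJ] at h1
    refine (X_mem_VP.1 (mem_VP_of_loc (T := {i}ᶜ) ((SR_ES_le_VP hG).2 fun j l hjl => ?_) h1)) rfl
    by_contra! h
    simp only [Set.mem_compl_iff, not_not, Set.mem_singleton_iff] at h
    exact hG j l hjl (h.1.trans h.2.symm)
  have hmax : ∀ i : Fin n, lc (X i) ∈ IsLocalRing.maximalIdeal (Loc K n) := by
    intro i
    rw [← Localization.AtPrime.map_eq_maximalIdeal]
    exact Ideal.mem_map_of_mem _ (X_mem_VP.2 (Set.mem_univ i))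
  have hN0 : N ≠ 0 := by
    rintro rfl
    exact hne ⟨a, by omega⟩ 0 (by
      rw [pow_zero, Ideal.one_eq_top, top_le_iff] at hN
      simp [hN])
  let p : Fin n := ⟨a, by omega⟩
  let q : Fin n := ⟨n - 1, by omega⟩
  have hpq : G p q := hcross p q le_rfl ha (by simp only [q]; omega)
  set s := (lc (X p)) ^ N with hs
  set t := (lc (X q)) ^ N with ht
  have hst : s * t ∈ J := hpow p q (Or.inl hpq)
  have hd' : DepthGE (a + 1 + 1) J := hd.mono (by omega)
  have hmem : s + t ∈ IsLocalRing.maximalIdeal (Loc K n) :=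
    add_mem (Ideal.pow_mem_of_mem _ (hmax p) N (Nat.pos_of_ne_zero hN0))
      (Ideal.pow_mem_of_mem _ (hmax q) N (Nat.pos_of_ne_zero hN0))
  -- every prime over `J` and `s + t` contains `x_a`, `x_{n-1}` and all but one inner variable
  have hreg : RegMod J (s + t) := by
    intro r hr
    by_contra hrJ
    obtain ⟨Q, hQ, hPQ, hJQ, hk⟩ := depth_le_dim (P := Ideal.span {s + t}) (a + 1 + 1) hd' hrJ
      (by
        intro z hz
        obtain ⟨c, rfl⟩ := Ideal.mem_span_singleton'.1 hz
        rw [mul_assoc]; exact J.mul_mem_left _ hr)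
    have hst' : s + t ∈ Q := hPQ (Ideal.mem_span_singleton_self _)
    have hp : lc (X p) ∈ Q ∧ lc (X q) ∈ Q := by
      rcases hQ.mem_or_mem (hJQ hst) with h | h
      · exact ⟨hQ.mem_of_pow_mem N h, hQ.mem_of_pow_mem N ((Q.add_mem_iff_right h).1 hst')⟩
      · exact ⟨hQ.mem_of_pow_mem N ((Q.add_mem_iff_left h).1 hst'), hQ.mem_of_pow_mem N h⟩
    obtain ⟨i₀, hi₀⟩ : ∃ i₀ : Fin n, ∀ i : Fin n, a ≤ i.1 → i ≠ i₀ → lc (X i) ∈ Q := by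
      by_contra! hcon
      obtain ⟨i, hai, -, hi⟩ := hcon p
      obtain ⟨j, haj, hji, hj⟩ := hcon i
      have h1 : ∀ l : Fin n, a ≤ l.1 → lc (X l) ∉ Q → a < l.1 ∧ l.1 + 1 < n := by
        intro l hal hl
        constructor
        · refine lt_of_le_of_ne hal fun h => hl ?_
          rw [show l = p from Fin.ext h.symm]; exact hp.1
        · by_contra! h
          refine hl ?_
          rw [show l = q from Fin.ext (by simp only [q]; omega)]; exact hp.2
      have hi' := h1 i hai hi
      have hj' := h1 j haj hj
      rcases lt_trichotomy i.1 j.1 with h | h | h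
      · exact (hprime Q hQ hJQ i j (hmid i j hi'.1 h hj'.2)).elim hi hj
      · exact hji (Fin.ext h.symm)
      · exact (hprime Q hQ hJQ j i (hmid j i hj'.1 h hi'.2)).elim hj hi
    have h1 := dim_Loc_le (T := (Finset.Ici p).erase i₀) (P := Q) fun i hi => by
      rw [Finset.mem_erase, Finset.mem_Ici] at hi
      exact hi₀ i hi.2 hi.1
    have h2 : a + 1 + 1 ≤ n - ((Finset.Ici p).erase i₀).card := by exact_mod_cast hk.trans h1
    have h3 := Finset.pred_card_le_card_erase (s := Finset.Ici p) (a := i₀)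
    rw [Fin.card_Ici] at h3
    simp only [p] at h2 h3
    omega
  have hd1 := depth_quot (a + 1) hd' hmem hreg
  by_cases hsx : s ∈ J ⊔ Ideal.span {s + t}
  · obtain ⟨c, hc⟩ := mem_sup_span_singleton.1 hsx
    rcases IsLocalRing.isUnit_or_isUnit_one_sub_self c with hu | hu
    · have h1 : c * t ^ 2 ∈ J := by
        have : c * t ^ 2 = (1 - c) * (s * t) - t * (s - c * (s + t)) := by ring
        rw [this]
        exact sub_mem (J.mul_mem_left _ hst) (J.mul_mem_left _ hc)
      rw [Ideal.unit_mul_mem_iff_mem J hu, ht, ← pow_mul] at h1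
      exact hne _ _ h1
    · have h1 : (1 - c) * s ^ 2 ∈ J := by
        have : (1 - c) * s ^ 2 = s * (s - c * (s + t)) + c * (s * t) := by ring
        rw [this]
        exact add_mem (J.mul_mem_left _ hc) (J.mul_mem_left _ hst)
      rw [Ideal.unit_mul_mem_iff_mem J hu, hs, ← pow_mul] at h1
      exact hne _ _ h1
  · -- the element `s` is killed by powers of all the variables that are not isolated
    obtain ⟨Q, hQ, hPQ, -, hk⟩ := depth_le_dim
      (P := Ideal.span ((fun i : Fin n => (lc (X i)) ^ N) '' {i | a ≤ i.1})) (a + 1) hd1 hsx (by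
        intro z hz
        induction hz using Submodule.span_induction with
        | mem z hz =>
          obtain ⟨i, hi, rfl⟩ := hz
          rcases le_or_gt i.1 w with h | h
          · have h1 := hpow i q (Or.inl (hcross i q hi h (by simp only [q]; omega)))
            have : (lc (X i)) ^ N * s = (lc (X i)) ^ N * (s + t) - (lc (X i)) ^ N * t := by ring
            rw [this]
            exact sub_mem (Ideal.mem_sup_right (Ideal.mul_mem_left _ _
              (Ideal.mem_span_singleton_self _))) (Ideal.mem_sup_left h1)
          · exact Ideal.mem_sup_left (hpow i p (Or.inr (hcross p i le_rfl ha h)))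
        | zero => simp
        | add x y _ _ hx hy => rw [add_mul]; exact add_mem hx hy
        | smul c x _ hx => rw [smul_eq_mul, mul_assoc]; exact Ideal.mul_mem_left _ _ hx)
    have h1 := dim_Loc_le (T := Finset.Ici p) (P := Q) fun i hi =>
      hQ.mem_of_pow_mem N (hPQ (Ideal.subset_span ⟨i, Finset.mem_Ici.1 hi, rfl⟩))
    have h2 : a + 1 ≤ n - (Finset.Ici p).card := by exact_mod_cast hk.trans h1
    rw [Fin.card_Ici] at h2
    simp only [p] at h2
    omega

end Obstruction

/-! ### Which lexsegments survive the bounds -/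

section Classification

variable {K : Type} [Field K] {n : ℕ}

/-- The lexsegments, with indices counted from `0`, whose edge ideal is Cohen–Macaulay. In order:
a single edge; a complete graph on the vertices `a, …, n - 1`; the two disjoint edges
`{a, n - 1}` and `{a + 1, a + 2}`; and the lexsegments ending in row `n - 3`, where
`a + 1, …, n - 2` span a complete graph from which the edge `{n - 3, n - 2}` may have been kept,
while `a` and `n - 1` are joined to all, or all but one, of the remaining vertices. -/
def Good (n a b c d : ℕ) : Prop :=
  (a = c ∧ b = d) ∨ (b = a + 1 ∧ a < c ∧ c + 2 = n ∧ d + 1 = n) ∨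
  (c = a + 1 ∧ b + 1 = n ∧ d = a + 2 ∧ a + 5 ≤ n) ∨
  (c + 3 = n ∧ a < c ∧ (b + 2 = n ∧ d + 2 = n ∨ b + 1 = n ∧ d + 1 = n ∨ b + 1 = n ∧ d + 2 = n))

lemma Ed_ne {a b c d : ℕ} (i j : Fin n) (h : Ed n a b c d i j) : i ≠ j :=
  Fin.ne_of_lt h.1

/-- The vertices of `Fin n` whose number lies in `s`. -/
def Fs (n : ℕ) (s : Finset ℕ) : Finset (Fin n) := Finset.univ.filter fun i => i.1 ∈ s

lemma mem_Fs {s : Finset ℕ} {i : Fin n} : i ∈ Fs n s ↔ i.1 ∈ s := by simp [Fs]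

lemma card_Fs {s : Finset ℕ} (hs : ∀ x ∈ s, x < n) : (Fs n s).card = s.card := by
  have : (Fs n s).map Fin.valEmbedding = s := by
    ext x
    simp only [Finset.mem_map, mem_Fs, Fin.valEmbedding_apply]
    exact ⟨by rintro ⟨i, hi, rfl⟩; exact hi, fun h => ⟨⟨x, hs x h⟩, h, rfl⟩⟩
  rw [← this, Finset.card_map, this]

set_option maxHeartbeats 2000000 in
/-- If some ideal with the same radical as the edge ideal has depth at least the size of every
independent set, then the lexsegment is in the list `Good`. -/
theorem good_of_depth {a b c d : ℕ} (hab : a < b) (hbn : b < n) (hcd : c < d) (hdn : d < n)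
    (hac : a ≤ c) (hbd : a = c → b ≤ d) {J : Ideal (Loc K n)}
    (hJ : J.radical = Ideal.radical (Ideal.map (algebraMap (MvPolynomial (Fin n) K) (Loc K n))
      (SR K (ES (Ed n a b c d))))) {k : ℕ} (hd : DepthGE k J)
    (hk : ∀ F : Finset (Fin n), (∀ i ∈ F, ∀ j ∈ F, ¬ Ed n a b c d i j) → F.card ≤ k) :
    Good n a b c d := by
  have hind : ∀ s : Finset ℕ, (∀ x ∈ s, x < n) → (∀ i ∈ s, ∀ j ∈ s,
      ¬ (i < j ∧ (a < i ∨ a = i ∧ b ≤ j) ∧ (i < c ∨ i = c ∧ j ≤ d))) → s.card ≤ k := by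
    intro s hs h
    rw [← card_Fs hs]
    exact hk _ fun i hi j hj => h _ (mem_Fs.1 hi) _ (mem_Fs.1 hj)
  have hfac : ∀ s : Finset ℕ, (∀ x ∈ s, x < n) → (∀ i ∈ s, ∀ j ∈ s,
      ¬ (i < j ∧ (a < i ∨ a = i ∧ b ≤ j) ∧ (i < c ∨ i = c ∧ j ≤ d))) →
      (∀ i < n, i ∉ s → ∃ j ∈ s, (i < j ∧ (a < i ∨ a = i ∧ b ≤ j) ∧ (i < c ∨ i = c ∧ j ≤ d)) ∨
        (j < i ∧ (a < j ∨ a = j ∧ b ≤ i) ∧ (j < c ∨ j = c ∧ i ≤ d))) → s.card = k := by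
    intro s hs h h'
    refine le_antisymm (hind s hs h) ?_
    rw [← card_Fs hs]
    refine depth_le_facet Ed_ne hJ hd (fun i hi j hj => h _ (mem_Fs.1 hi) _ (mem_Fs.1 hj))
      fun i hi => ?_
    obtain ⟨j, hj, hij⟩ := h' i.1 i.2 (fun h => hi (mem_Fs.2 h))
    exact ⟨⟨j, hs j hj⟩, mem_Fs.2 hj, hij⟩
  rcases hac.eq_or_lt with rfl | hac
  · have hbd := hbd rfl
    have h1 := hfac (Finset.range n \ Finset.Icc b d)
      (fun x hx => by simp at hx; omega)
      (fun i hi j hj => by simp at hi hj; omega)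
      (fun i hi hi' => ⟨a, by simp; omega, by simp at hi'; omega⟩)
    have h2 := hfac (Finset.range n \ {a}) (fun x hx => by simp at hx; omega)
      (fun i hi j hj => by simp at hi hj; omega)
      (fun i hi hi' => ⟨b, by simp; omega, by simp at hi'; omega⟩)
    rw [Finset.card_sdiff_of_subset (fun x hx => by simp at hx ⊢; omega)] at h1 h2
    simp at h1 h2
    exact Or.inl ⟨rfl, by omega⟩
  -- the independent set of the vertices beyond `c`
  have hlast := hind (Finset.range a ∪ Finset.Ioo c n) (fun x hx => by simp at hx; omega)
      (fun i hi j hj => by simp at hi hj; omega)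
  rw [Finset.card_union_of_disjoint (by
    rw [Finset.disjoint_left]; intro x hx hx'; simp at hx hx'; omega)] at hlast
  simp only [Finset.card_range, Nat.card_Ioo] at hlast
  by_cases hb : b = a + 1 ∨ b < c
  · have hka : k = a + 1 := by
      rcases hb with rfl | hb
      · have h1 := hfac (Finset.range (a + 1)) (fun x hx => by simp at hx; omega)
          (fun i hi j hj => by simp at hi hj; omega)
          (fun i hi hi' => ⟨a, by simp, by simp at hi'; omega⟩)
        simpa using h1.symm
      · have h1 := hfac (insert (c - 1) (Finset.range a)) (fun x hx => by simp at hx; omega)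
          (fun i hi j hj => by simp at hi hj; omega)
          (fun i hi hi' => ⟨c - 1, by simp, by simp at hi'; omega⟩)
        rw [Finset.card_insert_of_notMem (by simp; omega)] at h1
        simpa using h1.symm
    have hb1 : b = a + 1 := by
      by_contra hne
      have h1 := hind (Finset.range (a + 2)) (fun x hx => by simp at hx; omega)
        (fun i hi j hj => by simp at hi hj; omega)
      rw [Finset.card_range] at h1
      omega
    exact Or.inr (Or.inl ⟨hb1, hac, by omega, by omega⟩)
  · push Not at hb
    have hlast' := hfac (Finset.range a ∪ Finset.Ioo c n) (fun x hx => by simp at hx; omega)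
      (fun i hi j hj => by simp at hi hj; omega)
      (fun i hi hi' => by
        simp at hi'
        by_cases hic : i = c
        · exact ⟨d, by simp; omega, by omega⟩
        · exact ⟨n - 1, by simp; omega, by omega⟩)
    rw [Finset.card_union_of_disjoint (by
      rw [Finset.disjoint_left]; intro x hx hx'; simp at hx hx'; omega)] at hlast'
    simp only [Finset.card_range, Nat.card_Ioo] at hlast'
    have hcon : ∀ w, a ≤ w → w + 1 < n → (∀ i j : ℕ, j < n → a ≤ i → i ≤ w → w < j →
        (i < j ∧ (a < i ∨ a = i ∧ b ≤ j) ∧ (i < c ∨ i = c ∧ j ≤ d))) →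
        (∀ i j : ℕ, a < i → i < j → j + 1 < n →
        (i < j ∧ (a < i ∨ a = i ∧ b ≤ j) ∧ (i < c ∨ i = c ∧ j ≤ d))) → k ≤ a + 1 :=
      fun w h1 h2 h3 h4 => connectivity Ed_ne hJ hd h1 h2 (fun i j => h3 i j j.2)
        (fun i j => h4 i j)
    by_cases hc : c = a + 1
    · subst hc
      have h1 := hfac (Finset.range (a + 2) ∪ Finset.Ioo d b) (fun x hx => by simp at hx; omega)
        (fun i hi j hj => by simp at hi hj; omega)
        (fun i hi hi' => by
          simp at hi'
          by_cases hid : i ≤ d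
          · exact ⟨a + 1, by simp, by omega⟩
          · exact ⟨a, by simp, by omega⟩)
      rw [Finset.card_union_of_disjoint (by
        rw [Finset.disjoint_left]; intro x hx hx'; simp at hx hx'; omega)] at h1
      simp only [Finset.card_range, Nat.card_Ioo] at h1
      by_cases hE : b + 2 = n ∧ d + 1 = n
      · have := hcon (n - 3) (by omega) (by omega) (by omega) (by omega)
        omega
      · unfold Good
        omega
    · have h1 := hfac (Finset.range (a + 2)) (fun x hx => by simp at hx; omega)
        (fun i hi j hj => by simp at hi hj; omega)
        (fun i hi hi' => ⟨a + 1, by simp, by simp at hi'; omega⟩)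
      simp only [Finset.card_range] at h1
      by_cases hE : b + 2 = n ∧ d + 1 = n
      · have := hcon (n - 3) (by omega) (by omega) (by omega) (by omega)
        omega
      by_cases hD : b + 3 = n ∧ d + 2 = n
      · have := hcon (n - 4) (by omega) (by omega) (by omega) (by omega)
        omega
      by_cases hX : b = c ∧ d + 1 = n
      · have h2 := hfac (insert c (Finset.range a)) (fun x hx => by simp at hx; omega)
          (fun i hi j hj => by simp at hi hj; omega)
          (fun i hi hi' => ⟨c, by simp, by simp at hi'; omega⟩)
        rw [Finset.card_insert_of_notMem (by simp; omega)] at h2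
        simp only [Finset.card_range] at h2
        omega
      · unfold Good
        omega

end Classification

/-! ### Numbered variables, and equations up to radical -/

section Edges

variable {K : Type} [Field K] {n : ℕ}

/-- The variables of the polynomial ring, numbered by natural numbers from `0`; it is `0` beyond
the last variable. -/
noncomputable def xx (K : Type) [Field K] (n i : ℕ) : MvPolynomial (Fin n) K :=
  if h : i < n then X ⟨i, h⟩ else 0

lemma xx_val (i : Fin n) : xx K n i.1 = X i := by simp [xx]

lemma xx_mul_mem {a b c d i j : ℕ} (hj : j < n)
    (h : i < j ∧ (a < i ∨ a = i ∧ b ≤ j) ∧ (i < c ∨ i = c ∧ j ≤ d)) :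
    xx K n i * xx K n j ∈ SR K (ES (Ed n a b c d)) := by
  have hi : i < n := by omega
  have := (SR_ES_le Ed_ne).1 (le_refl (SR K (ES (Ed n a b c d)))) ⟨i, hi⟩ ⟨j, hj⟩ h
  simpa [xx, hi, hj] using this

lemma SR_Ed_le {a b c d : ℕ} {P : Ideal (MvPolynomial (Fin n) K)}
    (h : ∀ i j : ℕ, j < n → i < j → (a < i ∨ a = i ∧ b ≤ j) → (i < c ∨ i = c ∧ j ≤ d) →
      xx K n i * xx K n j ∈ P) : SR K (ES (Ed n a b c d)) ≤ P := by
  rw [SR_ES_le Ed_ne]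
  intro i j hij
  have := h i j j.2 hij.1 hij.2.1 hij.2.2
  rwa [xx_val, xx_val] at this

lemma lexSegIdeal_eq {u v : ℕ × ℕ} (hu : validPair n u) (hv : validPair n v) :
    lexSegIdeal K n u v = SR K (ES (Ed n (u.1 - 1) (u.2 - 1) (v.1 - 1) (v.2 - 1))) := by
  obtain ⟨hu1, hu2, hu3⟩ := hu
  obtain ⟨hv1, hv2, hv3⟩ := hv
  refine le_antisymm ?_ ?_
  · rw [lexSegIdeal, Ideal.span_le]
    rintro _ ⟨⟨i, j⟩, ⟨⟨h1, h2, h3⟩, h4, h5⟩, rfl⟩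
    simp only [lexGE] at h1 h2 h3 h4 h5
    exact xx_mul_mem (i := i - 1) (j := j - 1) (by omega) (by omega)
  · refine SR_Ed_le fun i j hj hij h1 h2 => ?_
    refine Ideal.subset_span ⟨(i + 1, j + 1), ⟨⟨?_, ?_, ?_⟩, ?_, ?_⟩, rfl⟩ <;>
      simp only [lexGE] <;> omega

/-- A map on the vertices whose fibres are cliques bounds the size of independent sets. -/
lemma card_le_of_color {G : Fin n → Fin n → Prop} {m : ℕ} (κ : Fin n → ℕ) (hκ : ∀ i, κ i < m)
    (h : ∀ i j, i < j → κ i = κ j → G i j) {F : Finset (Fin n)}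
    (hF : ∀ i ∈ F, ∀ j ∈ F, ¬ G i j) : F.card ≤ m := by
  rw [← Finset.card_range m]
  refine Finset.card_le_card_of_injOn κ (fun i _ => by simpa using hκ i) fun i hi j hj hij => ?_
  rcases lt_trichotomy i j with h1 | h1 | h1
  · exact absurd (h i j h1 hij) (hF i hi j hj)
  · exact h1
  · exact absurd (h j i h1 hij.symm) (hF j hj i hi)

lemma le_height_of_card {G : Fin n → Fin n → Prop} (hG : ∀ i j, G i j → i ≠ j) {d h : ℕ}
    (hd : d + h = n) (hF : ∀ F : Finset (Fin n), (∀ i ∈ F, ∀ j ∈ F, ¬ G i j) → F.card ≤ d)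
    {P : Ideal (MvPolynomial (Fin n) K)} [hP : P.IsPrime] (hI : SR K (ES G) ≤ P) :
    (h : ℕ∞) ≤ P.height := by
  classical
  have h1 := card_le_height (P := P)
    (T := Finset.univ.filter fun i => (X i : MvPolynomial (Fin n) K) ∈ P) (by simp)
  have h2 := hF (Finset.univ.filter fun i => ¬ (X i : MvPolynomial (Fin n) K) ∈ P) (by
    intro i hi j hj hij
    simp only [Finset.mem_filter, Finset.mem_univ, true_and] at hi hj
    exact (hP.mem_or_mem ((SR_ES_le hG).1 hI i j hij)).elim hi hj)
  have h3 := Finset.card_filter_add_card_filter_not (s := (Finset.univ : Finset (Fin n)))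
    (fun i => (X i : MvPolynomial (Fin n) K) ∈ P)
  rw [Finset.card_univ, Fintype.card_fin] at h3
  exact le_trans (by exact_mod_cast (by omega)) h1

end Edges

section ArithmeticalRank

variable {R : Type} [CommRing R]

/-- The set `E` has the same zero locus as `h` elements `f_0, …, f_{h-1}` of the ideal it
generates, and `f_i ∈ (y_0, …, y_i)` for `i < k`. -/
def Tri (E : Set R) (y : ℕ → R) (h k : ℕ) : Prop :=
  ∃ f : ℕ → R, (∀ i < h, f i ∈ Ideal.span E) ∧ (∀ i < k, f i ∈ Ideal.span (y '' Set.Iic i)) ∧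
    ∀ P : Ideal R, P.IsPrime → (∀ i < h, f i ∈ P) → E ⊆ P

lemma Tri.mono {E : Set R} {y y' : ℕ → R} {h k k' : ℕ} (H : Tri E y h k) (hk : k' ≤ k)
    (hy : ∀ i < k', y i = y' i) : Tri E y' h k' := by
  obtain ⟨f, h1, h2, h3⟩ := H
  refine ⟨f, h1, fun i hi => ?_, h3⟩
  have e : y '' Set.Iic i = y' '' Set.Iic i :=
    Set.image_congr fun j hj => hy j (lt_of_le_of_lt hj hi)
  exact e ▸ h2 i (by omega)

/-- Attaching a vertex `z` with neighbours `y_0, …, y_k` costs one more equation: replace the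
`f_i` by `z y_0, f_0 + z y_1, …, f_{k-1} + z y_k, f_k, …, f_{h-1}`. At a prime containing these
but not `z`, the triangular shape yields `y_0, …, y_k` one after the other. -/
lemma Tri.attach {E : Set R} {y : ℕ → R} {h k : ℕ} (H : Tri E y h k) (hk : k ≤ h) (z : R) :
    Tri (E ∪ (fun i => z * y i) '' Set.Iic k) y (h + 1) (k + 1) := by
  obtain ⟨f, h1, h2, h3⟩ := H
  have hzy : ∀ i ≤ k, z * y i ∈ Ideal.span (E ∪ (fun i => z * y i) '' Set.Iic k) :=
    fun i hi => Ideal.subset_span (Or.inr ⟨i, hi, rfl⟩)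
  let g : ℕ → R := fun i => (if i = 0 then 0 else f (i - 1)) + if i ≤ k then z * y i else 0
  have hg0 : g 0 = z * y 0 := by simp [g]
  have hgs : ∀ i, g (i + 1) = f i + if i + 1 ≤ k then z * y (i + 1) else 0 := by
    intro i; simp [g]
  refine ⟨g, ?_, ?_, ?_⟩
  · rintro (_ | i) hi
    · rw [hg0]; exact hzy 0 (Nat.zero_le _)
    · rw [hgs]
      refine add_mem (Ideal.span_mono Set.subset_union_left (h1 i (by omega))) ?_
      split_ifs with hik
      exacts [hzy _ hik, zero_mem _]
  · rintro (_ | i) hi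
    · rw [hg0]; exact Ideal.mul_mem_left _ _ (Ideal.subset_span ⟨0, by simp, rfl⟩)
    · rw [hgs]
      refine add_mem (Ideal.span_mono (Set.image_mono (Set.Iic_subset_Iic.2 (by omega)))
        (h2 i (by omega))) ?_
      split_ifs with hik
      exacts [Ideal.mul_mem_left _ _ (Ideal.subset_span ⟨i + 1, by simp, rfl⟩), zero_mem _]
  · intro P hP hgP
    by_cases hz : z ∈ P
    · refine Set.union_subset (h3 P hP fun i hi => ?_) ?_
      · have := hgP (i + 1) (by omega)
        rw [hgs] at this
        refine (P.add_mem_iff_left ?_).1 this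
        split_ifs
        exacts [P.mul_mem_right _ hz, zero_mem _]
      · rintro _ ⟨i, -, rfl⟩
        exact P.mul_mem_right _ hz
    · have hy : ∀ i ≤ k, y i ∈ P := by
        intro i
        induction i using Nat.strong_induction_on with
        | _ i ih =>
          intro hi
          have := hgP i (by omega)
          obtain _ | i := i
          · rw [hg0] at this
            exact (hP.mem_or_mem this).resolve_left hz
          · rw [hgs, if_pos hi, P.add_mem_iff_right] at this
            · exact (hP.mem_or_mem this).resolve_left hz
            · refine (Ideal.span_le.2 ?_ : Ideal.span (y '' Set.Iic i) ≤ P) (h2 i (by omega))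
              rintro _ ⟨j, hj, rfl⟩
              rw [Set.mem_Iic] at hj
              exact ih j (by omega) (by omega)
      refine Set.union_subset (h3 P hP fun i hi => ?_) ?_
      · have := hgP (i + 1) (by omega)
        rw [hgs] at this
        refine (P.add_mem_iff_left ?_).1 this
        split_ifs with hik
        exacts [P.mul_mem_left _ (hy _ hik), zero_mem _]
      · rintro _ ⟨i, hi, rfl⟩
        exact P.mul_mem_left _ (hy _ hi)

/-- The edges of the complete graph on `y_0, …, y_m`. -/
def Compl (y : ℕ → R) (m : ℕ) : Set R := {p | ∃ i j, i < j ∧ j ≤ m ∧ p = y i * y j}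

lemma tri_empty (y : ℕ → R) : Tri (∅ : Set R) y 0 0 :=
  ⟨0, by simp, by simp, by simp⟩

lemma tri_compl (y : ℕ → R) : ∀ m, Tri (Compl y m) y m m := by
  intro m
  induction m with
  | zero =>
    convert tri_empty y
    ext p
    simp only [Compl, Set.mem_ofPred_eq, Set.mem_empty_iff_false, iff_false]
    rintro ⟨i, j, h1, h2, -⟩
    omega
  | succ m ih =>
    convert ih.attach le_rfl (y (m + 1)) using 1
    ext p
    simp only [Compl, Set.mem_ofPred_eq, Set.mem_union, Set.mem_image, Set.mem_Iic]
    constructor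
    · rintro ⟨i, j, hij, hj, rfl⟩
      rcases hj.lt_or_eq with hj | rfl
      · exact Or.inl ⟨i, j, hij, by omega, rfl⟩
      · exact Or.inr ⟨i, by omega, mul_comm _ _⟩
    · rintro (⟨i, j, hij, hj, rfl⟩ | ⟨i, hi, rfl⟩)
      · exact ⟨i, j, hij, by omega, rfl⟩
      · exact ⟨i, m + 1, by omega, le_rfl, mul_comm _ _⟩

lemma Tri.ara_le {E : Set R} {y : ℕ → R} {h k : ℕ} (H : Tri E y h k) {I : Ideal R}
    (hE : Ideal.span E = I) : ara I ≤ h := by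
  obtain ⟨f, h1, -, h3⟩ := H
  subst hE
  refine Nat.sInf_le ⟨fun i => f i, fun i => h1 i i.2, le_antisymm ?_ ?_⟩
  · refine Ideal.radical_mono (Ideal.span_le.2 ?_)
    rintro _ ⟨i, rfl⟩
    exact h1 i i.2
  · rw [Ideal.radical_le_radical_iff, Ideal.radical_eq_sInf]
    refine le_sInf fun P ⟨hP, hPp⟩ => Ideal.span_le.2 (h3 P hPp fun i hi => ?_)
    exact hP (Ideal.subset_span ⟨⟨i, hi⟩, rfl⟩)

end ArithmeticalRank

/-! ### Defining equations of the surviving lexsegments -/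

section Equations

variable {K : Type} [Field K] {n : ℕ}

lemma ara_edge {a b : ℕ} (hab : a < b) (hb : b < n) : ara (SR K (ES (Ed n a b a b))) ≤ 1 := by
  refine ((tri_empty (fun _ => xx K n a)).attach le_rfl (xx K n b)).ara_le (le_antisymm ?_ ?_)
  · refine Ideal.span_le.2 (Set.union_subset (Set.empty_subset _) ?_)
    rintro _ ⟨i, -, rfl⟩
    show xx K n b * xx K n a ∈ _
    rw [mul_comm]
    exact xx_mul_mem hb (by omega)
  · refine SR_Ed_le fun i j hj hij h1 h2 => Ideal.subset_span (Or.inr ⟨0, by simp, ?_⟩)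
    obtain rfl : i = a := by omega
    obtain rfl : j = b := by omega
    exact mul_comm _ _

lemma ara_complete {a : ℕ} (ha : a + 2 < n) :
    ara (SR K (ES (Ed n a (a + 1) (n - 2) (n - 1)))) ≤ n - a - 1 := by
  refine (tri_compl (fun i => xx K n (a + i)) (n - a - 1)).ara_le (le_antisymm ?_ ?_)
  · rw [Ideal.span_le]
    rintro _ ⟨i, j, hij, hj, rfl⟩
    exact xx_mul_mem (by omega) (by omega)
  · refine SR_Ed_le fun i j hj hij h1 h2 => Ideal.subset_span
      ⟨i - a, j - a, by omega, by omega, ?_⟩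
    show _ = xx K n (a + (i - a)) * xx K n (a + (j - a))
    rw [Nat.add_sub_cancel' (by omega), Nat.add_sub_cancel' (by omega)]

lemma ara_two {a : ℕ} (ha : a + 5 ≤ n) :
    ara (SR K (ES (Ed n a (n - 1) (a + 1) (a + 2)))) ≤ 2 := by
  refine ((((tri_empty (fun _ => xx K n (a + 1))).attach le_rfl (xx K n (a + 2))).mono
    (k' := 0) (y' := fun _ => xx K n a) (by omega) (by omega)).attach (by omega)
    (xx K n (n - 1))).ara_le (le_antisymm ?_ ?_)
  · rw [Ideal.span_le, Set.empty_union]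
    rintro _ (⟨i, -, rfl⟩ | ⟨i, -, rfl⟩)
    · show xx K n (a + 2) * xx K n (a + 1) ∈ _
      rw [mul_comm]
      exact xx_mul_mem (by omega) (by omega)
    · show xx K n (n - 1) * xx K n a ∈ _
      rw [mul_comm]
      exact xx_mul_mem (by omega) (by omega)
  · refine SR_Ed_le fun i j hj hij h1 h2 => Ideal.subset_span ?_
    by_cases hi : i = a
    · obtain rfl : j = n - 1 := by omega
      exact Or.inr ⟨0, by simp, by rw [hi]; exact mul_comm _ _⟩
    · obtain rfl : i = a + 1 := by omega
      obtain rfl : j = a + 2 := by omega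
      exact Or.inl (Or.inr ⟨0, by simp, mul_comm _ _⟩)

/-- The vertices `a + 1, a + 2, …` in order, except that the one at position `p` is
replaced by `a`. -/
noncomputable def yy (K : Type) [Field K] (n a p i : ℕ) : MvPolynomial (Fin n) K :=
  xx K n (if i = p then a else if i < p then a + 1 + i else a + i)

/-- `a + 1, …, n - 2` span a complete graph, and `n - 1` is joined to `a` and to all of
`a + 1, …, n - 3`. -/
lemma ara_B {a : ℕ} (ha : a + 4 ≤ n) :
    ara (SR K (ES (Ed n a (n - 1) (n - 3) (n - 1)))) ≤ n - a - 2 := by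
  have H := (((tri_compl (fun i => xx K n (a + 1 + i)) (n - a - 3)).mono
    (k' := n - a - 3) (y' := yy K n a (n - a - 3)) le_rfl
    (fun i hi => by simp only [yy]; congr 1; split_ifs <;> omega)).attach
    le_rfl (xx K n (n - 1)))
  rw [show n - a - 2 = n - a - 3 + 1 by omega]
  refine H.ara_le (le_antisymm ?_ ?_)
  · rw [Ideal.span_le]
    rintro _ (⟨i, j, hij, hj, rfl⟩ | ⟨i, hi, rfl⟩)
    · exact xx_mul_mem (by omega) (by omega)
    · rw [Set.mem_Iic] at hi
      dsimp only
      rw [mul_comm]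
      exact xx_mul_mem (by omega) (by split_ifs <;> omega)
  · refine SR_Ed_le fun i j hj hij h1 h2 => Ideal.subset_span ?_
    by_cases hjn : j = n - 1
    · by_cases hi : i = a
      · refine Or.inr ⟨n - a - 3, by simp, ?_⟩
        subst hi hjn
        simp [yy, mul_comm]
      · refine Or.inr ⟨i - a - 1, by rw [Set.mem_Iic]; omega, ?_⟩
        have e : (if i - a - 1 = n - a - 3 then a else if i - a - 1 < n - a - 3 then
          a + 1 + (i - a - 1) else a + (i - a - 1)) = i := by split_ifs <;> omega
        simp only [yy, e, hjn, mul_comm]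
    · refine Or.inl ⟨i - a - 1, j - a - 1, by omega, by omega, ?_⟩
      have e1 : a + 1 + (i - a - 1) = i := by omega
      have e2 : a + 1 + (j - a - 1) = j := by omega
      simp only [e1, e2]

/-- `a + 1, …, n - 2` span a complete graph, and `n - 1` is joined to `a` and to all of
`a + 1, …, n - 4`. -/
lemma ara_C {a : ℕ} (ha : a + 4 ≤ n) :
    ara (SR K (ES (Ed n a (n - 1) (n - 3) (n - 2)))) ≤ n - a - 2 := by
  have H := (((tri_compl (fun i => xx K n (a + 1 + i)) (n - a - 3)).mono
    (k' := n - a - 4) (y' := yy K n a (n - a - 4)) (by omega)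
    (fun i hi => by simp only [yy]; congr 1; split_ifs <;> omega)).attach
    (by omega) (xx K n (n - 1)))
  rw [show n - a - 2 = n - a - 3 + 1 by omega]
  refine H.ara_le (le_antisymm ?_ ?_)
  · rw [Ideal.span_le]
    rintro _ (⟨i, j, hij, hj, rfl⟩ | ⟨i, hi, rfl⟩)
    · exact xx_mul_mem (by omega) (by omega)
    · rw [Set.mem_Iic] at hi
      dsimp only
      rw [mul_comm]
      exact xx_mul_mem (by omega) (by split_ifs <;> omega)
  · refine SR_Ed_le fun i j hj hij h1 h2 => Ideal.subset_span ?_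
    by_cases hjn : j = n - 1
    · by_cases hi : i = a
      · refine Or.inr ⟨n - a - 4, by simp, ?_⟩
        subst hi hjn
        simp [yy, mul_comm]
      · refine Or.inr ⟨i - a - 1, by rw [Set.mem_Iic]; omega, ?_⟩
        have e : (if i - a - 1 = n - a - 4 then a else if i - a - 1 < n - a - 4 then
          a + 1 + (i - a - 1) else a + (i - a - 1)) = i := by split_ifs <;> omega
        simp only [yy, e, hjn, mul_comm]
    · refine Or.inl ⟨i - a - 1, j - a - 1, by omega, by omega, ?_⟩
      have e1 : a + 1 + (i - a - 1) = i := by omega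
      have e2 : a + 1 + (j - a - 1) = j := by omega
      simp only [e1, e2]

/-- `a + 1, …, n - 3` span a complete graph, `n - 1` is joined to `a` and to all of
`a + 1, …, n - 4`, and then `n - 2` is joined to `a` and to all of `a + 1, …, n - 3`. -/
lemma ara_A {a : ℕ} (ha : a + 4 ≤ n) :
    ara (SR K (ES (Ed n a (n - 2) (n - 3) (n - 2)))) ≤ n - a - 2 := by
  have H := ((((tri_compl (fun i => xx K n (a + 1 + i)) (n - a - 4)).mono
    (k' := n - a - 4) (y' := yy K n a (n - a - 4)) (by omega)
    (fun i hi => by simp only [yy]; congr 1; split_ifs <;> omega)).attach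
    (by omega) (xx K n (n - 1))).attach (by omega) (xx K n (n - 2)))
  rw [show n - a - 2 = n - a - 4 + 1 + 1 by omega]
  refine H.ara_le (le_antisymm ?_ ?_)
  · rw [Ideal.span_le]
    rintro _ ((⟨i, j, hij, hj, rfl⟩ | ⟨i, hi, rfl⟩) | ⟨i, hi, rfl⟩)
    · exact xx_mul_mem (by omega) (by omega)
    · rw [Set.mem_Iic] at hi
      dsimp only
      rw [mul_comm]
      exact xx_mul_mem (by omega) (by split_ifs <;> omega)
    · rw [Set.mem_Iic] at hi
      dsimp only
      rw [mul_comm]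
      exact xx_mul_mem (by omega) (by split_ifs <;> omega)
  · refine SR_Ed_le fun i j hj hij h1 h2 => Ideal.subset_span ?_
    have e : i ≠ a → (if i - a - 1 = n - a - 4 then a else if i - a - 1 < n - a - 4 then
      a + 1 + (i - a - 1) else a + (i - a - 1)) = i ∨ i = n - 3 := by
      intro h; split_ifs <;> omega
    by_cases hjn : j = n - 1
    · by_cases hi : i = a
      · refine Or.inl (Or.inr ⟨n - a - 4, by simp, ?_⟩)
        subst hi hjn
        simp [yy, mul_comm]
      · refine Or.inl (Or.inr ⟨i - a - 1, by rw [Set.mem_Iic]; omega, ?_⟩)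
        have e := (e hi).resolve_right (by omega)
        simp only [yy, e, hjn, mul_comm]
    by_cases hjn2 : j = n - 2
    · by_cases hi : i = a
      · refine Or.inr ⟨n - a - 4, by simp, ?_⟩
        subst hi hjn2
        simp [yy, mul_comm]
      by_cases hi3 : i = n - 3
      · refine Or.inr ⟨n - a - 3, by rw [Set.mem_Iic]; omega, ?_⟩
        have e : (if n - a - 3 = n - a - 4 then a else if n - a - 3 < n - a - 4 then
          a + 1 + (n - a - 3) else a + (n - a - 3)) = i := by split_ifs <;> omega
        simp only [yy, e, hjn2, mul_comm]
      · refine Or.inr ⟨i - a - 1, by rw [Set.mem_Iic]; omega, ?_⟩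
        have e := (e hi).resolve_right (by omega)
        simp only [yy, e, hjn2, mul_comm]
    · refine Or.inl (Or.inl ⟨i - a - 1, j - a - 1, by omega, by omega, ?_⟩)
      have e1 : a + 1 + (i - a - 1) = i := by omega
      have e2 : a + 1 + (j - a - 1) = j := by omega
      simp only [e1, e2]

end Equations

/-! ### Regular sequences modulo an edge ideal -/

section RegularSequences

variable {K : Type} [Field K] {n : ℕ}

lemma regMod_SR' {E : Set (Finset (Fin n))} {U : Finset (Fin n)} {i : Fin n} (hi : i ∈ U)
    (h : ∀ e ∈ E, i ∈ e → ∃ j ∈ e, j ∈ U ∧ j ≠ i) : RegMod (SR K E) (∑ i ∈ U, X i) := by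
  refine regMod_SR fun T hT => ?_
  by_cases hUT : ∃ j ∈ U, j ∉ T
  · exact ⟨T, subset_rfl, hT, hUT⟩
  · push Not at hUT
    refine ⟨T \ {i}, Set.sdiff_subset, fun e he => ?_, i, hi, by simp⟩
    by_cases hie : i ∈ e
    · obtain ⟨j, hj, hjU, hji⟩ := h e he hie
      exact ⟨j, hj, hUT j hjU, hji⟩
    · obtain ⟨j, hj, hjT⟩ := hT e he
      exact ⟨j, hj, hjT, by rintro rfl; exact hie hj⟩

lemma SR_le_of_cover {E E' : Set (Finset (Fin n))}
    (h : ∀ T : Set (Fin n), (∀ e ∈ E', ∃ i ∈ e, i ∈ T) → ∀ e ∈ E, ∃ i ∈ e, i ∈ T) :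
    SR K E ≤ SR K E' := by
  intro f hf
  rw [mem_SR_iff] at hf ⊢
  exact fun T hT => hf T (h T hT)

/-- If `I₁ ∩ I₂ = I` and `x` is regular modulo `I₁ + I₂`, then
`(I₁ + (x)) ∩ (I₂ + (x)) = I + (x)`, so an element regular modulo both `I₁ + (x)` and `I₂ + (x)`
is regular modulo `I + (x)`. -/
lemma regMod_glue {R : Type} [CommRing R] {I I₁ I₂ : Ideal R} {x y : R} (h1 : I ≤ I₁)
    (h2 : I ≤ I₂) (h : I₁ ⊓ I₂ ≤ I) (hx : RegMod (I₁ ⊔ I₂) x)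
    (hy1 : RegMod (I₁ ⊔ Ideal.span {x}) y) (hy2 : RegMod (I₂ ⊔ Ideal.span {x}) y) :
    RegMod (I ⊔ Ideal.span {x}) y := by
  intro r hr
  have hr1 := hy1 r (sup_le_sup_right h1 _ hr)
  have hr2 := hy2 r (sup_le_sup_right h2 _ hr)
  obtain ⟨u₁, hu₁, p₁, hp₁, e1⟩ := Submodule.mem_sup.1 hr1
  obtain ⟨u₂, hu₂, p₂, hp₂, e2⟩ := Submodule.mem_sup.1 hr2
  obtain ⟨s, rfl⟩ := Ideal.mem_span_singleton'.1 hp₁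
  obtain ⟨t, rfl⟩ := Ideal.mem_span_singleton'.1 hp₂
  have hts : t - s ∈ I₁ ⊔ I₂ := by
    refine hx _ ?_
    have : x * (t - s) = u₁ + -u₂ := by linear_combination e2 - e1
    rw [this]
    exact Submodule.add_mem_sup hu₁ (neg_mem hu₂)
  obtain ⟨w₁, hw₁, w₂, hw₂, hw⟩ := Submodule.mem_sup.1 hts
  have hI : u₁ - w₁ * x ∈ I := by
    refine h ⟨sub_mem hu₁ (I₁.mul_mem_right _ hw₁), ?_⟩
    have : u₁ - w₁ * x = u₂ + w₂ * x := by linear_combination e1 - e2 - x * hw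
    rw [this]
    exact add_mem hu₂ (I₂.mul_mem_right _ hw₂)
  have : r = (u₁ - w₁ * x) + (s + w₁) * x := by linear_combination -e1
  rw [this]
  exact Submodule.add_mem_sup hI (Ideal.mul_mem_left _ _ (Ideal.mem_span_singleton_self x))

/-- Let `x_α` not occur in the generators. Modulo `∑_{i ∈ U} x_i`, the variable `x_α` is
minus the sum of the others, so `x_α + x_β` is regular as soon as
`∑_{i ∈ U, i ≠ α, β} x_i` is. -/
lemma regMod_pair {E : Set (Finset (Fin n))} {U : Finset (Fin n)} {α β : Fin n}
    (hα : α ∈ U) (hβ : β ∈ U) (hαβ : α ≠ β) (hE : ∀ e ∈ E, α ∉ e)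
    (h : RegMod (SR K E) (∑ i ∈ (U.erase α).erase β, X i)) :
    RegMod (SR K E ⊔ Ideal.span {∑ i ∈ U, X i}) (X α + X β) := by
  classical
  let g : Fin n → MvPolynomial (Fin n) K :=
    fun i => if i = α then -∑ i ∈ U.erase α, X i else X i
  let φ := aeval (R := K) g
  have hgα : φ (X α) = -∑ i ∈ U.erase α, X i := by simp [φ, g]
  have hg : ∀ i, i ≠ α → φ (X i) = X i := by intro i hi; simp [φ, g, hi]
  have hsum : ∑ i ∈ U, (X i : MvPolynomial (Fin n) K) = X α + ∑ i ∈ U.erase α, X i :=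
    (Finset.add_sum_erase U _ hα).symm
  have hφU : φ (∑ i ∈ U, X i) = 0 := by
    rw [hsum, map_add, map_sum, hgα, Finset.sum_congr rfl
      fun i hi => hg i (Finset.ne_of_mem_erase hi), neg_add_cancel]
  have hφE : SR K E ≤ (SR K E).comap φ := by
    refine Ideal.span_le.2 ?_
    rintro _ ⟨e, he, rfl⟩
    refine Ideal.mem_comap.2 ?_
    rw [map_prod, Finset.prod_congr rfl
      fun i hi => hg i (by rintro rfl; exact hE e he hi)]
    exact Ideal.subset_span ⟨e, he, rfl⟩
  have hφ : SR K E ⊔ Ideal.span {∑ i ∈ U, X i} ≤ (SR K E).comap φ := by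
    refine sup_le hφE ?_
    rw [Ideal.span_singleton_le_iff_mem, Ideal.mem_comap, hφU]
    exact zero_mem _
  have hφr : ∀ r, r - φ r ∈ Ideal.span {∑ i ∈ U, (X i : MvPolynomial (Fin n) K)} := by
    intro r
    rw [← Ideal.Quotient.mk_eq_mk_iff_sub_mem]
    have : (Ideal.Quotient.mkₐ K (Ideal.span {∑ i ∈ U, (X i : MvPolynomial (Fin n) K)})) =
        (Ideal.Quotient.mkₐ K _).comp φ := by
      refine algHom_ext fun i => ?_
      rw [AlgHom.comp_apply]
      by_cases hi : i = α
      · rw [hi, hgα]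
        simp only [Ideal.Quotient.mkₐ_eq_mk]
        rw [Ideal.Quotient.mk_eq_mk_iff_sub_mem, sub_neg_eq_add, ← hsum]
        exact Ideal.mem_span_singleton_self _
      · rw [hg i hi]
    exact DFunLike.congr_fun this r
  intro r hr
  have h1 : φ ((X α + X β) * r) ∈ SR K E := hφ hr
  have h2 : φ (X α + X β) = -∑ i ∈ (U.erase α).erase β, X i := by
    rw [map_add, hgα, hg β hαβ.symm,
      ← Finset.add_sum_erase (U.erase α) _ (Finset.mem_erase.2 ⟨hαβ.symm, hβ⟩)]
    ring
  rw [map_mul, h2, neg_mul, neg_mem_iff] at h1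
  rw [← add_sub_cancel (φ r) r]
  exact Submodule.add_mem_sup (h _ h1) (hφr r)

/-- The generators saying that the vertices in `W` vanish. -/
def Sg (W : Set (Fin n)) : Set (Finset (Fin n)) := (fun i => {i}) '' W

variable {A : Fin n → Fin n → Prop}

lemma regMod_sum (hA : ∀ i j, A i j → i ≠ j) {W : Finset (Fin n)}
    (hW : ∀ i j, A i j → i ∉ W ∧ j ∉ W) {m : Fin n} (hm : m ∉ W) :
    RegMod (SR K (ES A ∪ Sg ↑W)) (∑ i ∈ Wᶜ, X i) := by
  refine regMod_SR' (i := m) (by simpa using hm) ?_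
  rintro e (⟨i, j, hij, rfl⟩ | ⟨i, hi, rfl⟩) hme
  · rw [Finset.mem_insert, Finset.mem_singleton] at hme
    rcases hme with rfl | rfl
    · exact ⟨j, by simp, by simpa using (hW _ _ hij).2, (hA _ _ hij).symm⟩
    · exact ⟨i, by simp, by simpa using (hW _ _ hij).1, hA _ _ hij⟩
  · rw [Finset.mem_singleton] at hme
    exact absurd (hme ▸ hi) hm

/-- The generators of the edge ideal together with the neighbours of `α`, for an edge `α β`:
the remaining edges avoid `α` and `β`. -/
def Nb (A : Fin n → Fin n → Prop) (W : Finset (Fin n)) (α β : Fin n) : Set (Finset (Fin n)) :=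
  ES (fun i j => A i j ∧ i ≠ α ∧ i ≠ β ∧ j ≠ α ∧ j ≠ β) ∪ Sg ({i | A α i} ∪ ↑W)

lemma cover_Nb {W : Finset (Fin n)} {α β : Fin n} {T : Set (Fin n)}
    (h1 : ∀ i j, A i j → i ≠ α → i ≠ β → j ≠ α → j ≠ β → i ∈ T ∨ j ∈ T)
    (h2 : ∀ i, A α i → i ∈ T) (h3 : ∀ i ∈ W, i ∈ T) : ∀ e ∈ Nb A W α β, ∃ i ∈ e, i ∈ T := by
  rintro e (⟨i, j, ⟨hij, h, h', h'', h'''⟩, rfl⟩ | ⟨i, hi | hi, rfl⟩)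
  · rcases h1 i j hij h h' h'' h''' with hi | hj
    exacts [⟨i, by simp, hi⟩, ⟨j, by simp, hj⟩]
  · exact ⟨i, by simp, h2 i hi⟩
  · exact ⟨i, by simp, h3 i hi⟩

lemma SR_le_Nb (hs : ∀ i j, A i j → A j i) {W : Finset (Fin n)} {α β : Fin n} (hαβ : A α β) :
    SR K (ES A ∪ Sg ↑W) ≤ SR K (Nb A W α β) := by
  refine SR_le_of_cover fun T hT => ?_
  have hN : ∀ i, A α i → i ∈ T := fun i hi => by
    simpa using hT {i} (Or.inr ⟨i, Or.inl hi, rfl⟩)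
  rintro e (⟨i, j, hij, rfl⟩ | ⟨i, hi, rfl⟩)
  · by_cases h1 : i = α
    · exact ⟨j, by simp, hN j (h1 ▸ hij)⟩
    by_cases h2 : j = α
    · exact ⟨i, by simp, hN i (h2 ▸ hs _ _ hij)⟩
    by_cases h3 : i = β
    · exact ⟨i, by simp, hN i (h3 ▸ hαβ)⟩
    by_cases h4 : j = β
    · exact ⟨j, by simp, hN j (h4 ▸ hαβ)⟩
    exact hT _ (Or.inl ⟨i, j, ⟨hij, h1, h3, h2, h4⟩, rfl⟩)
  · exact hT _ (Or.inr ⟨i, Or.inr hi, rfl⟩)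

lemma regMod_Nb (hA : ∀ i j, A i j → i ≠ j) {W : Finset (Fin n)}
    (hW : ∀ i j, A i j → i ∉ W ∧ j ∉ W) {α β m : Fin n} (hαβ : A α β) (hm : m ∉ W) (hmα : m ≠ α)
    (hmβ : m ≠ β) (hαm : ¬ A α m) :
    RegMod (SR K (Nb A W α β) ⊔ Ideal.span {∑ i ∈ Wᶜ, X i}) (X α + X β) := by
  refine regMod_pair (by simpa using (hW _ _ hαβ).1) (by simpa using (hW _ _ hαβ).2)
    (hA _ _ hαβ) ?_ (regMod_SR' (i := m) (by simp [hm, hmα, hmβ]) ?_)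
  · rintro e (⟨i, j, ⟨hij, h, h', h'', h'''⟩, rfl⟩ | ⟨i, hi | hi, rfl⟩) hα
    · simp [h.symm, h''.symm] at hα
    · rw [Finset.mem_singleton] at hα
      exact hA _ _ hi hα
    · rw [Finset.mem_singleton] at hα
      exact (hW _ _ hαβ).1 (hα ▸ hi)
  · rintro e (⟨i, j, ⟨hij, h, h', h'', h'''⟩, rfl⟩ | ⟨i, hi | hi, rfl⟩) hme
    · rw [Finset.mem_insert, Finset.mem_singleton] at hme
      rcases hme with rfl | rfl
      · exact ⟨j, by simp, by simp [(hW _ _ hij).2, h'', h'''], (hA _ _ hij).symm⟩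
      · exact ⟨i, by simp, by simp [(hW _ _ hij).1, h, h'], hA _ _ hij⟩
    · rw [Finset.mem_singleton] at hme
      exact absurd (hme ▸ hi) hαm
    · rw [Finset.mem_singleton] at hme
      exact absurd (hme ▸ hi) hm

/-- Let `α β` be an edge such that every other neighbour of `α` is joined to every other neighbour
of `β`, and let some further vertex `m` be joined to neither. Once the isolated vertices `W` are
killed, the sum of the remaining variables and `x_α + x_β` form a regular sequence. -/
lemma regSeq_two (hA : ∀ i j, A i j → i ≠ j) (hs : ∀ i j, A i j → A j i) {W : Finset (Fin n)}
    (hW : ∀ i j, A i j → i ∉ W ∧ j ∉ W) {α β m : Fin n} (hαβ : A α β) (hm : m ∉ W)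
    (hmα : m ≠ α) (hmβ : m ≠ β) (hαm : ¬ A α m) (hβm : ¬ A β m)
    (hN : ∀ i j, A α i → i ≠ β → A β j → j ≠ α → A i j) :
    RegSeq (SR K (ES A ∪ Sg ↑W)) [∑ i ∈ Wᶜ, X i, X α + X β] := by
  refine ⟨regMod_sum hA hW hm, ?_, trivial⟩
  refine regMod_glue (SR_le_Nb hs hαβ) (SR_le_Nb hs (hs _ _ hαβ)) (SR_inf_le fun T hT => ?_) ?_
    (regMod_Nb hA hW hαβ hm hmα hmβ hαm) ?_
  · have hT1 : ∀ i j, A i j → i ∈ T ∨ j ∈ T := fun i j hij => by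
      simpa using hT {i, j} (Or.inl ⟨i, j, hij, rfl⟩)
    have hT2 : ∀ i ∈ W, i ∈ T := fun i hi => by
      simpa using hT {i} (Or.inr ⟨i, hi, rfl⟩)
    by_cases h : ∀ i, A α i → i ∈ T
    · exact Or.inl (cover_Nb (fun i j hij _ _ _ _ => hT1 i j hij) h hT2)
    · refine Or.inr (cover_Nb (fun i j hij _ _ _ _ => hT1 i j hij) (fun j hj => ?_) hT2)
      push Not at h
      obtain ⟨i, hi, hiT⟩ := h
      have hα : α ∈ T := (hT1 _ _ hi).resolve_right hiT
      by_cases hjα : j = α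
      · exact hjα ▸ hα
      by_cases hiβ : i = β
      · exact (hT1 _ _ hj).resolve_left (hiβ ▸ hiT)
      · exact (hT1 _ _ (hN i j hi hiβ hj hjα)).resolve_left hiT
  · rw [← SR_union]
    refine regMod_SR' (i := m) (by simpa using hm) ?_
    have key : ∀ γ δ : Fin n, ¬ A γ m → ∀ e ∈ Nb A W γ δ, m ∈ e → ∃ j ∈ e, j ∈ Wᶜ ∧ j ≠ m := by
      rintro γ δ hγ e (⟨i, j, ⟨hij, -⟩, rfl⟩ | ⟨i, hi | hi, rfl⟩) hme
      · rw [Finset.mem_insert, Finset.mem_singleton] at hme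
        rcases hme with rfl | rfl
        · exact ⟨j, by simp, by simpa using (hW _ _ hij).2, (hA _ _ hij).symm⟩
        · exact ⟨i, by simp, by simpa using (hW _ _ hij).1, hA _ _ hij⟩
      · rw [Finset.mem_singleton] at hme
        exact absurd (hme ▸ hi) hγ
      · rw [Finset.mem_singleton] at hme
        exact absurd (hme ▸ hi) hm
    rintro e (he | he)
    exacts [key _ _ hαm e he, key _ _ hβm e he]
  · rw [add_comm (X α)]
    exact regMod_Nb hA hW (hs _ _ hαβ) hm hmβ hmα hβm

/-- The isolated vertices may be prepended to a regular sequence. -/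
lemma regSeq_prepend {W : Finset (Fin n)} (hW : ∀ i j, A i j → i ∉ W ∧ j ∉ W)
    {l : List (MvPolynomial (Fin n) K)} (h : RegSeq (SR K (ES A ∪ Sg ↑W)) l) :
    RegSeq (SR K (ES A)) (W.toList.map X ++ l) := by
  refine regSeq_append (regSeq_vars _ _ W.nodup_toList ?_) ?_
  · rintro _ ⟨i, j, hij, rfl⟩ k hk
    rw [Finset.mem_insert, Finset.mem_singleton] at hk
    rw [Finset.mem_toList]
    rcases hk with rfl | rfl
    exacts [(hW _ _ hij).1, (hW _ _ hij).2]
  · rw [SR_sup_ofList]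
    simpa [Sg] using h

end RegularSequences

/-! ### Height, equations and regular sequence in each case -/

section Cases

variable {K : Type} [Field K] {n : ℕ}

/-- The symmetric adjacency relation of the lexsegment graph. -/
def Ad (n a b c d : ℕ) (i j : Fin n) : Prop := Ed n a b c d i j ∨ Ed n a b c d j i

lemma ES_Ad (a b c d : ℕ) : ES (Ad n a b c d) = ES (Ed n a b c d) := by
  ext e
  constructor
  · rintro ⟨i, j, h | h, rfl⟩
    exacts [⟨i, j, h, rfl⟩, ⟨j, i, h, Finset.pair_comm _ _⟩]
  · rintro ⟨i, j, h, rfl⟩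
    exact ⟨i, j, Or.inl h, rfl⟩

lemma Ad_ne {a b c d : ℕ} (i j : Fin n) (h : Ad n a b c d i j) : i ≠ j :=
  h.elim (Ed_ne _ _) fun h => (Ed_ne _ _ h).symm

lemma Ad_symm {a b c d : ℕ} (i j : Fin n) (h : Ad n a b c d i j) : Ad n a b c d j i := h.symm

lemma mem_of_regular {W : Finset (Fin n)} {l : List (MvPolynomial (Fin n) K)}
    (hl : ∀ f ∈ l, f ∈ VP K (Set.univ : Set (Fin n))) :
    ∀ f ∈ W.toList.map X ++ l, f ∈ VP K (Set.univ : Set (Fin n)) := by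
  intro f hf
  rcases List.mem_append.1 hf with hf | hf
  · obtain ⟨i, -, rfl⟩ := List.mem_map.1 hf
    exact X_mem_VP.2 (Set.mem_univ i)
  · exact hl f hf

/-- What is shown about each lexsegment in the list `Good`: for some `h`, the largest independent
sets have `n - h` elements, `h` equations suffice, and there is a regular sequence of length
`n - h`. -/
def Nice (K : Type) [Field K] (n a b c d : ℕ) : Prop :=
  ∃ k h : ℕ, k + h = n ∧
    (∀ F : Finset (Fin n), (∀ i ∈ F, ∀ j ∈ F, ¬ Ed n a b c d i j) → F.card ≤ k) ∧
    (∃ F : Finset (Fin n), (∀ i ∈ F, ∀ j ∈ F, ¬ Ed n a b c d i j) ∧ F.card = k) ∧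
    ara (SR K (ES (Ed n a b c d))) ≤ h ∧
    ∃ rs : List (MvPolynomial (Fin n) K), rs.length = k ∧
      (∀ f ∈ rs, f ∈ VP K (Set.univ : Set (Fin n))) ∧ RegSeq (SR K (ES (Ed n a b c d))) rs

/-- The regular sequence formed by the isolated vertices and the sum of the others. -/
lemma exists_regSeq_one {a b c d : ℕ} (s : Finset ℕ) (hs : ∀ x ∈ s, x < n)
    (hW : ∀ i j : Fin n, Ed n a b c d i j → i.1 ∉ s ∧ j.1 ∉ s) {m : ℕ} (hmn : m < n)
    (hm : m ∉ s) : ∃ rs : List (MvPolynomial (Fin n) K), rs.length = s.card + 1 ∧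
      (∀ f ∈ rs, f ∈ VP K (Set.univ : Set (Fin n))) ∧ RegSeq (SR K (ES (Ed n a b c d))) rs := by
  have hW' : ∀ i j, Ad n a b c d i j → i ∉ Fs n s ∧ j ∉ Fs n s := by
    rintro i j (h | h)
    · simpa [mem_Fs] using hW _ _ h
    · simpa [mem_Fs] using (hW _ _ h).symm
  refine ⟨_, ?_, mem_of_regular ?_, ES_Ad (n := n) a b c d ▸ regSeq_prepend hW'
    (l := [∑ i ∈ (Fs n s)ᶜ, X i]) ⟨regMod_sum Ad_ne hW' (m := ⟨m, hmn⟩) (by simpa [mem_Fs]),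
      trivial⟩⟩
  · simp [card_Fs hs]
  · intro f hf
    rw [List.mem_singleton] at hf
    exact hf ▸ sum_mem fun i _ => X_mem_VP.2 (Set.mem_univ i)

/-- The regular sequence formed by the isolated vertices, the sum of the others, and `x_α + x_β`. -/
lemma exists_regSeq_two {a b c d : ℕ} (s : Finset ℕ) (hs : ∀ x ∈ s, x < n)
    (hW : ∀ i j : Fin n, Ed n a b c d i j → i.1 ∉ s ∧ j.1 ∉ s) (α β m : Fin n)
    (hαβ : Ad n a b c d α β) (hm : m.1 ∉ s) (hmα : m ≠ α) (hmβ : m ≠ β)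
    (hαm : ¬ Ad n a b c d α m) (hβm : ¬ Ad n a b c d β m)
    (hN : ∀ i j, Ad n a b c d α i → i ≠ β → Ad n a b c d β j → j ≠ α → Ad n a b c d i j) :
    ∃ rs : List (MvPolynomial (Fin n) K), rs.length = s.card + 2 ∧
      (∀ f ∈ rs, f ∈ VP K (Set.univ : Set (Fin n))) ∧ RegSeq (SR K (ES (Ed n a b c d))) rs := by
  have hW' : ∀ i j, Ad n a b c d i j → i ∉ Fs n s ∧ j ∉ Fs n s := by
    rintro i j (h | h)
    · simpa [mem_Fs] using hW _ _ h
    · simpa [mem_Fs] using (hW _ _ h).symm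
  refine ⟨_, ?_, mem_of_regular ?_, ES_Ad (n := n) a b c d ▸ regSeq_prepend hW'
    (regSeq_two Ad_ne Ad_symm hW' hαβ (by simpa [mem_Fs]) hmα hmβ hαm hβm hN)⟩
  · simp [card_Fs hs]
  · intro f hf
    simp only [List.mem_cons, List.not_mem_nil, or_false] at hf
    rcases hf with rfl | rfl
    · exact sum_mem fun i _ => X_mem_VP.2 (Set.mem_univ i)
    · exact add_mem (X_mem_VP.2 (Set.mem_univ _)) (X_mem_VP.2 (Set.mem_univ _))

lemma exists_indep {a b c d : ℕ} (s : Finset ℕ) (hs : ∀ x ∈ s, x < n)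
    (h : ∀ i ∈ s, ∀ j ∈ s, ¬ (i < j ∧ (a < i ∨ a = i ∧ b ≤ j) ∧ (i < c ∨ i = c ∧ j ≤ d))) :
    ∃ F : Finset (Fin n), (∀ i ∈ F, ∀ j ∈ F, ¬ Ed n a b c d i j) ∧ F.card = s.card :=
  ⟨Fs n s, fun i hi j hj => h _ (mem_Fs.1 hi) _ (mem_Fs.1 hj), card_Fs hs⟩

lemma nice_edge {a b : ℕ} (hab : a < b) (hb : b < n) : Nice K n a b a b := by
  have hc : (Finset.range n \ {a, b}).card = n - 2 := by
    rw [Finset.card_sdiff_of_subset (fun x hx => by simp at hx ⊢; omega),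
      Finset.card_pair (by omega), Finset.card_range]
  refine ⟨n - 1, 1, by omega, fun F => card_le_of_color
    (fun i => if i.1 = b then a else if b < i.1 then i.1 - 1 else i.1)
    (fun i => by have := i.2; split_ifs <;> omega) (fun i j hij h => ?_), ?_,
    ara_edge hab hb, ?_⟩
  · rw [Fin.lt_def] at hij
    unfold Ed
    split_ifs at h <;> omega
  · have := exists_indep (n := n) (a := a) (b := b) (c := a) (d := b) (Finset.range n \ {a})
      (fun x hx => by simp at hx; omega) (fun i hi j hj => by simp at hi hj; omega)
    rwa [Finset.card_sdiff_of_subset (fun x hx => by simp at hx ⊢; omega), Finset.card_range,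
      Finset.card_singleton] at this
  · have := exists_regSeq_one (K := K) (n := n) (a := a) (b := b) (c := a) (d := b)
      (Finset.range n \ {a, b}) (fun x hx => by simp at hx; omega)
      (fun i j h => by unfold Ed at h; simp; omega) hb (by simp)
    rwa [hc, show n - 2 + 1 = n - 1 by omega] at this

lemma nice_complete {a : ℕ} (ha : a + 2 < n) : Nice K n a (a + 1) (n - 2) (n - 1) := by
  refine ⟨a + 1, n - a - 1, by omega, fun F => card_le_of_color
    (fun i => min i.1 a) (fun i => by omega) (fun i j hij h => ?_), ?_, ara_complete ha, ?_⟩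
  · rw [Fin.lt_def] at hij
    unfold Ed
    omega
  · have := exists_indep (n := n) (a := a) (b := a + 1) (c := n - 2) (d := n - 1)
      (Finset.range (a + 1)) (fun x hx => by simp at hx; omega)
      (fun i hi j hj => by simp at hi hj; omega)
    rwa [Finset.card_range] at this
  · have := exists_regSeq_one (K := K) (n := n) (a := a) (b := a + 1) (c := n - 2) (d := n - 1)
      (Finset.range a) (fun x hx => by simp at hx; omega)
      (fun i j h => by unfold Ed at h; simp; omega) (m := a) (by omega) (by simp)
    rwa [Finset.card_range] at this

lemma nice_two {a : ℕ} (ha : a + 5 ≤ n) : Nice K n a (n - 1) (a + 1) (a + 2) := by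
  have hc : (Finset.range n \ {a, a + 1, a + 2, n - 1}).card = n - 4 := by
    rw [Finset.card_sdiff_of_subset (fun x hx => by simp at hx ⊢; omega),
      Finset.card_insert_of_notMem (by simp; omega), Finset.card_insert_of_notMem (by simp; omega),
      Finset.card_pair (by omega), Finset.card_range]
  refine ⟨n - 2, 2, by omega, fun F => card_le_of_color
    (fun i => if i.1 = n - 1 then a else if a + 2 ≤ i.1 then i.1 - 1 else i.1)
    (fun i => by have := i.2; split_ifs <;> omega) (fun i j hij h => ?_), ?_,
    ara_two ha, ?_⟩
  · rw [Fin.lt_def] at hij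
    unfold Ed
    split_ifs at h <;> omega
  · have := exists_indep (n := n) (a := a) (b := n - 1) (c := a + 1) (d := a + 2)
      (Finset.range n \ {a, a + 1})
      (fun x hx => by simp at hx; omega) (fun i hi j hj => by simp at hi hj; omega)
    rwa [Finset.card_sdiff_of_subset (fun x hx => by simp at hx ⊢; omega), Finset.card_range,
      Finset.card_pair (by omega)] at this
  · have := exists_regSeq_two (K := K) (n := n) (a := a) (b := n - 1) (c := a + 1) (d := a + 2)
      (Finset.range n \ {a, a + 1, a + 2, n - 1}) (fun x hx => by simp at hx; omega)
      (fun i j h => by unfold Ed at h; simp; omega) ⟨a, by omega⟩ ⟨n - 1, by omega⟩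
      ⟨a + 1, by omega⟩ (by unfold Ad Ed; dsimp only; omega) (by simp)
      (by rw [Ne, Fin.ext_iff]; dsimp only; omega) (by rw [Ne, Fin.ext_iff]; dsimp only; omega)
      (by unfold Ad Ed; dsimp only; omega) (by unfold Ad Ed; dsimp only; omega)
      (fun i j h1 h2 _ _ => by
        rw [Ne, Fin.ext_iff] at h2; unfold Ad Ed at h1; dsimp only at h1 h2; omega)
    rwa [hc, show n - 4 + 2 = n - 2 by omega] at this

/-- The three families ending in row `n - 3`. Here `a` and `n - 1` are joined, and `m`, which is
`n - 3` or `n - 2`, is joined to neither. -/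
lemma nice_three {a b d m : ℕ} (ha : a + 4 ≤ n)
    (h : b + 2 = n ∧ d + 2 = n ∧ m + 3 = n ∨ b + 1 = n ∧ d + 1 = n ∧ m + 2 = n ∨
      b + 1 = n ∧ d + 2 = n ∧ m + 2 = n) : Nice K n a b (n - 3) d := by
  refine ⟨a + 2, n - a - 2, by omega, fun F => card_le_of_color
    (fun i => if i.1 = n - 1 then a else min i.1 (a + 1))
    (fun i => by have := i.2; split_ifs <;> omega) (fun i j hij h => ?_), ?_, ?_, ?_⟩
  · have := j.2
    rw [Fin.lt_def] at hij
    unfold Ed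
    split_ifs at h <;> omega
  · have := exists_indep (n := n) (a := a) (b := b) (c := n - 3) (d := d)
      (insert (n - 1) (insert (n - 2) (Finset.range a)))
      (fun x hx => by simp at hx; omega) (fun i hi j hj => by simp at hi hj; omega)
    rwa [Finset.card_insert_of_notMem (by simp; omega),
      Finset.card_insert_of_notMem (by simp; omega), Finset.card_range] at this
  · rcases h with ⟨h1, h2, -⟩ | ⟨h1, h2, -⟩ | ⟨h1, h2, -⟩
    · obtain rfl : b = n - 2 := by omega
      obtain rfl : d = n - 2 := by omega
      exact ara_A ha
    · obtain rfl : b = n - 1 := by omega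
      obtain rfl : d = n - 1 := by omega
      exact ara_B ha
    · obtain rfl : b = n - 1 := by omega
      obtain rfl : d = n - 2 := by omega
      exact ara_C ha
  · have := exists_regSeq_two (K := K) (n := n) (a := a) (b := b) (c := n - 3) (d := d)
      (Finset.range a) (fun x hx => by simp at hx; omega)
      (fun i j h => by unfold Ed at h; simp; omega) ⟨a, by omega⟩ ⟨n - 1, by omega⟩
      ⟨m, by omega⟩ (by unfold Ad Ed; dsimp only; omega) (by simp; omega)
      (by rw [Ne, Fin.ext_iff]; dsimp only; omega) (by rw [Ne, Fin.ext_iff]; dsimp only; omega)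
      (by unfold Ad Ed; dsimp only; omega) (by unfold Ad Ed; dsimp only; omega)
      (fun i j h1 h2 h3 h4 => by
        have := i.2
        have := j.2
        rw [Ne, Fin.ext_iff] at h2 h4; unfold Ad Ed at *; dsimp only at *; omega)
    rwa [Finset.card_range] at this

lemma Good.nice {a b c d : ℕ} (hab : a < b) (hbn : b < n) (h : Good n a b c d) :
    Nice K n a b c d := by
  rcases h with ⟨rfl, rfl⟩ | ⟨rfl, h1, h2, h3⟩ | ⟨rfl, h1, rfl, h2⟩ | ⟨h1, h2, h3⟩
  · exact nice_edge hab hbn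
  · obtain rfl : c = n - 2 := by omega
    obtain rfl : d = n - 1 := by omega
    exact nice_complete (by omega)
  · obtain rfl : b = n - 1 := by omega
    exact nice_two h2
  · obtain rfl : c = n - 3 := by omega
    refine nice_three (m := if b + 2 = n then n - 3 else n - 2) (by omega) ?_
    split_ifs <;> omega

end Cases

/-! ### Comparing both sides of the equivalence -/

section Assembly

lemma le_idealHeight {R : Type} [CommRing R] {I : Ideal R} {h : ℕ∞} :
    h ≤ idealHeight I ↔ ∀ P : Ideal R, P.IsPrime → I ≤ P → h ≤ P.height := by
  simp only [idealHeight, le_iInf_iff, ← PrimeSpectrum.height_eq_orderHeight]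
  exact ⟨fun H P hP hI => H ⟨P, hP⟩ hI, fun H p hp => H p.asIdeal p.isPrime hp⟩

lemma ara_spec {R : Type} [CommRing R] [IsNoetherianRing R] (I : Ideal R) :
    ∃ f : Fin (ara I) → R, (∀ t, f t ∈ I) ∧
      (Ideal.span (Set.range f)).radical = I.radical := by
  refine Nat.sInf_mem (s := {r : ℕ | ∃ f : Fin r → R, (∀ t, f t ∈ I) ∧
    (Ideal.span (Set.range f)).radical = I.radical}) ?_
  obtain ⟨s, hs⟩ := IsNoetherian.noetherian I
  refine ⟨s.card, fun i => s.equivFin.symm i, fun i => ?_, ?_⟩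
  · exact hs ▸ Ideal.subset_span (s.equivFin.symm i).2
  · congr 1
    rw [← hs]
    congr 1
    ext x
    constructor
    · rintro ⟨i, rfl⟩
      exact (s.equivFin.symm i).2
    · intro hx
      exact ⟨s.equivFin ⟨x, hx⟩, by simp⟩

/-- Krull's height theorem. -/
lemma idealHeight_le_ara {R : Type} [CommRing R] [IsNoetherianRing R] {I Q : Ideal R}
    [Q.IsPrime] (hQ : I ≤ Q) : idealHeight I ≤ ara I := by
  obtain ⟨f, h1, h2⟩ := ara_spec I
  obtain ⟨P, hP, -⟩ := Ideal.exists_minimalPrimes_le (I := Ideal.span (Set.range f)) (J := Q)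
    ((Ideal.span_le.2 (by rintro _ ⟨i, rfl⟩; exact h1 i)).trans hQ)
  have hPp : P.IsPrime := hP.1.1
  have hIP : I ≤ P := Ideal.le_radical.trans (h2 ▸ hPp.radical_le_iff.2 hP.1.2)
  refine (le_idealHeight.1 le_rfl P hPp hIP).trans
    ((Ideal.height_le_card_of_mem_minimalPrimes_span (Set.finite_range f) hP).trans ?_)
  have := Set.ncard_image_le (f := f) (Set.finite_univ)
  rw [Set.image_univ, Set.ncard_univ, Nat.card_eq_fintype_card, Fintype.card_fin] at this
  exact_mod_cast this

lemma radical_map_eq {R R' : Type*} [CommRing R] [CommRing R'] (φ : R →+* R') {I J : Ideal R}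
    (h : I.radical = J.radical) : (I.map φ).radical = (J.map φ).radical := by
  have key : ∀ {I J : Ideal R}, I.radical = J.radical →
      (I.map φ).radical ≤ (J.map φ).radical := fun {I J} h => by
    rw [Ideal.radical_le_radical_iff]
    exact (Ideal.map_mono (Ideal.le_radical.trans h.le)).trans (Ideal.map_radical_le φ)
  exact le_antisymm (key h) (key h.symm)

variable {K : Type} [Field K] {n : ℕ} {G : Fin n → Fin n → Prop}

lemma SR_ES_le_compl (hG : ∀ i j, G i j → i ≠ j) {F : Finset (Fin n)}
    (hF : ∀ i ∈ F, ∀ j ∈ F, ¬ G i j) : SR K (ES G) ≤ VP K (↑F)ᶜ := by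
  rw [SR_ES_le_VP hG]
  intro i j hij
  by_contra! h
  simp only [Set.mem_compl_iff, SetLike.mem_coe, not_not] at h
  exact hF i h.1 j h.2 hij

lemma SR_ES_le_univ (hG : ∀ i j, G i j → i ≠ j) : SR K (ES G) ≤ VP K Set.univ :=
  (SR_ES_le_VP hG).2 fun _ _ _ => Or.inl (Set.mem_univ _)

/-- For the lexsegments in the list both sides of the equivalence hold. -/
lemma Nice.both {a b c d : ℕ} (h : Nice K n a b c d) :
    ((smDepth K n (SR K (ES (Ed n a b c d))) : WithBot (WithTop ℕ)) =
        ringKrullDim (MvPolynomial (Fin n) K ⧸ SR K (ES (Ed n a b c d)))) ∧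
      (ara (SR K (ES (Ed n a b c d))) : ℕ∞) = idealHeight (SR K (ES (Ed n a b c d))) := by
  obtain ⟨k, h, hkh, hF, ⟨F, hFi, hFk⟩, hara, rs, hrs, hm, hreg⟩ := h
  have hI := SR_ES_le_univ (K := K) (n := n) (G := Ed n a b c d) Ed_ne
  have hh : ∀ P : Ideal (MvPolynomial (Fin n) K), P.IsPrime → SR K (ES (Ed n a b c d)) ≤ P →
      (h : ℕ∞) ≤ P.height := fun P hP hIP => le_height_of_card Ed_ne hkh hF hIP
  constructor
  · obtain ⟨⟨rs', hl, hm', hr'⟩, hmax⟩ := smDepth_spec hI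
    have h1 : smDepth K n (SR K (ES (Ed n a b c d))) = k :=
      le_antisymm (hl ▸ length_le_dim hI hkh hh hm' hr') (hrs ▸ hmax rs hm hreg)
    rw [h1]
    refine le_antisymm ?_ ?_
    · have := card_le_dim (SR_ES_le_compl (K := K) Ed_ne hFi)
      rwa [hFk] at this
    · exact ringKrullDim_quotient_le_of_height (by rw [ringKrullDim_S, hkh]) hh
  · refine le_antisymm ?_ (idealHeight_le_ara hI)
    refine le_trans ?_ (le_idealHeight.2 hh)
    exact_mod_cast hara

variable {a b c d : ℕ} (hab : a < b) (hbn : b < n) (hcd : c < d) (hdn : d < n)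
  (hac : a ≤ c) (hbd : a = c → b ≤ d)

include hab hbn hcd hdn hac hbd

lemma good_of_CM (h : (smDepth K n (SR K (ES (Ed n a b c d))) : WithBot (WithTop ℕ)) =
    ringKrullDim (MvPolynomial (Fin n) K ⧸ SR K (ES (Ed n a b c d)))) : Good n a b c d := by
  have hI := SR_ES_le_univ (K := K) (n := n) (G := Ed n a b c d) Ed_ne
  obtain ⟨⟨rs, hl, hm, hr⟩, -⟩ := smDepth_spec hI
  refine good_of_depth hab hbn hcd hdn hac hbd rfl (hr.depthGE _ hI hm) fun F hF => ?_
  have h1 := card_le_dim (SR_ES_le_compl (K := K) Ed_ne hF)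
  rw [← h, ← hl] at h1
  have h2 : (F.card : WithBot ℕ∞) ≤ rs.length := h1
  exact_mod_cast h2

/-- If `h = ara I = height I` and `f_1, …, f_h` define `I` up to radical, then `f_1, …, f_h` is
part of a system of parameters of the regular local ring `K[x]_{(x)}`, so its quotient by them
has depth `n - h`. -/
lemma good_of_stci (h : (ara (SR K (ES (Ed n a b c d))) : ℕ∞) =
    idealHeight (SR K (ES (Ed n a b c d)))) : Good n a b c d := by
  classical
  have hI := SR_ES_le_univ (K := K) (n := n) (G := Ed n a b c d) Ed_ne
  obtain ⟨f, h1, h2⟩ := ara_spec (SR K (ES (Ed n a b c d)))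
  generalize ara (SR K (ES (Ed n a b c d))) = r at h f
  have hF : ∀ F : Finset (Fin n), (∀ i ∈ F, ∀ j ∈ F, ¬ Ed n a b c d i j) → r + F.card ≤ n := by
    intro F hF
    have hle := SR_ES_le_compl (K := K) Ed_ne hF
    rw [← Finset.coe_compl] at hle
    have := (le_idealHeight.1 h.le _ (VP_isPrime _) hle).trans (height_VP_le Fᶜ)
    have h3 : r ≤ Fᶜ.card := by exact_mod_cast this
    rw [Finset.card_compl, Fintype.card_fin] at h3
    have h4 : F.card ≤ n := (Finset.card_le_univ F).trans (by simp)
    omega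
  have hrn : r ≤ n := by simpa using hF ∅ (by simp)
  let l : List (Loc K n) := (List.ofFn f).map (algebraMap (MvPolynomial (Fin n) K) (Loc K n))
  have hl : (⊥ : Ideal (Loc K n)) ⊔ Ideal.ofList l =
      (Ideal.span (Set.range f)).map (algebraMap (MvPolynomial (Fin n) K) (Loc K n)) := by
    rw [bot_sup_eq, Ideal.map_span, Ideal.ofList]
    congr 1
    ext x
    simp [l]
  have hrad := radical_map_eq (algebraMap (MvPolynomial (Fin n) K) (Loc K n)) h2
  rw [← hl] at hrad
  refine good_of_depth hab hbn hcd hdn hac hbd hrad (k := n - r)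
    (depth_of_dim l n (n - r) ⊥ depthGE_bot ?_ (by simp [l]; omega) ?_)
    fun F h => by have := hF F h; omega
  · intro x hx
    simp only [l, List.mem_map, List.mem_ofFn] at hx
    obtain ⟨_, ⟨i, rfl⟩, rfl⟩ := hx
    exact (IsLocalization.AtPrime.to_map_mem_maximal_iff (Loc K n)
      (VP K (Set.univ : Set (Fin n))) _).2 (hI (h1 i))
  · refine ringKrullDim_quotient_le_of_height (h := r)
      (by rw [Nat.sub_add_cancel hrn]; exact ringKrullDim_Loc) fun P hP hle => ?_
    rw [← IsLocalization.height_under (VP K (Set.univ : Set (Fin n))).primeCompl]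
    refine le_idealHeight.1 h.le _ inferInstance fun x hx => ?_
    have h3 : algebraMap (MvPolynomial (Fin n) K) (Loc K n) x ∈
        Ideal.radical (⊥ ⊔ Ideal.ofList l) := by
      rw [hrad]
      exact Ideal.le_radical (Ideal.mem_map_of_mem _ hx)
    exact (hP.radical_le_iff.2 hle) h3

end Assembly

end LexSeg

/-- A lexsegment edge ideal `I = (L(u,v))` is Cohen–Macaulay
(`depth(S/I) = dim(S/I)`) if and only if it is a set-theoretic complete
intersection, i.e. `ara(I) = height(I)`. -/
theorem lexSegIdeal_CM_iff_stci (K : Type) [Field K] (n : ℕ) (u v : ℕ × ℕ)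
    (hu : validPair n u) (hv : validPair n v) (huv : lexGE u v) :
    ((smDepth K n (lexSegIdeal K n u v) : WithBot (WithTop ℕ)) =
        ringKrullDim (MvPolynomial (Fin n) K ⧸ lexSegIdeal K n u v))
      ↔ (ara (lexSegIdeal K n u v) : ℕ∞) = idealHeight (lexSegIdeal K n u v) := by
  rw [LexSeg.lexSegIdeal_eq hu hv]
  obtain ⟨hu1, hu2, hu3⟩ := hu
  obtain ⟨hv1, hv2, hv3⟩ := hv
  have hab : u.1 - 1 < u.2 - 1 := by omega
  have hbn : u.2 - 1 < n := by omega
  have hcd : v.1 - 1 < v.2 - 1 := by omega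
  have hdn : v.2 - 1 < n := by omega
  have hac : u.1 - 1 ≤ v.1 - 1 := by unfold lexGE at huv; omega
  have hbd : u.1 - 1 = v.1 - 1 → u.2 - 1 ≤ v.2 - 1 := by unfold lexGE at huv; omega
  exact ⟨fun h => ((LexSeg.good_of_CM hab hbn hcd hdn hac hbd h).nice hab hbn).both.2,
    fun h => ((LexSeg.good_of_stci hab hbn hcd hdn hac hbd h).nice hab hbn).both.1⟩
end

section
/- Let I ⊂ S = K[x_1,…,x_n] be a squarefree monomial ideal. If I is a set-theoretic complete intersection, i.e., ara(I) = height(I), then S/I is Cohen–Macaulay. -/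
/-!
Write `m = (x_1,…,x_n)`, `h = ara I = height I` and `d = n - h`, and choose `f_1,…,f_h ∈ I` with
`√(f) = √I`. Since `dim S/I ≤ n - height I = d` and a regular sequence on `S/I` is no longer than
`dim S/I`, it suffices to find a regular sequence of length `d` on `S/I` inside `m`. The
elementary symmetric polynomials `θ_1,…,θ_d` in `x_1,…,x_n` work.

The tool is the substitution `φ : x_i ↦ x_i ^ M`, with `M` so large that `g ^ M ∈ (f)` for every
squarefree monomial generator `g` of `I`. As `φ g = g ^ M`, this gives `φ I ⊆ (f) ⊆ I`.

* The `n` elements `f, φ θ` have only the origin as common zero: at a prime `Q ⊇ I`, at least `h`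
  of the variables lie in `Q`, and if `F ≠ ∅` is the set of the others, then `|F| ≤ d` and
  `φ θ_{|F|}` is congruent to `∏_{i ∈ F} x_i ^ M` modulo `Q`
  (`idealOfVars_le_of_esymm_mem`). As `S_m` has a regular sequence of length `n`, they form a
  regular sequence in `S_m` (`isWeaklyRegular_of_radical`, `exists_mul_mem_of_radical`).
* If `θ_k a ∈ I + (θ_1,…,θ_{k-1})`, then applying `φ` gives
  `φ θ_k · φ a ∈ (f, φ θ_1,…,φ θ_{k-1})`, so `s · φ a` lies in that ideal for some `s ∉ m`.
  The larger ideal `I + (φ θ_1,…,φ θ_{k-1})` is homogeneous, so it contains `φ a` itself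
  (`mem_of_mul_mem_of_homogeneous`).
* The `φ`-linear retraction `ψ` of `φ` (`contractExp`), which keeps the monomials whose exponents
  are all divisible by `M`, maps `I` into `I` because `I` is a squarefree monomial ideal. Hence
  `a = ψ (φ a) ∈ I + (θ_1,…,θ_{k-1})` (`mem_of_mul_mem_sup`).
-/

open MvPolynomial

/-! ### Regular sequences over a Noetherian local ring -/

open CategoryTheory Abelian Limits in
/-- Depth drops by one modulo a nonzerodivisor: if `M` has a regular sequence of length `k + 1`
in the maximal ideal, then `M / aM` has one of length `k`. By Rees, the existence of such a
sequence means vanishing of `Ext` from the residue field, and vanishing for `M / aM` follows from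
the long exact sequence. -/
lemma exists_isRegular_quotSMulTop {R : Type} [CommRing R] [IsLocalRing R] [IsNoetherianRing R]
    (M : Type) [AddCommGroup M] [Module R M] [Module.Finite R M] [Nontrivial M]
    {a : R} (ha : a ∈ IsLocalRing.maximalIdeal R) (hreg : IsSMulRegular M a) (k : ℕ)
    (h : ∃ rs : List R, rs.length = k + 1 ∧ (∀ r ∈ rs, r ∈ IsLocalRing.maximalIdeal R) ∧
      RingTheory.Sequence.IsRegular M rs) :
    ∃ rs : List R, rs.length = k ∧ (∀ r ∈ rs, r ∈ IsLocalRing.maximalIdeal R) ∧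
      RingTheory.Sequence.IsRegular (QuotSMulTop a M) rs := by
  have hlt : ∀ (L : Type) [AddCommGroup L] [Module R L] [Module.Finite R L] [Nontrivial L],
      IsLocalRing.maximalIdeal R • (⊤ : Submodule R L) < ⊤ := fun L _ _ _ _ =>
    (Submodule.top_ne_ideal_smul_of_le_jacobson_annihilator
      (IsLocalRing.maximalIdeal_le_jacobson _)).symm.lt_top
  have := nontrivial_quotSMulTop_of_mem_maximalIdeal (L := M) ha
  have key := ((ModuleCat.exists_isRegular_tfae (IsLocalRing.maximalIdeal R) (k + 1)
    (ModuleCat.of R M) (hlt M)).out 3 1).mp h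
  refine ((ModuleCat.exists_isRegular_tfae (IsLocalRing.maximalIdeal R) k
    (ModuleCat.of R (QuotSMulTop a M)) (hlt _)).out 1 3).mp fun i hi => ?_
  have zero1 := AddCommGrpCat.isZero_of_iff_subsingleton.mpr (key i (by omega))
  have zero2 := AddCommGrpCat.isZero_of_iff_subsingleton.mpr (key (i + 1) (by omega))
  have hreg' : IsSMulRegular (ModuleCat.of R M) a := hreg
  exact AddCommGrpCat.subsingleton_of_isZero <| ShortComplex.Exact.isZero_of_both_zeros
    ((Ext.covariant_sequence_exact₃' _ hreg'.smulShortComplex_shortExact) i (i + 1) rfl)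
    (zero1.eq_zero_of_src _) (zero2.eq_zero_of_tgt _)

lemma ringKrullDim_quotient_add_one_le {R : Type} [CommRing R] {P Q : Ideal R} [P.IsPrime]
    [Q.IsPrime] (h : P < Q) : ringKrullDim (R ⧸ Q) + 1 ≤ ringKrullDim (R ⧸ P) := by
  obtain ⟨q, hqQ, hqP⟩ := SetLike.exists_of_lt h
  have hq : Ideal.Quotient.mk P q ≠ 0 := by rwa [Ne, Ideal.Quotient.eq_zero_iff_mem]
  refine le_trans ?_ (ringKrullDim_quotient_succ_le_of_nonZeroDivisor
    (mem_nonZeroDivisors_of_ne_zero hq))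
  gcongr
  refine ringKrullDim_le_of_surjective (Ideal.Quotient.lift _ (Ideal.Quotient.factor h.le) ?_) ?_
  · intro x hx
    obtain ⟨y, rfl⟩ := Ideal.mem_span_singleton'.mp hx
    simp [Ideal.Quotient.eq_zero_iff_mem.mpr hqQ]
  · exact Ideal.Quotient.lift_surjective_of_surjective _ _
      (Ideal.Quotient.factor_surjective h.le)

open Pointwise in
/-- The depth of `M` is at most `dim R ⧸ P` for every associated prime `P` of `M`. For the first
element `x` of the sequence, Nakayama gives an element killed by `P` and nonzero in `M / xM`, so
`M / xM` has an associated prime strictly containing `P`. -/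
lemma length_le_ringKrullDim_quotient_of_mem_associatedPrimes
    {R : Type} [CommRing R] [IsLocalRing R] [IsNoetherianRing R] (rs : List R) :
    ∀ (M : Type) [AddCommGroup M] [Module R M] [Module.Finite R M],
    (∀ r ∈ rs, r ∈ IsLocalRing.maximalIdeal R) → RingTheory.Sequence.IsRegular M rs →
    ∀ P ∈ associatedPrimes R M, (rs.length : WithBot ℕ∞) ≤ ringKrullDim (R ⧸ P) := by
  induction rs with
  | nil =>
    intro M _ _ _ _ _ P hP
    have := hP.1
    simpa using ringKrullDim_nonneg_of_nontrivial
  | cons x rs ih =>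
    intro M _ _ _ hm hreg P hP
    rw [RingTheory.Sequence.isRegular_cons_iff] at hreg
    have hPp : P.IsPrime := hP.1
    have hx : x ∈ IsLocalRing.maximalIdeal R := hm x (by simp)
    -- the submodule of elements killed by `P`
    let U : Submodule R M := Submodule.torsionBySet R M P
    have hU : ∀ u, u ∈ U ↔ ∀ p ∈ P, p • u = 0 := fun u => by
      simp [U, Submodule.mem_torsionBySet_iff]
    obtain ⟨-, u₀, hu₀⟩ := isAssociatedPrime_iff.mp hP
    have hu₀' : ∀ p, p ∈ P ↔ p • u₀ = 0 := fun p => by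
      rw [hu₀, Submodule.mem_colon_singleton, Submodule.mem_bot]
    have hu₀ne : u₀ ≠ 0 := fun h =>
      hPp.ne_top ((Ideal.eq_top_iff_one P).mpr ((hu₀' 1).mpr (by simp [h])))
    have hUx : ¬ U ≤ x • (⊤ : Submodule R M) := by
      intro hle
      have hle' : U ≤ Ideal.span {x} • U := by
        intro u hu
        obtain ⟨v, -, rfl⟩ := (Submodule.mem_smul_pointwise_iff_exists _ _ _).mp (hle hu)
        refine Submodule.smul_mem_smul (Ideal.mem_span_singleton_self x) ((hU v).mpr fun p hp => ?_)
        refine hreg.1 ?_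
        change x • p • v = x • (0 : M)
        rw [smul_zero, smul_comm]
        exact (hU (x • v)).mp hu p hp
      have hbot : U = ⊥ := Submodule.eq_bot_of_le_smul_of_le_jacobson_bot (Ideal.span {x}) U
        (IsNoetherian.noetherian U) hle' (by
          rw [Ideal.span_singleton_le_iff_mem, IsLocalRing.jacobson_eq_maximalIdeal _ bot_ne_top]
          exact hx)
      have hmem : u₀ ∈ U := (hU u₀).mpr fun p hp => (hu₀' p).mp hp
      rw [hbot] at hmem
      exact hu₀ne ((Submodule.mem_bot R).mp hmem)
    obtain ⟨u, huU, hux⟩ := SetLike.not_le_iff_exists.mp hUx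
    have hune : (Submodule.Quotient.mk u : QuotSMulTop x M) ≠ 0 := by
      rwa [Ne, Submodule.Quotient.mk_eq_zero]
    obtain ⟨Q, hQ, hQle⟩ := exists_le_isAssociatedPrime_of_isNoetherianRing R _ hune
    have hPQ : P < Q := by
      refine lt_of_le_of_ne (fun p hp => hQle ?_) ?_
      · rw [Submodule.mem_colon_singleton, Submodule.mem_bot, ← Submodule.Quotient.mk_smul,
          (hU u).mp huU p hp, Submodule.Quotient.mk_zero]
      · rintro rfl
        have hxP : x ∈ P := hQle <| by
          rw [Submodule.mem_colon_singleton, Submodule.mem_bot, ← Submodule.Quotient.mk_smul,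
            Submodule.Quotient.mk_eq_zero]
          exact Submodule.smul_mem_pointwise_smul _ _ _ trivial
        exact hu₀ne (hreg.1 (by simpa using (hu₀' x).mp hxP))
    have hQp : Q.IsPrime := hQ.1
    have h1 := ih (QuotSMulTop x M) (fun r hr => hm r (by simp [hr])) hreg.2 Q hQ
    calc ((x :: rs).length : WithBot ℕ∞) = (rs.length : WithBot ℕ∞) + 1 := by simp
      _ ≤ ringKrullDim (R ⧸ Q) + 1 := by gcongr
      _ ≤ _ := ringKrullDim_quotient_add_one_le hPQ

/-- If `gs` generates an ideal primary to the maximal ideal modulo the prime `P`, then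
`dim R ⧸ P ≤ gs.length`, by Krull's height theorem. -/
lemma ringKrullDim_quotient_le_length {R : Type} [CommRing R] [IsLocalRing R] [IsNoetherianRing R]
    (P : Ideal R) [P.IsPrime] (gs : List R)
    (h : ∀ Q : Ideal R, Q.IsPrime → P ≤ Q → (∀ g ∈ gs, g ∈ Q) → Q = IsLocalRing.maximalIdeal R)
    (hgs : ∀ g ∈ gs, g ∈ IsLocalRing.maximalIdeal R) :
    ringKrullDim (R ⧸ P) ≤ gs.length := by
  classical
  have : IsLocalRing (R ⧸ P) := .of_surjective' _ Ideal.Quotient.mk_surjective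
  have hmem : IsLocalRing.maximalIdeal (R ⧸ P) ∈
      (Ideal.span (((gs.map (Ideal.Quotient.mk P)).toFinset : Finset (R ⧸ P)) :
        Set (R ⧸ P))).minimalPrimes := by
    have hcomap : (IsLocalRing.maximalIdeal (R ⧸ P)).comap (Ideal.Quotient.mk P) =
        IsLocalRing.maximalIdeal R := IsLocalRing.eq_maximalIdeal
          (Ideal.comap_isMaximal_of_surjective _ Ideal.Quotient.mk_surjective)
    refine ⟨⟨inferInstance, Ideal.span_le.mpr fun y hy => ?_⟩, ?_⟩
    · simp only [List.coe_toFinset, List.mem_map, Set.mem_ofPred_eq] at hy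
      obtain ⟨g, hg, rfl⟩ := hy
      rw [SetLike.mem_coe, ← Ideal.mem_comap, hcomap]
      exact hgs g hg
    · rintro Q ⟨hQ, hQle⟩ -
      have := h (Q.comap (Ideal.Quotient.mk P)) inferInstance
        (fun p hp => by simp [Ideal.mem_comap, Ideal.Quotient.eq_zero_iff_mem.mpr hp])
        (fun g hg => hQle (Ideal.subset_span (by simpa using ⟨g, hg, rfl⟩)))
      rw [← Ideal.comap_le_comap_iff_of_surjective _ Ideal.Quotient.mk_surjective, this, hcomap]
  rw [← IsLocalRing.maximalIdeal_height_eq_ringKrullDim]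
  refine WithBot.coe_le_coe.mpr ((Ideal.height_le_card_of_mem_minimalPrimes_span_finset hmem).trans ?_)
  exact_mod_cast (List.toFinset_card_le _).trans (by simp)

open Pointwise in
/-- If a finite module over a Noetherian local ring has a regular sequence of length `r`, then
every system of `r` elements whose only common zero on the support of the module is the closed
point is regular. By the depth bound, every associated prime `P` of `M` has `dim R ⧸ P ≥ r`, so
the first element avoids `P`: otherwise the remaining `r - 1` would cut `R ⧸ P` down to the
closed point. -/
lemma isWeaklyRegular_of_radical {R : Type} [CommRing R] [IsLocalRing R] [IsNoetherianRing R]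
    (gs : List R) : ∀ (M : Type) [AddCommGroup M] [Module R M] [Module.Finite R M] [Nontrivial M],
    (∃ rs : List R, rs.length = gs.length ∧ (∀ r ∈ rs, r ∈ IsLocalRing.maximalIdeal R) ∧
      RingTheory.Sequence.IsRegular M rs) →
    (∀ g ∈ gs, g ∈ IsLocalRing.maximalIdeal R) →
    (∀ Q : Ideal R, Q.IsPrime → Module.annihilator R M ≤ Q → (∀ g ∈ gs, g ∈ Q) →
      Q = IsLocalRing.maximalIdeal R) →
    RingTheory.Sequence.IsWeaklyRegular M gs := by
  induction gs with
  | nil => intro M _ _ _ _ _ _ _; exact .nil R M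
  | cons a gs ih =>
    intro M _ _ _ _ hrs hgs hrad
    have ha : a ∈ IsLocalRing.maximalIdeal R := hgs a (by simp)
    have hreg : IsSMulRegular M a := by
      by_contra hcon
      have : a ∈ ⋃ P ∈ associatedPrimes R M, (P : Set R) := by
        rw [biUnion_associatedPrimes_eq_compl_regular]
        exact hcon
      simp only [Set.mem_iUnion, SetLike.mem_coe] at this
      obtain ⟨P, hP, haP⟩ := this
      have hPp : P.IsPrime := hP.1
      obtain ⟨rs, hlen, hmem, hr⟩ := hrs
      have h1 := length_le_ringKrullDim_quotient_of_mem_associatedPrimes rs M hmem hr P hP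
      -- a prime containing `P` and `gs` also contains `a`, since `a ∈ P`
      have h2 := ringKrullDim_quotient_le_length P gs (fun Q hQ hPQ hQg => hrad Q hQ
        ((Submodule.annihilator_top (R := R) (M := M) ▸ hP.annihilator_le).trans hPQ)
          (by simpa using ⟨hPQ haP, hQg⟩)) (fun g hg => hgs g (by simp [hg]))
      have h3 := h1.trans h2
      rw [hlen] at h3
      have : gs.length + 1 ≤ gs.length := by exact_mod_cast h3
      omega
    have := nontrivial_quotSMulTop_of_mem_maximalIdeal (L := M) ha
    refine .cons hreg (ih (QuotSMulTop a M) (exists_isRegular_quotSMulTop M ha hreg _ hrs)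
      (fun g hg => hgs g (by simp [hg])) fun Q hQ hQann hQg => hrad Q hQ ?_ ?_)
    · exact le_trans (LinearMap.annihilator_le_of_surjective _ (Submodule.mkQ_surjective _)) hQann
    · rintro g hg
      rcases List.mem_cons.mp hg with rfl | hg
      · refine hQann (Module.mem_annihilator.mpr fun m => ?_)
        obtain ⟨m, rfl⟩ := Submodule.mkQ_surjective _ m
        rw [← map_smul, Submodule.mkQ_apply, Submodule.Quotient.mk_eq_zero]
        exact Submodule.smul_mem_pointwise_smul _ _ _ trivial
      · exact hQg g hg

/-! ### Local regularity at the origin -/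

lemma mem_idealOfVars_iff {K : Type} [Field K] {n : ℕ} (p : MvPolynomial (Fin n) K) :
    p ∈ idealOfVars (Fin n) K ↔ constantCoeff p = 0 := by
  have := mem_pow_idealOfVars_iff' 1 p
  rw [pow_one] at this
  rw [this]
  simp [Finsupp.degree_eq_zero_iff, constantCoeff_eq]

instance isMaximal_idealOfVars {K : Type} [Field K] {n : ℕ} :
    (idealOfVars (Fin n) K).IsMaximal := by
  have : idealOfVars (Fin n) K = RingHom.ker (constantCoeff (R := K) (σ := Fin n)) := by
    ext p
    rw [mem_idealOfVars_iff, RingHom.mem_ker]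
  rw [this]
  exact RingHom.ker_isMaximal_of_surjective _ (fun c => ⟨C c, constantCoeff_C _ c⟩)

lemma isWeaklyRegular_X {K : Type} [Field K] {n : ℕ} :
    RingTheory.Sequence.IsWeaklyRegular (MvPolynomial (Fin n) K)
      ((List.finRange n).map (X : Fin n → MvPolynomial (Fin n) K)) := by
  refine ⟨fun i hi => ?_⟩
  have hin : i < n := by simpa using hi
  rw [isSMulRegular_quotient_iff_mem_of_smul_mem]
  have hset : Ideal.ofList (((List.finRange n).map
      (X : Fin n → MvPolynomial (Fin n) K)).take i) = Ideal.span (X '' {j : Fin n | j.1 < i}) := by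
    rw [Ideal.ofList]
    congr 1
    ext p
    simp only [List.mem_take_iff_getElem, Set.mem_ofPred_eq, Set.mem_image]
    constructor
    · rintro ⟨j, hj, rfl⟩
      simp at hj
      exact ⟨⟨j, by omega⟩, by simp; omega, by simp⟩
    · rintro ⟨j, hj, rfl⟩
      exact ⟨j, by simp; omega, by simp⟩
  rw [hset]
  intro a
  simp only [smul_eq_mul, Ideal.mul_top, List.getElem_map, List.getElem_finRange]
  simp only [mem_ideal_span_X_image, mem_support_iff]
  intro h m hm
  obtain ⟨j, hj, hmj⟩ := h (Finsupp.single ⟨i, hin⟩ 1 + m) (by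
    rw [Fin.cast_mk, coeff_X_mul]; exact hm)
  refine ⟨j, hj, ?_⟩
  rwa [Finsupp.add_apply, Finsupp.single_apply, if_neg, zero_add] at hmj
  intro h
  simp [← h] at hj

/-- If `(x_1,…,x_n)` is the only prime containing given `n` of its elements, then these
form a regular sequence locally at the origin: a relation
`g_i a ∈ (g_0,…,g_{i-1})` puts `a` in that ideal after multiplication by some `s` that does
not vanish at the origin. -/
lemma exists_mul_mem_of_radical {K : Type} [Field K] {n : ℕ}
    (gs : List (MvPolynomial (Fin n) K)) (hlen : gs.length = n)
    (hgs : ∀ g ∈ gs, g ∈ idealOfVars (Fin n) K)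
    (hrad : ∀ Q : Ideal (MvPolynomial (Fin n) K), Q.IsPrime → (∀ g ∈ gs, g ∈ Q) →
      idealOfVars (Fin n) K ≤ Q)
    (i : ℕ) (hi : i < gs.length) (a : MvPolynomial (Fin n) K)
    (ha : gs[i] * a ∈ Ideal.ofList (gs.take i)) :
    ∃ s ∉ idealOfVars (Fin n) K, s * a ∈ Ideal.ofList (gs.take i) := by
  let m := idealOfVars (Fin n) K
  let R := Localization.AtPrime m
  have hmap : ∀ g ∈ m, algebraMap _ R g ∈ IsLocalRing.maximalIdeal R := fun g hg =>
    (IsLocalization.AtPrime.to_map_mem_maximal_iff R m g).mpr hg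
  have : IsNoetherianRing R := IsLocalization.isNoetherianRing m.primeCompl R inferInstance
  have hreg : RingTheory.Sequence.IsWeaklyRegular R (gs.map (algebraMap _ R)) := by
    apply isWeaklyRegular_of_radical (R := R) (M := R)
    · refine ⟨((List.finRange n).map (X : Fin n → MvPolynomial (Fin n) K)).map (algebraMap _ R),
        by simp [hlen], ?_, ?_⟩
      · simp only [List.map_map, List.mem_map, forall_exists_index, and_imp]
        rintro _ j - rfl
        exact hmap _ (Ideal.subset_span ⟨j, rfl⟩)
      · refine isWeaklyRegular_X.isRegular_of_isLocalization_of_mem R m ?_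
        simp only [List.mem_map, forall_exists_index, and_imp]
        rintro _ j - rfl
        exact Ideal.subset_span ⟨j, rfl⟩
    · simp only [List.mem_map, forall_exists_index, and_imp]
      rintro _ g hg rfl
      exact hmap g (hgs g hg)
    · rintro Q hQ - hQg
      have h1 : m ≤ Q.comap (algebraMap _ R) := hrad _ inferInstance fun g hg =>
        Ideal.mem_comap.mpr (hQg _ (List.mem_map_of_mem hg))
      have h2 := Ideal.map_le_iff_le_comap.mpr h1
      rw [Localization.AtPrime.map_eq_maximalIdeal] at h2
      exact ((IsLocalRing.maximalIdeal.isMaximal R).eq_of_le hQ.ne_top h2).symm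
  have h := hreg.regular_mod_prev i (by simpa using hi)
  rw [isSMulRegular_quotient_iff_mem_of_smul_mem] at h
  simp only [smul_eq_mul, Ideal.mul_top, List.getElem_map, ← List.map_take,
    ← Ideal.map_ofList] at h
  have h3 := h (algebraMap _ R a) (by rw [← map_mul]; exact Ideal.mem_map_of_mem _ ha)
  rw [IsLocalization.algebraMap_mem_map_algebraMap_iff m.primeCompl] at h3
  exact h3

/-! ### Homogeneity and the substitution `x_i ↦ x_i ^ M` -/

/-- Graded Nakayama-type cancellation: an element that does not vanish at the origin is a
nonzerodivisor modulo a homogeneous ideal. -/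
lemma mem_of_mul_mem_of_homogeneous {K : Type} [Field K] {n : ℕ}
    {T : Set (MvPolynomial (Fin n) K)} (hT : ∀ t ∈ T, ∃ d, t.IsHomogeneous d)
    {s a : MvPolynomial (Fin n) K} (hs : s ∉ idealOfVars (Fin n) K)
    (h : s * a ∈ Ideal.span T) : a ∈ Ideal.span T := by
  let J := Ideal.span T
  have hJ : ∀ p ∈ J, ∀ i, homogeneousComponent i p ∈ J := by
    let := MvPolynomial.gradedAlgebra (σ := Fin n) (R := K)
    intro p hp i
    exact homogeneousComponent_mem_of_mem (Ideal.homogeneous_span _ T hT) hp i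
  have hc : constantCoeff s ≠ 0 := fun h => hs ((mem_idealOfVars_iff s).mpr h)
  -- `a` is congruent modulo `J` to elements of arbitrarily high order
  have key : ∀ N, ∃ t ∈ idealOfVars (Fin n) K ^ N, a - t ∈ J := by
    intro N
    induction N with
    | zero => exact ⟨a, by simp, by simp⟩
    | succ N ih =>
      obtain ⟨t, ht, hat⟩ := ih
      refine ⟨C (constantCoeff s)⁻¹ * (C (constantCoeff s) - s) * t, ?_, ?_⟩
      · rw [pow_succ']
        refine Ideal.mul_mem_mul (Ideal.mul_mem_left _ _ ?_) ht
        rw [mem_idealOfVars_iff]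
        simp
      · have hCC : C (σ := Fin n) (constantCoeff s)⁻¹ * C (constantCoeff s) = 1 := by
          rw [← C_mul, inv_mul_cancel₀ hc, C_1]
        have : a - C (constantCoeff s)⁻¹ * (C (constantCoeff s) - s) * t =
            C (constantCoeff s)⁻¹ * (s * a) +
              (1 - C (constantCoeff s)⁻¹ * s) * (a - t) := by
          linear_combination (-t) * hCC
        rw [this]
        exact J.add_mem (J.mul_mem_left _ h) (J.mul_mem_left _ hat)
  obtain ⟨t, ht, hat⟩ := key (a.totalDegree + 1)
  rw [← sum_homogeneousComponent a]
  refine J.sum_mem fun i hi => ?_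
  have h0 : homogeneousComponent i t = 0 := by
    ext x
    rw [coeff_homogeneousComponent, coeff_zero]
    split_ifs with hx
    · exact (mem_pow_idealOfVars_iff' _ t).mp ht x (by rw [hx]; exact Finset.mem_range.mp hi)
    · rfl
  have := hJ _ hat i
  rwa [map_sub, h0, sub_zero] at this

/-- The `K`-linear retraction of the substitution `x_i ↦ x_i ^ M`: the monomial `x ^ s` goes to
`x ^ (s / M)` if `M` divides every exponent, and to `0` otherwise. -/
noncomputable def contractExp (K : Type) [Field K] (n M : ℕ) :
    MvPolynomial (Fin n) K →ₗ[K] MvPolynomial (Fin n) K :=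
  open Classical in
  (basisMonomials (Fin n) K).constr K fun s =>
    if ∀ i, M ∣ s i then monomial (s.mapRange (· / M) (Nat.zero_div M)) 1 else 0

open Classical in
lemma contractExp_monomial {K : Type} [Field K] {n : ℕ} (M : ℕ) (s : Fin n →₀ ℕ) (c : K) :
    contractExp K n M (monomial s c) =
      if ∀ i, M ∣ s i then monomial (s.mapRange (· / M) (Nat.zero_div M)) c else 0 := by
  have h1 : (monomial s c : MvPolynomial (Fin n) K) = c • basisMonomials (Fin n) K s := by
    simp [smul_monomial]
  rw [h1, map_smul, contractExp, Module.Basis.constr_basis]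
  split_ifs <;> simp [smul_monomial]

/-- `contractExp` is linear over the subring of polynomials in the powers `x_i ^ M`. -/
lemma contractExp_expand_mul {K : Type} [Field K] {n M : ℕ} (hM : M ≠ 0)
    (p a : MvPolynomial (Fin n) K) :
    contractExp K n M (expand M p * a) = p * contractExp K n M a := by
  induction p using MvPolynomial.induction_on' with
  | add p q hp hq => rw [map_add, add_mul, map_add, hp, hq, add_mul]
  | monomial s c =>
    induction a using MvPolynomial.induction_on' with
    | add p q hp hq => rw [mul_add, map_add, hp, hq, map_add, mul_add]
    | monomial t c' =>
      classical
      rw [expand_monomial, monomial_mul, contractExp_monomial, contractExp_monomial]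
      have hiff : (∀ i, M ∣ (M • s + t) i) ↔ ∀ i, M ∣ t i := by
        refine forall_congr' fun i => ?_
        exact Nat.dvd_add_right (dvd_mul_right M (s i))
      simp only [hiff]
      split_ifs with h
      · rw [monomial_mul]
        congr 2
        ext i
        simp [Nat.mul_add_div (Nat.pos_of_ne_zero hM)]
      · simp

lemma contractExp_expand {K : Type} [Field K] {n M : ℕ} (hM : M ≠ 0)
    (p : MvPolynomial (Fin n) K) : contractExp K n M (expand M p) = p := by
  have h1 : contractExp K n M 1 = 1 := by
    classical
    have : (1 : MvPolynomial (Fin n) K) = monomial 0 1 := rfl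
    rw [this, contractExp_monomial]
    simp
  have := contractExp_expand_mul hM p 1
  rwa [mul_one, h1, mul_one] at this

/-- `contractExp` preserves squarefree monomial ideals. -/
lemma contractExp_mem {K : Type} [Field K] {n M : ℕ} {G : Set (MvPolynomial (Fin n) K)}
    (hG : ∀ m ∈ G, IsSqFreeMonomial m) {p : MvPolynomial (Fin n) K} (hp : p ∈ Ideal.span G) :
    contractExp K n M p ∈ Ideal.span G := by
  suffices h : ∀ r, contractExp K n M (r * p) ∈ Ideal.span G by simpa using h 1
  induction hp using Submodule.span_induction with
  | zero => simp
  | add x y _ _ hx hy =>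
    intro r
    rw [mul_add, map_add]
    exact Ideal.add_mem _ (hx r) (hy r)
  | smul r x _ hx =>
    intro r'
    rw [smul_eq_mul, ← mul_assoc]
    exact hx _
  | mem x hx =>
    intro r
    obtain ⟨T, rfl⟩ := hG x hx
    induction r using MvPolynomial.induction_on' with
    | add p q hp hq => rw [add_mul, map_add]; exact Ideal.add_mem _ hp hq
    | monomial t c =>
      classical
      have hmon : (∏ i ∈ T, X i : MvPolynomial (Fin n) K) =
          monomial (∑ i ∈ T, Finsupp.single i 1) 1 := by
        rw [monomial_sum_one]
        rfl
      have hval : ∀ i, (∑ j ∈ T, Finsupp.single j 1 : Fin n →₀ ℕ) i = if i ∈ T then 1 else 0 := by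
        intro i
        simp [Finsupp.finsetSum_apply, Finsupp.single_apply]
      refine Ideal.mem_of_dvd _ ?_ (Ideal.subset_span hx)
      rw [hmon, monomial_mul, contractExp_monomial]
      split_ifs with h
      · rw [monomial_dvd_monomial]
        refine ⟨Or.inr fun i => ?_, by simp⟩
        rw [hval]
        split_ifs with hi
        · have h1 := h i
          simp only [Finsupp.add_apply, hval, if_pos hi] at h1
          simp only [Finsupp.mapRange_apply, Finsupp.add_apply, hval, if_pos hi]
          exact Nat.div_pos (Nat.le_of_dvd (by omega) h1) (Nat.pos_of_dvd_of_pos h1 (by omega))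
        · exact Nat.zero_le _
      · exact dvd_zero _

/-- Regularity of `θ` modulo a squarefree monomial ideal `I`, deduced from the local regularity
of the system `f, φ θ` for the substitution `φ : x_i ↦ x_i ^ M` with `φ I ⊆ (f) ⊆ I`. -/
lemma mem_of_mul_mem_sup {K : Type} [Field K] {n M : ℕ} (hM : M ≠ 0)
    {G : Set (MvPolynomial (Fin n) K)} (hG : ∀ m ∈ G, IsSqFreeMonomial m)
    (hGm : Ideal.span G ≤ idealOfVars (Fin n) K)
    (f θ : List (MvPolynomial (Fin n) K)) (hf : ∀ g ∈ f, g ∈ Ideal.span G)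
    (hφ : ∀ p ∈ Ideal.span G, expand M p ∈ Ideal.ofList f)
    (hlen : f.length + θ.length = n)
    (hθ : ∀ t ∈ θ, t ∈ idealOfVars (Fin n) K)
    (hhom : ∀ t ∈ θ, ∃ d, t.IsHomogeneous d)
    (hrad : ∀ Q : Ideal (MvPolynomial (Fin n) K), Q.IsPrime → (∀ g ∈ f, g ∈ Q) →
      (∀ t ∈ θ, expand M t ∈ Q) → idealOfVars (Fin n) K ≤ Q)
    (k : ℕ) (hk : k < θ.length) (a : MvPolynomial (Fin n) K)
    (ha : θ[k] * a ∈ Ideal.span G ⊔ Ideal.ofList (θ.take k)) :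
    a ∈ Ideal.span G ⊔ Ideal.ofList (θ.take k) := by
  let gs := f ++ θ.map (expand M)
  have htake : gs.take (f.length + k) = f ++ (θ.take k).map (expand M) := by
    simp [gs, List.take_append]
  -- apply `φ` to the relation
  have hJf : Ideal.ofList (gs.take (f.length + k)) =
      Ideal.ofList f ⊔ (Ideal.ofList (θ.take k)).map (expand M (R := K) (σ := Fin n)) := by
    rw [htake, Ideal.ofList_append]
    congr 1
    exact (Ideal.map_ofList (expand M).toRingHom _).symm
  have hrel : expand M θ[k] * expand M a ∈ Ideal.ofList (gs.take (f.length + k)) := by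
    rw [← map_mul, hJf]
    obtain ⟨u, hu, v, hv, huv⟩ := Submodule.mem_sup.mp ha
    rw [← huv, map_add]
    exact Submodule.add_mem_sup (hφ u hu) (Ideal.mem_map_of_mem _ hv)
  have hXm : ∀ t ∈ idealOfVars (Fin n) K, expand M t ∈ idealOfVars (Fin n) K := by
    intro t ht
    have : idealOfVars (Fin n) K ≤
        (idealOfVars (Fin n) K).comap (expand M (R := K) (σ := Fin n)) := by
      refine Ideal.span_le.mpr ?_
      rintro _ ⟨i, rfl⟩
      rw [SetLike.mem_coe, Ideal.mem_comap, expand_X]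
      have hX : (X i : MvPolynomial (Fin n) K) ∈ idealOfVars (Fin n) K :=
        Ideal.subset_span ⟨i, rfl⟩
      exact Ideal.pow_mem_of_mem _ hX _ (Nat.pos_of_ne_zero hM)
    exact this ht
  obtain ⟨s, hs, hsa⟩ := exists_mul_mem_of_radical gs (by simpa [gs] using hlen)
    (by
      intro g hg
      rcases List.mem_append.mp hg with hg | hg
      · exact hGm (hf g hg)
      · obtain ⟨t, ht, rfl⟩ := List.mem_map.mp hg
        exact hXm t (hθ t ht))
    (fun Q hQ hQg => hrad Q hQ (fun g hg => hQg g (by simp [gs, hg]))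
      (fun t ht => hQg _ (by simpa [gs] using Or.inr ⟨t, ht, rfl⟩)))
    (f.length + k) (by simpa [gs] using hk) (expand M a) (by simpa [gs] using hrel)
  -- pass to a homogeneous ideal and drop `s`
  have hle : Ideal.ofList (gs.take (f.length + k)) ≤
      Ideal.span (G ∪ {t | t ∈ (θ.take k).map (expand M)}) := by
    rw [htake, Ideal.ofList_append, Ideal.span_union]
    refine sup_le_sup ?_ le_rfl
    exact Ideal.span_le.mpr hf
  have hφa := mem_of_mul_mem_of_homogeneous (T := G ∪ {t | t ∈ (θ.take k).map (expand M)}) (by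
    rintro t (ht | ht)
    · obtain ⟨T, rfl⟩ := hG t ht
      exact ⟨_, IsHomogeneous.prod T _ (fun _ => 1) fun i _ => isHomogeneous_X _ _⟩
    · obtain ⟨u, hu, rfl⟩ := List.mem_map.mp ht
      obtain ⟨d, hd⟩ := hhom u (List.mem_of_mem_take hu)
      exact ⟨_, hd.aeval (fun i => X i ^ M) fun i => (isHomogeneous_X K i).pow M⟩) hs (hle hsa)
  -- apply the retraction
  rw [Ideal.span_union] at hφa
  obtain ⟨u, hu, v, hv, huv⟩ := Submodule.mem_sup.mp hφa
  have hψv : contractExp K n M v ∈ Ideal.ofList (θ.take k) := by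
    suffices h : ∀ r, contractExp K n M (r * v) ∈ Ideal.ofList (θ.take k) by simpa using h 1
    clear huv
    induction hv using Submodule.span_induction with
    | zero => simp
    | add x y _ _ hx hy =>
      intro r
      rw [mul_add, map_add]
      exact Ideal.add_mem _ (hx r) (hy r)
    | smul r x _ hx =>
      intro r'
      rw [smul_eq_mul, ← mul_assoc]
      exact hx _
    | mem x hx =>
      intro r
      obtain ⟨u, hu, rfl⟩ := List.mem_map.mp hx
      rw [mul_comm, contractExp_expand_mul hM]
      exact Ideal.mul_mem_right _ _ (Ideal.subset_span hu)
  rw [← contractExp_expand hM a, ← huv, map_add]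
  exact Submodule.add_mem_sup (contractExp_mem hG hu) hψv

/-! ### Heights, dimension and a system of parameters -/

/-- An ideal contained in the ideal of the variables indexed by `Z` has height at most `Z.card`. -/
lemma idealHeight_le_card {K : Type} [Field K] {n : ℕ} {I : Ideal (MvPolynomial (Fin n) K)}
    (Z : Finset (Fin n)) (h : I ≤ Ideal.span (X '' (Z : Set (Fin n)))) :
    idealHeight I ≤ Z.card := by
  classical
  have hne : Ideal.span (X '' (Z : Set (Fin n))) ≠ (⊤ : Ideal (MvPolynomial (Fin n) K)) :=
    ne_top_of_le_ne_top isMaximal_idealOfVars.ne_top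
      (Ideal.span_mono (Set.image_subset_range X (Z : Set (Fin n))))
  rw [← Finset.coe_image] at hne h
  obtain ⟨P, hP⟩ := Ideal.nonempty_minimalPrimes hne
  have hPp : P.IsPrime := hP.1.1
  have h1 := Ideal.height_le_card_of_mem_minimalPrimes_span_finset hP
  have h2 : idealHeight I ≤ Order.height (⟨P, hPp⟩ : PrimeSpectrum (MvPolynomial (Fin n) K)) :=
    iInf₂_le (⟨P, hPp⟩ : PrimeSpectrum (MvPolynomial (Fin n) K)) (h.trans hP.1.2)
  rw [← PrimeSpectrum.height_eq_orderHeight] at h2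
  exact (h2.trans h1).trans (by exact_mod_cast Finset.card_image_le)

/-- `dim S ⧸ I + height I ≤ dim S`: a chain of primes above `I` has its `i`-th term of height at
least `height I + i`. -/
lemma ringKrullDim_quotient_le_sub {K : Type} [Field K] {n h : ℕ}
    {I : Ideal (MvPolynomial (Fin n) K)} (hI : (h : ℕ∞) ≤ idealHeight I) :
    ringKrullDim (MvPolynomial (Fin n) K ⧸ I) ≤ ((n - h : ℕ) : WithBot ℕ∞) := by
  rw [ringKrullDim_quotient, Order.krullDim]
  refine iSup_le fun p => ?_
  have key : ∀ i : ℕ, ∀ hi : i < p.length + 1,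
      ((h + i : ℕ) : ℕ∞) ≤ Order.height (p ⟨i, hi⟩).1 := by
    intro i
    induction i with
    | zero => intro hi; exact hI.trans (iInf₂_le _ (p ⟨0, hi⟩).2)
    | succ i ih =>
      intro hi
      have hlt : (p ⟨i, by omega⟩).1 < (p ⟨i + 1, hi⟩).1 := p.strictMono (by simp [Fin.lt_def])
      refine le_trans ?_ (Order.height_add_one_le hlt)
      rw [← add_assoc, Nat.cast_succ]
      gcongr
      exact ih (by omega)
  have h1 := key p.length (by omega)
  have h2 : ((Order.height (p ⟨p.length, by omega⟩).1 : ℕ∞) : WithBot ℕ∞) ≤ n := by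
    refine (Order.height_le_krullDim _).trans ?_
    have := MvPolynomial.ringKrullDim_of_isNoetherianRing (ι := Fin n) (R := K)
    rw [ringKrullDim_eq_zero_of_field, zero_add, Nat.card_fin] at this
    exact this.le
  have h3 : ((h + p.length : ℕ) : WithBot ℕ∞) ≤ n := le_trans (by exact_mod_cast h1) h2
  have h4 : h + p.length ≤ n := by exact_mod_cast h3
  have : p.length ≤ n - h := by omega
  exact_mod_cast this

lemma isHomogeneous_esymm {K : Type} [Field K] {n : ℕ} (k : ℕ) :
    (esymm (Fin n) K k).IsHomogeneous k := by
  rw [esymm]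
  refine IsHomogeneous.sum _ _ _ fun T hT => ?_
  have := IsHomogeneous.prod T (X : Fin n → MvPolynomial (Fin n) K) (fun _ => 1)
    fun i _ => isHomogeneous_X _ _
  rwa [Finset.sum_const, smul_eq_mul, mul_one, (Finset.mem_powersetCard.mp hT).2] at this

lemma esymm_succ_mem {K : Type} [Field K] {n : ℕ} (k : ℕ) :
    esymm (Fin n) K (k + 1) ∈ idealOfVars (Fin n) K := by
  rw [esymm]
  refine Ideal.sum_mem _ fun T hT => ?_
  obtain ⟨i, hi⟩ : T.Nonempty := by
    rw [← Finset.card_pos, (Finset.mem_powersetCard.mp hT).2]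
    omega
  exact Ideal.mem_of_dvd _ (Finset.dvd_prod_of_mem _ hi) (Ideal.subset_span ⟨i, rfl⟩)

/-- The elementary symmetric polynomials in the powers `x_i ^ M`, in degrees `1,…,n-h`, form
a system of parameters modulo a squarefree monomial ideal of height at least `h`: at a prime
containing `I`, at most `n - h` variables are nonzero, and the top elementary symmetric
polynomial of the nonzero variables is their product. -/
lemma idealOfVars_le_of_esymm_mem {K : Type} [Field K] {n h M : ℕ}
    {G : Set (MvPolynomial (Fin n) K)} (hG : ∀ m ∈ G, IsSqFreeMonomial m) (hM : M ≠ 0)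
    (hht : (h : ℕ∞) ≤ idealHeight (Ideal.span G))
    (Q : Ideal (MvPolynomial (Fin n) K)) [hQ : Q.IsPrime] (hGQ : Ideal.span G ≤ Q)
    (hQe : ∀ k < n - h, expand M (esymm (Fin n) K (k + 1)) ∈ Q) :
    idealOfVars (Fin n) K ≤ Q := by
  classical
  let Z : Finset (Fin n) := Finset.univ.filter fun i => (X i : MvPolynomial (Fin n) K) ∈ Q
  have hZ : ∀ i, i ∈ Z ↔ (X i : MvPolynomial (Fin n) K) ∈ Q := by simp [Z]
  have hle : Ideal.span G ≤ Ideal.span (X '' (Z : Set (Fin n))) := by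
    refine Ideal.span_le.mpr fun g hg => ?_
    obtain ⟨T, rfl⟩ := hG g hg
    obtain ⟨i, hiT, hi⟩ := (hQ.prod_mem_iff).mp (hGQ (Ideal.subset_span hg))
    exact Ideal.mem_of_dvd _ (Finset.dvd_prod_of_mem _ hiT)
      (Ideal.subset_span ⟨i, by simp [hZ, hi], rfl⟩)
  have hcard : h ≤ Z.card := by exact_mod_cast hht.trans (idealHeight_le_card Z hle)
  have hcc : Z.card + Zᶜ.card = n := by simp [Finset.card_add_card_compl]
  by_cases hF : Zᶜ.card = 0
  · refine Ideal.span_le.mpr ?_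
    rintro _ ⟨i, rfl⟩
    refine (hZ i).mp ?_
    by_contra hi
    rw [Finset.card_eq_zero] at hF
    have : i ∈ Zᶜ := Finset.mem_compl.mpr hi
    simp [hF] at this
  · exfalso
    -- modulo `Q`, the elementary symmetric polynomial of degree `Zᶜ.card` is a single product
    have h1 := hQe (Zᶜ.card - 1) (by omega)
    rw [Nat.sub_add_cancel (Nat.pos_of_ne_zero hF), esymm, map_sum] at h1
    rw [← Finset.add_sum_erase _ _ (Finset.mem_powersetCard.mpr ⟨Finset.subset_univ Zᶜ, rfl⟩)] at h1
    have h2 : ∑ T ∈ (Finset.powersetCard Zᶜ.card Finset.univ).erase Zᶜ,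
        expand M (∏ i ∈ T, X i : MvPolynomial (Fin n) K) ∈ Q := by
      refine Q.sum_mem fun T hT => ?_
      obtain ⟨hTne, hTc⟩ := Finset.mem_erase.mp hT
      obtain ⟨i, hiT, hiZ⟩ : ∃ i ∈ T, i ∉ Zᶜ := by
        by_contra! hcon
        exact hTne (Finset.eq_of_subset_of_card_le hcon (Finset.mem_powersetCard.mp hTc).2.ge)
      rw [map_prod, hQ.prod_mem_iff]
      refine ⟨i, hiT, ?_⟩
      rw [expand_X]
      exact Q.pow_mem_of_mem ((hZ i).mp (by simpa using hiZ)) _ (Nat.pos_of_ne_zero hM)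
    have h3 := (Q.add_mem_iff_left h2).mp h1
    rw [map_prod, hQ.prod_mem_iff] at h3
    obtain ⟨i, hi, hiQ⟩ := h3
    rw [expand_X] at hiQ
    exact Finset.mem_compl.mp hi ((hZ i).mpr (hQ.mem_of_pow_mem _ hiQ))

/-! ### Regular sequences on a quotient ring -/

open Pointwise in
/-- A regular sequence is no longer than the dimension of the support of the module. -/
lemma length_le_supportDim {R : Type} [CommRing R] [IsNoetherianRing R] (rs : List R) :
    ∀ (M : Type) [AddCommGroup M] [Module R M] [Module.Finite R M],
    RingTheory.Sequence.IsRegular M rs → (rs.length : WithBot ℕ∞) ≤ Module.supportDim R M := by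
  induction rs with
  | nil =>
    intro M _ _ _ h
    have : Nontrivial M := h.nontrivial
    have := Module.nonempty_support_of_nontrivial (R := R) (M := M) |>.to_subtype
    exact Order.krullDim_nonneg
  | cons x rs ih =>
    intro M _ _ _ h
    rw [RingTheory.Sequence.isRegular_cons_iff] at h
    calc ((x :: rs).length : WithBot ℕ∞) = (rs.length : WithBot ℕ∞) + 1 := by simp
      _ ≤ Module.supportDim R (QuotSMulTop x M) + 1 := by gcongr; exact ih _ h.2
      _ ≤ _ := Module.supportDim_quotSMulTop_succ_le_of_notMem_minimalPrimes fun p hp =>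
          h.1.notMem_of_mem_minimalPrimes hp

lemma mem_ofList_smul_top_iff {R : Type} [CommRing R] (I : Ideal R) (L : List R) (a : R) :
    (Submodule.Quotient.mk a : R ⧸ I) ∈ (Ideal.ofList L • ⊤ : Submodule R (R ⧸ I)) ↔
      a ∈ I ⊔ Ideal.ofList L := by
  have h1 : (Ideal.ofList L • ⊤ : Submodule R (R ⧸ I)) =
      Submodule.map (Submodule.mkQ I) (Ideal.ofList L) := by
    rw [← Submodule.range_mkQ I, ← Submodule.map_top, ← Submodule.map_smul'', smul_eq_mul,
      Ideal.mul_top]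
  rw [h1, ← Submodule.comap_map_mkQ]
  rfl

/-- Regularity of a sequence on `R ⧸ I`, in terms of ideal membership in `R`. -/
lemma isRegular_quotient {R : Type} [CommRing R] (I : Ideal R) (L : List R)
    (hne : I ⊔ Ideal.ofList L ≠ ⊤)
    (h : ∀ (k : ℕ) (hk : k < L.length) (a : R), L[k] * a ∈ I ⊔ Ideal.ofList (L.take k) →
      a ∈ I ⊔ Ideal.ofList (L.take k)) :
    RingTheory.Sequence.IsRegular (R ⧸ I) L := by
  refine ⟨⟨fun k hk => ?_⟩, fun htop => ?_⟩
  · rw [isSMulRegular_quotient_iff_mem_of_smul_mem]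
    intro x
    obtain ⟨a, rfl⟩ := Submodule.Quotient.mk_surjective I x
    rw [← Submodule.Quotient.mk_smul, mem_ofList_smul_top_iff, mem_ofList_smul_top_iff]
    exact h k hk a
  · have : (Submodule.Quotient.mk 1 : R ⧸ I) ∈ (Ideal.ofList L • ⊤ : Submodule R (R ⧸ I)) := by
      rw [← htop]; trivial
    rw [mem_ofList_smul_top_iff] at this
    exact hne ((Ideal.eq_top_iff_one _).mpr this)

/-! ### Cohen–Macaulayness -/

/-- If a squarefree monomial ideal `I ⊆ S = K[x_1,…,x_n]` is a
set-theoretic complete intersection (`ara(I) = height(I)`), then `S/I` is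
Cohen–Macaulay (`depth(S/I) = dim(S/I)`). -/
theorem sqfree_stci_CohenMacaulay (K : Type) [Field K] (n : ℕ)
    (I : Ideal (MvPolynomial (Fin n) K))
    (hI : ∃ G : Set (MvPolynomial (Fin n) K),
      (∀ m ∈ G, IsSqFreeMonomial m) ∧ I = Ideal.span G)
    (hstci : (ara I : ℕ∞) = idealHeight I) :
    (smDepth K n I : WithBot (WithTop ℕ)) =
      ringKrullDim (MvPolynomial (Fin n) K ⧸ I) := by
  obtain ⟨G, hG, rfl⟩ := hI
  let S := MvPolynomial (Fin n) K
  let I : Ideal S := Ideal.span G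
  have hht : (ara I : ℕ∞) ≤ idealHeight I := hstci.le
  -- the unit ideal has infinite height (an empty infimum), while `ara I` is finite
  have hI1 : I ≠ ⊤ := by
    intro htop
    have : idealHeight I = ⊤ := by
      rw [idealHeight, eq_top_iff]
      exact le_iInf₂ fun p hp => absurd (top_le_iff.mp (htop ▸ hp)) p.isPrime.ne_top
    exact ENat.natCast_ne_top _ (hstci.trans this)
  have hIm : I ≤ idealOfVars (Fin n) K := by
    refine Ideal.span_le.mpr fun g hg => ?_
    obtain ⟨T, rfl⟩ := hG g hg
    rcases T.eq_empty_or_nonempty with rfl | ⟨i, hi⟩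
    · exact absurd ((Ideal.eq_top_iff_one _).mpr (Ideal.subset_span (by simpa using hg))) hI1
    · exact Ideal.mem_of_dvd _ (Finset.dvd_prod_of_mem _ hi) (Ideal.subset_span ⟨i, rfl⟩)
  have hn : ara I ≤ n := by
    have := hht.trans (idealHeight_le_card Finset.univ (by simpa using hIm))
    simpa using this
  obtain ⟨f, hfI, hfrad⟩ : ara I ∈ {r : ℕ | ∃ f : Fin r → S, (∀ t, f t ∈ I) ∧
      (Ideal.span (Set.range f)).radical = I.radical} := by
    refine Nat.sInf_mem ?_
    obtain ⟨r, f, hf⟩ := Submodule.fg_iff_exists_fin_generating_family.mp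
      (IsNoetherian.noetherian I)
    exact ⟨r, f, fun t => hf ▸ Submodule.subset_span ⟨t, rfl⟩, congrArg Ideal.radical hf⟩
  obtain ⟨M, hMpow⟩ := Ideal.exists_radical_pow_le_of_fg (Ideal.span (Set.range f))
    (IsNoetherian.noetherian _)
  let fs : List S := List.ofFn f
  have hfs : Ideal.ofList fs = Ideal.span (Set.range f) := by
    rw [Ideal.ofList]
    congr 1
    ext x
    simp [fs, List.mem_ofFn]
  -- the exponent `M + 1` rather than `M` ensures positivity
  have hM : M + 1 ≠ 0 := by omega
  have hφ : ∀ p ∈ I, expand (M + 1) p ∈ Ideal.ofList fs := by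
    rw [hfs]
    suffices I ≤ (Ideal.span (Set.range f)).comap (expand (M + 1) (R := K) (σ := Fin n)) from
      fun p hp => this hp
    refine Ideal.span_le.mpr fun g hg => ?_
    have hgI : g ∈ (Ideal.span (Set.range f)).radical := by
      rw [hfrad]
      exact Ideal.le_radical (Ideal.subset_span hg)
    have hgM := Ideal.mul_mem_left _ g (hMpow (Ideal.pow_mem_pow hgI M))
    obtain ⟨T, rfl⟩ := hG g hg
    rw [SetLike.mem_coe, Ideal.mem_comap, map_prod]
    rw [Finset.prod_congr rfl fun i _ => expand_X (M + 1) i]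
    rwa [Finset.prod_pow, pow_succ']
  let θ : List S := (List.range (n - ara I)).map fun k => esymm (Fin n) K (k + 1)
  have hθm : ∀ t ∈ θ, t ∈ idealOfVars (Fin n) K := by
    intro t ht
    obtain ⟨k, -, rfl⟩ := List.mem_map.mp ht
    exact esymm_succ_mem k
  have hrad : ∀ Q : Ideal S, Q.IsPrime → (∀ g ∈ fs, g ∈ Q) →
      (∀ t ∈ θ, expand (M + 1) t ∈ Q) → idealOfVars (Fin n) K ≤ Q := by
    intro Q hQ hfQ hθQ
    refine idealOfVars_le_of_esymm_mem hG hM hht Q ?_ fun k hk => ?_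
    · have h1 : Ideal.span (Set.range f) ≤ Q := by rw [← hfs]; exact Ideal.span_le.mpr hfQ
      have h2 := (hQ.radical_le_iff).mpr h1
      rw [hfrad] at h2
      exact Ideal.le_radical.trans h2
    · exact hθQ _ (List.mem_map.mpr ⟨k, List.mem_range.mpr hk, rfl⟩)
  have hreg : RingTheory.Sequence.IsRegular (S ⧸ I) θ := by
    refine isRegular_quotient I θ ?_ fun k hk a ha => ?_
    · exact ne_top_of_le_ne_top isMaximal_idealOfVars.ne_top
        (sup_le hIm (Ideal.span_le.mpr hθm))
    · refine mem_of_mul_mem_sup hM hG hIm fs θ ?_ hφ ?_ hθm ?_ hrad k hk a ha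
      · intro g hg
        obtain ⟨t, rfl⟩ := List.mem_ofFn.mp hg
        exact hfI t
      · simp [fs, θ]
        omega
      · intro t ht
        obtain ⟨k, -, rfl⟩ := List.mem_map.mp ht
        exact ⟨_, isHomogeneous_esymm _⟩
  have hdim : ringKrullDim (S ⧸ I) ≤ ((n - ara I : ℕ) : WithBot ℕ∞) :=
    ringKrullDim_quotient_le_sub hht
  have hub : ∀ rs : List S, RingTheory.Sequence.IsRegular (S ⧸ I) rs →
      (rs.length : WithBot ℕ∞) ≤ ringKrullDim (S ⧸ I) := by
    intro rs hrs
    rw [← Module.supportDim_quotient_eq_ringKrullDim]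
    exact length_le_supportDim rs _ hrs
  have hdepth : smDepth K n I = n - ara I := by
    refine IsGreatest.csSup_eq ⟨⟨θ, by simp [θ], hθm, hreg⟩, ?_⟩
    rintro r ⟨rs, rfl, -, hrs⟩
    exact_mod_cast (hub rs hrs).trans hdim
  refine le_antisymm ?_ ?_
  · have := hub θ hreg
    rw [show θ.length = smDepth K n I by simp [θ, hdepth]] at this
    exact this
  · change ringKrullDim (S ⧸ I) ≤ ((smDepth K n I : ℕ) : WithBot ℕ∞)
    rw [hdepth]
    exact hdim
end
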